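/- arXiv:2010.09972 — 2 statements merged into one kernel-verified Lean document; each statement's English description precedes it below -/
import Mathlib

section
/- Let s > 3/2. There is a constant C = C(s) > 0 such that for all ε ∈ (0,1) and all u ∈ H^s(𝕋): |(J_ε(J_ε u · ∂_x J_ε u), u)_{H^s}| ≤ C ‖∂_x u‖_{L^∞} ‖u‖²_{H^s}. -/
noncomputable section
open scoped BigOperators

/-- A (complex-valued) function on the torus `𝕋 = ℝ/2πℤ`, represented by its sequence of
Fourier coefficients `f̂ : ℤ → ℂ`. -/
abbrev FC := ℤ → ℂ

namespace FC

/-- The Sobolev weight `(1+k²)^s`. -/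
def wt (s : ℝ) (k : ℤ) : ℝ := (1 + (k : ℝ) ^ 2) ^ s

/-- `c` represents a function belonging to the Sobolev space `H^s(𝕋)`. -/
def memHs (s : ℝ) (c : FC) : Prop := Summable fun k : ℤ => wt s k * ‖c k‖ ^ 2

/-- The `H^s(𝕋)` norm: `‖f‖²_{H^s} = Σ_{k∈ℤ} (1+k²)^s |f̂(k)|²`. -/
def hsNorm (s : ℝ) (c : FC) : ℝ := Real.sqrt (∑' k : ℤ, wt s k * ‖c k‖ ^ 2)

/-- The `H^s(𝕋)` inner product `(f,g)_{H^s} = Σ_{k∈ℤ} (1+k²)^s f̂(k) conj(ĝ(k))`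
(its real part; the sum is real for real-valued functions). -/
def hsInner (s : ℝ) (c d : FC) : ℝ :=
  (∑' k : ℤ, ((wt s k : ℂ) * (c k * (starRingEnd ℂ) (d k)))).re

/-- `c` represents a real-valued function (conjugate-symmetric coefficients). -/
def isReal (c : FC) : Prop := ∀ k : ℤ, c (-k) = (starRingEnd ℂ) (c k)

/-- The derivative `∂ₓ`, i.e. the Fourier multiplier `ik`. -/
def D1 (c : FC) : FC := fun k => Complex.I * (k : ℂ) * c k

/-- The pointwise product of functions, i.e. convolution of Fourier coefficients. -/
def mul (c d : FC) : FC := fun k => ∑' j : ℤ, c j * d (k - j)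

/-- The represented function, evaluated at `x ∈ ℝ`. -/
def eval (c : FC) (x : ℝ) : ℂ := ∑' k : ℤ, c k * Complex.exp (Complex.I * (k : ℂ) * (x : ℂ))

/-- The `L^∞` norm (supremum of the represented periodic function over ℝ). -/
def linfty (c : FC) : ℝ := ⨆ x : ℝ, ‖eval c x‖

/-- The `W^{1,∞}` norm. -/
def w1infty (c : FC) : ℝ := linfty c + linfty (D1 c)

/-- A Fourier multiplier operator with real symbol `m`. -/
def mult (m : ℤ → ℝ) (c : FC) : FC := fun k => (m k : ℂ) * c k

/-- The operator `(1-∂ₓ²)⁻¹`, i.e. the Fourier multiplier `(1+k²)⁻¹`. -/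
def helmInv : FC → FC := mult fun k => (1 + (k : ℝ) ^ 2)⁻¹

/-- The operator `1-∂ₓ²`, i.e. the Fourier multiplier `1+k²`. -/
def helm : FC → FC := mult fun k => 1 + (k : ℝ) ^ 2

/-- The operator `T̃_ε = (1-ε²∂ₓ²)⁻¹`, i.e. the Fourier multiplier `(1+ε²k²)⁻¹`. -/
def T (ε : ℝ) : FC → FC := mult fun k => (1 + ε ^ 2 * (k : ℝ) ^ 2)⁻¹

/-- The periodic Hilbert transform, i.e. the Fourier multiplier `-i·sgn(k)`. -/
def hilbert (c : FC) : FC := fun k => -Complex.I * (Int.sign k : ℂ) * c k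

/-- The Friedrichs-type mollifier `J_ε`, the Fourier multiplier `ĵ(εk)`. -/
def Jmol (jhat : ℝ → ℝ) (ε : ℝ) : FC → FC := mult fun k => jhat (ε * (k : ℝ))

/-- The generalized Lie derivative `𝓛_ξ f = ξ ∂ₓ f + (∂ₓ ξ) f`. -/
def lie (ξ c : FC) : FC := mul ξ (D1 c) + mul (D1 ξ) c

/-- `𝓛²_ξ f = 𝓛_ξ (𝓛_ξ f)`. -/
def lie2 (ξ c : FC) : FC := lie ξ (lie ξ c)

/-- The coefficientwise sum `Σ_{k∈ℕ} F k` of a sequence of functions. -/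
def tsumFC (F : ℕ → FC) : FC := fun m => ∑' k : ℕ, F k m

/-- The norm on the product space `H^{s₁}×H^{s₂}`. -/
def pairNorm (s₁ s₂ : ℝ) (c d : FC) : ℝ := Real.sqrt (hsNorm s₁ c ^ 2 + hsNorm s₂ d ^ 2)

/-- The inner product on the product space `H^{s₁}×H^{s₂}`:
`((c₁,d₁),(c₂,d₂)) ↦ (c₁,c₂)_{H^{s₁}} + (d₁,d₂)_{H^{s₂}}`. -/
def pairInner (s₁ s₂ : ℝ) (c₁ d₁ c₂ d₂ : FC) : ℝ := hsInner s₁ c₁ c₂ + hsInner s₂ d₁ d₂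

end FC

section Helpers
open MeasureTheory

lemma SA_interchange {α ι κ : Type*} [Countable ι] [Countable κ] [MeasurableSpace α] {μ : Measure α}
    (F : ι → α → ℝ) (G : κ → α → ℝ)
    (hF : ∀ i, Integrable (F i) μ) (hFs : Summable fun i => ∫ x, ‖F i x‖ ∂μ)
    (hG : ∀ i, Integrable (G i) μ) (hG0 : ∀ i x, 0 ≤ G i x)
    (hGs : Summable fun i => ∫ x, G i x ∂μ)
    (hGp : ∀ᵐ x ∂μ, Summable fun i => G i x)
    (hle : ∀ᵐ x ∂μ, |∑' i, F i x| ≤ ∑' i, G i x) :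
    |∑' i, ∫ x, F i x ∂μ| ≤ ∑' i, ∫ x, G i x ∂μ := by
  rw [(hasSum_integral_of_summable_integral_norm hF hFs).tsum_eq]
  have h0 : ∀ i, 0 ≤ ∫ x, G i x ∂μ := fun i => integral_nonneg (hG0 i)
  have key : ‖∫ x, (∑' i, F i x) ∂μ‖ₑ ≤ ENNReal.ofReal (∑' i, ∫ x, G i x ∂μ) := by
    calc ‖∫ x, (∑' i, F i x) ∂μ‖ₑ ≤ ∫⁻ x, ‖∑' i, F i x‖ₑ ∂μ := enorm_integral_le_lintegral_enorm _
      _ ≤ ∫⁻ x, ∑' i, ENNReal.ofReal (G i x) ∂μ := by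
        apply lintegral_mono_ae
        filter_upwards [hGp, hle] with x h1 h2
        rw [← ENNReal.ofReal_tsum_of_nonneg (fun i => hG0 i x) h1, Real.enorm_eq_ofReal_abs]
        exact ENNReal.ofReal_le_ofReal h2
      _ = ∑' i, ∫⁻ x, ENNReal.ofReal (G i x) ∂μ := by
        apply lintegral_tsum
        intro i
        exact (hG i).1.aemeasurable.ennreal_ofReal
      _ = _ := by
        rw [ENNReal.ofReal_tsum_of_nonneg h0 hGs]
        congr 1; ext i
        rw [ofReal_integral_eq_lintegral_ofReal (hG i) (Filter.Eventually.of_forall (hG0 i))]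
  rw [Real.enorm_eq_ofReal_abs] at key
  exact (ENNReal.ofReal_le_ofReal_iff (tsum_nonneg h0)).1 key

/-- the character -/
def ch (k : ℤ) (x : ℝ) : ℂ := Complex.exp (Complex.I * (k : ℂ) * (x : ℂ))

lemma ch_norm (k : ℤ) (x : ℝ) : ‖ch k x‖ = 1 := by
  unfold ch
  have : Complex.I * (k : ℂ) * (x : ℂ) = ((k * x : ℝ) : ℂ) * Complex.I := by push_cast; ring
  rw [this, Complex.norm_exp_ofReal_mul_I]

lemma ch_add (a b : ℤ) (x : ℝ) : ch (a + b) x = ch a x * ch b x := by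
  unfold ch
  rw [← Complex.exp_add]; congr 1; push_cast; ring

lemma ch_add' (a : ℤ) (x y : ℝ) : ch a (x + y) = ch a x * ch a y := by
  unfold ch
  rw [← Complex.exp_add]; congr 1; push_cast; ring

lemma ch_conj (a : ℤ) (x : ℝ) : (starRingEnd ℂ) (ch a x) = ch (-a) x := by
  unfold ch
  rw [← Complex.exp_conj]; congr 1; simp

lemma ch_zero (x : ℝ) : ch 0 x = 1 := by simp [ch]

lemma ch_cont (a : ℤ) : Continuous (ch a) := by
  unfold ch; fun_prop

lemma eval_eq (c : FC) (x : ℝ) : FC.eval c x = ∑' k : ℤ, c k * ch k x := rfl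

lemma ch_int (k : ℤ) : ∫ x in (0:ℝ)..(2 * Real.pi), ch k x = if k = 0 then (2 * Real.pi : ℂ) else 0 := by
  split_ifs with h
  · subst h; simp [ch_zero]
  · unfold ch
    rw [integral_exp_mul_complex (by simp [h])]
    have : Complex.I * (k:ℂ) * ((2 * Real.pi : ℝ) : ℂ) = k * (2 * Real.pi * Complex.I) := by
      push_cast; ring
    rw [this, Complex.exp_int_mul_two_pi_mul_I]; simp

lemma eval_summable {c : FC} (hc : Summable fun k => ‖c k‖) (x : ℝ) :
    Summable fun k : ℤ => c k * ch k x :=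
  Summable.of_norm (by simpa [ch_norm] using hc)

lemma eval_summable_norm {c : FC} (hc : Summable fun k => ‖c k‖) (x : ℝ) :
    Summable fun k : ℤ => ‖c k * ch k x‖ := by simpa [ch_norm] using hc

lemma eval_cont {c : FC} (hc : Summable fun k => ‖c k‖) : Continuous (FC.eval c) := by
  have : FC.eval c = fun x => ∑' k : ℤ, c k * ch k x := rfl
  rw [this]
  exact continuous_tsum (fun k => continuous_const.mul (ch_cont k)) hc (fun k x => by simp [ch_norm])

lemma eval_le {c : FC} (hc : Summable fun k => ‖c k‖) (x : ℝ) : ‖FC.eval c x‖ ≤ ∑' k, ‖c k‖ := by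
  rw [eval_eq]
  refine (norm_tsum_le_tsum_norm (eval_summable_norm hc x)).trans (le_of_eq ?_)
  simp [ch_norm]

lemma gen_int {c : FC} (hc : Summable fun k => ‖c k‖) {g : ℝ → ℂ} (hg : Continuous g) {B : ℝ}
    (hB : ∀ x, ‖g x‖ ≤ B) :
    ∫ x in (0:ℝ)..(2 * Real.pi), FC.eval c x * g x
      = ∑' k, c k * ∫ x in (0:ℝ)..(2 * Real.pi), ch k x * g x := by
  have h1 : ∀ x, FC.eval c x * g x = ∑' k, c k * (ch k x * g x) := by
    intro x
    rw [eval_eq c, ← tsum_mul_right]; congr 1; ext k; ring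
  simp_rw [h1]
  have hB0 : 0 ≤ B := (norm_nonneg _).trans (hB 0)
  have h3 := intervalIntegral.hasSum_intervalIntegral_of_summable_norm (a := 0) (b := 2 * Real.pi)
      (f := fun k => (⟨fun x => c k * (ch k x * g x),
        continuous_const.mul ((ch_cont _).mul hg)⟩ : C(ℝ, ℂ))) (by
        refine Summable.of_nonneg_of_le (fun _ => norm_nonneg _) (fun l => ?_) (hc.mul_right B)
        rw [ContinuousMap.norm_le _ (by positivity)]
        intro x
        simp only [ContinuousMap.coe_mk, ContinuousMap.restrict_apply, norm_mul, ch_norm, one_mul]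
        gcongr
        exact hB _)
  simp only [ContinuousMap.coe_mk] at h3
  rw [← h3.tsum_eq]
  simp_rw [intervalIntegral.integral_const_mul]

lemma coeff_int {d : FC} (hd : Summable fun k => ‖d k‖) (k : ℤ) :
    ∫ x in (0:ℝ)..(2 * Real.pi), FC.eval d x * ch (-k) x = 2 * Real.pi * d k := by
  rw [gen_int hd (ch_cont _) (fun x => (ch_norm _ x).le)]
  simp_rw [← ch_add, ch_int]
  rw [tsum_eq_single k]
  · simp; ring
  · intro l hl
    have : l + -k ≠ 0 := fun h => hl (by omega)
    simp [this]

lemma pair_int {c d : FC} (hc : Summable fun k => ‖c k‖) (hd : Summable fun k => ‖d k‖) :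
    ∫ x in (0:ℝ)..(2 * Real.pi), FC.eval c x * (starRingEnd ℂ) (FC.eval d x)
      = 2 * Real.pi * ∑' k, c k * (starRingEnd ℂ) (d k) := by
  have hI : ∀ k : ℤ, ∫ x in (0:ℝ)..(2 * Real.pi), ch k x * (starRingEnd ℂ) (FC.eval d x)
      = 2 * Real.pi * (starRingEnd ℂ) (d k) := by
    intro k
    have := congrArg (starRingEnd ℂ) (coeff_int hd k)
    rw [intervalIntegral.integral_of_le (by positivity)] at this ⊢
    rw [← integral_conj] at this
    simp only [map_mul, ch_conj, neg_neg] at this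
    rw [show (starRingEnd ℂ) 2 = 2 from Complex.conj_ofNat 2, Complex.conj_ofReal] at this
    rw [← this]
    congr 1; ext x; ring
  rw [gen_int hc (g := fun x => (starRingEnd ℂ) (FC.eval d x)) (Complex.continuous_conj.comp (eval_cont hd)) (B := ∑' k, ‖d k‖)
    (fun x => by simpa using eval_le hd x)]
  simp_rw [hI]
  rw [← tsum_mul_left]
  congr 1; ext k; ring

lemma parseval {c : FC} (hc : Summable fun k => ‖c k‖) :
    ∫ x in (0:ℝ)..(2 * Real.pi), ‖FC.eval c x‖ ^ 2 = 2 * Real.pi * ∑' k, ‖c k‖ ^ 2 := by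
  have h := pair_int hc hc
  simp_rw [Complex.mul_conj'] at h
  have h2 : ∀ x, ((‖FC.eval c x‖ : ℂ)) ^ 2 = ((‖FC.eval c x‖ ^ 2 : ℝ) : ℂ) := by intro x; push_cast; rfl
  have h3 : ∀ x, ((‖c x‖ : ℂ)) ^ 2 = ((‖c x‖ ^ 2 : ℝ) : ℂ) := by intro x; push_cast; rfl
  simp_rw [h2, h3] at h
  rw [intervalIntegral.integral_ofReal, ← Complex.ofReal_tsum] at h
  exact_mod_cast h

lemma triple_prod_summable {F G H : FC} (hF : Summable fun k => ‖F k‖) (hG : Summable fun k => ‖G k‖)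
    (hH : Summable fun k => ‖H k‖) :
    Summable fun p : ℤ × ℤ => ‖F p.1 * G p.2 * (starRingEnd ℂ) (H (p.1 + p.2))‖ := by
  have h1 : Summable fun p : ℤ × ℤ => ‖F p.1‖ * ‖G p.2‖ :=
    hF.mul_of_nonneg hG (fun _ => norm_nonneg _) (fun _ => norm_nonneg _)
  refine Summable.of_nonneg_of_le (fun _ => norm_nonneg _) (fun p => ?_) (h1.mul_right (∑' k, ‖H k‖))
  simp only [norm_mul, RCLike.norm_conj]
  gcongr
  exact hH.le_tsum _ (fun _ _ => norm_nonneg _)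

lemma triple_int {F G H : FC} (hF : Summable fun k => ‖F k‖) (hG : Summable fun k => ‖G k‖)
    (hH : Summable fun k => ‖H k‖) :
    ∫ x in (0:ℝ)..(2 * Real.pi), FC.eval F x * (FC.eval G x * (starRingEnd ℂ) (FC.eval H x))
      = 2 * Real.pi * ∑' p : ℤ × ℤ, F p.1 * G p.2 * (starRingEnd ℂ) (H (p.1 + p.2)) := by
  rw [gen_int hF (g := fun x => FC.eval G x * (starRingEnd ℂ) (FC.eval H x)) ((eval_cont hG).mul (Complex.continuous_conj.comp (eval_cont hH)))
    (B := (∑' k, ‖G k‖) * ∑' k, ‖H k‖) (fun x => by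
      simp only [norm_mul, RCLike.norm_conj]
      exact mul_le_mul (eval_le hG x) (eval_le hH x) (norm_nonneg _)
        (tsum_nonneg fun _ => norm_nonneg _))]
  have hI : ∀ a : ℤ, ∫ x in (0:ℝ)..(2 * Real.pi), ch a x * (FC.eval G x * (starRingEnd ℂ) (FC.eval H x))
      = 2 * Real.pi * ∑' b, G b * (starRingEnd ℂ) (H (a + b)) := by
    intro a
    have hs : Summable fun k => ‖(fun k => H (a + k)) k‖ :=
      (Equiv.addLeft a).summable_iff.2 hH
    rw [← pair_int hG hs]
    congr 1; ext x
    have : FC.eval H x = ch a x * FC.eval (fun k => H (a + k)) x := by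
      rw [eval_eq, eval_eq, ← tsum_mul_left, ← (Equiv.addLeft a).tsum_eq]
      congr 1; ext k
      simp only [Equiv.coe_addLeft, ch_add]; ring
    rw [this, map_mul, ch_conj]
    have h1 : ch a x * ch (-a) x = 1 := by rw [← ch_add]; simp [ch_zero]
    calc _ = (ch a x * ch (-a) x) * (FC.eval G x * (starRingEnd ℂ) (FC.eval (fun k => H (a + k)) x)) := by ring
      _ = _ := by rw [h1, one_mul]
  simp_rw [hI]
  rw [(triple_prod_summable hF hG hH).of_norm.tsum_prod, ← tsum_mul_left]
  congr 1; ext a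
  rw [← tsum_mul_left, ← tsum_mul_left, ← tsum_mul_left]
  congr 1; ext b; ring

lemma triple_bound {F G H : FC} (hF : Summable fun k => ‖F k‖) (hG : Summable fun k => ‖G k‖)
    (hH : Summable fun k => ‖H k‖) {S : ℝ} (hS : ∀ x, ‖FC.eval F x‖ ≤ S) :
    ‖∑' p : ℤ × ℤ, F p.1 * G p.2 * (starRingEnd ℂ) (H (p.1 + p.2))‖
      ≤ S / 2 * (∑' k, ‖G k‖ ^ 2 + ∑' k, ‖H k‖ ^ 2) := by
  have h := triple_int hF hG hH
  have hS0 : 0 ≤ S := (norm_nonneg _).trans (hS 0)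
  have h1 : ‖∫ x in (0:ℝ)..(2 * Real.pi), FC.eval F x * (FC.eval G x * (starRingEnd ℂ) (FC.eval H x))‖
      ≤ ∫ x in (0:ℝ)..(2 * Real.pi), S / 2 * (‖FC.eval G x‖ ^ 2 + ‖FC.eval H x‖ ^ 2) := by
    apply intervalIntegral.norm_integral_le_of_norm_le (by positivity)
    · refine Filter.Eventually.of_forall (fun x _ => ?_)
      simp only [norm_mul, RCLike.norm_conj]
      calc _ ≤ S * (‖FC.eval G x‖ * ‖FC.eval H x‖) := by gcongr; exact hS x
        _ ≤ S * ((‖FC.eval G x‖ ^ 2 + ‖FC.eval H x‖ ^ 2) / 2) := by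
          gcongr
          nlinarith [sq_nonneg (‖FC.eval G x‖ - ‖FC.eval H x‖)]
        _ = _ := by ring
    · apply Continuous.intervalIntegrable
      have := eval_cont hG
      have := eval_cont hH
      fun_prop
  rw [intervalIntegral.integral_const_mul, intervalIntegral.integral_add, parseval hG, parseval hH, h] at h1
  · rw [norm_mul] at h1
    have : ‖(2 * Real.pi : ℂ)‖ = 2 * Real.pi := by
      simp [abs_of_pos Real.pi_pos]
    rw [this] at h1
    have hp : 0 < 2 * Real.pi := by positivity
    refine le_of_mul_le_mul_left ?_ hp
    linarith
  · exact ((eval_cont hG).norm.pow 2).intervalIntegrable _ _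
  · exact ((eval_cont hH).norm.pow 2).intervalIntegrable _ _

/-- rapidly decaying coefficients -/
def RD (c : FC) : Prop := ∀ n : ℕ, Summable fun k : ℤ => (1 + |(k : ℝ)|) ^ n * ‖c k‖

lemma RD.of_le {c d : FC} (hc : RD c) (C : ℝ) (m : ℕ)
    (h : ∀ k : ℤ, ‖d k‖ ≤ C * (1 + |(k : ℝ)|) ^ m * ‖c k‖) : RD d := by
  intro n
  refine Summable.of_nonneg_of_le (fun _ => by positivity) (fun k => ?_) ((hc (n + m)).mul_left C)
  calc (1 + |(k : ℝ)|) ^ n * ‖d k‖ ≤ (1 + |(k : ℝ)|) ^ n * (C * (1 + |(k : ℝ)|) ^ m * ‖c k‖) := by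
        gcongr; exact h k
    _ = _ := by ring

lemma RD.summ {c : FC} (hc : RD c) : Summable fun k => ‖c k‖ := by simpa using hc 0

lemma RD.sq {c : FC} (hc : RD c) : Summable fun k => ‖c k‖ ^ 2 := by
  refine Summable.of_nonneg_of_le (fun _ => by positivity) (fun k => ?_)
    (hc.summ.mul_left (∑' k, ‖c k‖))
  rw [pow_two]
  gcongr
  exact hc.summ.le_tsum _ (fun _ _ => norm_nonneg _)

lemma RD.D1 {c : FC} (hc : RD c) : RD (FC.D1 c) := by
  refine hc.of_le 1 1 (fun k => ?_)
  simp only [FC.D1, norm_mul, Complex.norm_I, Complex.norm_intCast, one_mul, pow_one]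
  gcongr
  linarith

/-- difference multiplier -/
def th (h : ℝ) (k : ℤ) : ℂ := ch k h - 1

lemma th_norm_le (h : ℝ) (k : ℤ) : ‖th h k‖ ≤ 2 := by
  unfold th
  refine (norm_sub_le _ _).trans ?_
  rw [ch_norm]; norm_num

lemma th_add (h : ℝ) (a b : ℤ) : th h (a + b) = ch b h * th h a + th h b := by
  unfold th; rw [ch_add]; ring

lemma RD.mulbdd {c : FC} (hc : RD c) {m : ℤ → ℂ} {C : ℝ} (hm : ∀ k, ‖m k‖ ≤ C) :
    RD fun k => m k * c k := by
  refine hc.of_le C 0 (fun k => ?_)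
  rw [norm_mul, pow_zero, mul_one]; gcongr; exact hm k

lemma RD.th {c : FC} (hc : RD c) (h : ℝ) (n : ℕ) : RD fun k => th h k ^ n * c k :=
  hc.mulbdd (C := 2 ^ n) (fun k => by
    rw [norm_pow]; exact pow_le_pow_left₀ (norm_nonneg _) (th_norm_le h k) n)

lemma RD.ch {c : FC} (hc : RD c) (h : ℝ) (n : ℕ) : RD fun k => ch k h ^ n * c k :=
  hc.mulbdd (C := 1) (fun k => by
    rw [norm_pow, ch_norm, one_pow])

lemma eval_ch (c : FC) (h x : ℝ) : FC.eval (fun k => ch k h * c k) x = FC.eval c (x + h) := by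
  rw [eval_eq, eval_eq]; congr 1; ext k; rw [ch_add']; ring

lemma eval_th {c : FC} (hc : RD c) (h x : ℝ) :
    FC.eval (fun k => th h k * c k) x = FC.eval c (x + h) - FC.eval c x := by
  rw [eval_eq, eval_eq, eval_eq, ← (eval_summable hc.summ _).tsum_sub (eval_summable hc.summ _)]
  congr 1; ext k; rw [ch_add']; unfold th; ring

lemma sup_ch {c : FC} {S : ℝ} (hS : ∀ x, ‖FC.eval c x‖ ≤ S) (h : ℝ) (n : ℕ) (x : ℝ) :
    ‖FC.eval (fun k => ch k h ^ n * c k) x‖ ≤ S := by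
  induction n generalizing x with
  | zero => simpa using hS x
  | succ n ih =>
    have : (fun k => ch k h ^ (n + 1) * c k) = fun k => ch k h * (fun k => ch k h ^ n * c k) k := by
      ext k; ring
    rw [this, eval_ch]; exact ih _

lemma sup_th {c : FC} (hc : RD c) {S : ℝ} (hS : ∀ x, ‖FC.eval c x‖ ≤ S) (h : ℝ) (n : ℕ) (x : ℝ) :
    ‖FC.eval (fun k => th h k ^ n * c k) x‖ ≤ 2 ^ n * S := by
  induction n generalizing x with
  | zero => simpa using hS x
  | succ n ih =>
    have : (fun k => th h k ^ (n + 1) * c k) = fun k => th h k * (fun k => th h k ^ n * c k) k := by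
      ext k; ring
    rw [this, eval_th (hc.th h n)]
    refine (norm_sub_le _ _).trans ?_
    have := ih (x + h)
    have := ih x
    rw [pow_succ]; linarith

lemma eval_deriv {v : FC} (hv : RD v) (x : ℝ) :
    HasDerivAt (FC.eval v) (FC.eval (FC.D1 v) x) x := by
  have h1 : ∀ (k : ℤ) (y : ℝ), HasDerivAt (fun y => v k * ch k y) (FC.D1 v k * ch k y) y := by
    intro k y
    have h2 : HasDerivAt (fun y : ℝ => Complex.I * (k : ℂ) * (y : ℂ)) (Complex.I * (k : ℂ)) y := by
      simpa using (Complex.ofRealCLM.hasDerivAt (x := y)).const_mul (Complex.I * (k : ℂ))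
    have h3 := (h2.cexp).const_mul (v k)
    refine h3.congr_deriv ?_
    simp only [FC.D1, ch]; ring
  exact hasDerivAt_tsum (u := fun k => ‖FC.D1 v k‖) hv.D1.summ h1 (fun k y => by simp [ch_norm])
    (y₀ := 0) (eval_summable hv.summ 0) x

lemma sup_th_one {v : FC} (hv : RD v) {S : ℝ} (hS : ∀ x, ‖FC.eval (FC.D1 v) x‖ ≤ S) (h : ℝ) (hh : 0 < h)
    (x : ℝ) : ‖FC.eval (fun k => th h k * v k) x‖ ≤ S * h := by
  rw [eval_th hv]
  have := Convex.norm_image_sub_le_of_norm_hasDerivWithin_le (f := FC.eval v) (s := Set.univ)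
    (x := x) (y := x + h)
    (fun y _ => (eval_deriv hv y).hasDerivWithinAt) (fun y _ => hS y) convex_univ trivial trivial
  simpa [abs_of_pos hh] using this

/-- antisymmetry of transport term -/
lemma antisym {v w : FC} (hv : RD v) (hr : FC.isReal v) (hw : RD w) :
    (∑' p : ℤ × ℤ, v p.1 * FC.D1 w p.2 * (starRingEnd ℂ) (w (p.1 + p.2))).re
     = -(1 / 2) * (∑' p : ℤ × ℤ, FC.D1 v p.1 * w p.2 * (starRingEnd ℂ) (w (p.1 + p.2))).re := by
  set A := ∑' p : ℤ × ℤ, v p.1 * FC.D1 w p.2 * (starRingEnd ℂ) (w (p.1 + p.2)) with hA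
  set B := ∑' p : ℤ × ℤ, FC.D1 v p.1 * w p.2 * (starRingEnd ℂ) (w (p.1 + p.2)) with hB
  let σ : ℤ × ℤ ≃ ℤ × ℤ :=
    { toFun := fun p => (-p.1, p.1 + p.2)
      invFun := fun p => (-p.1, p.1 + p.2)
      left_inv := fun p => by ext <;> simp
      right_inv := fun p => by ext <;> simp }
  have s1 := (triple_prod_summable hv.summ hw.D1.summ hw.summ).of_norm
  have s2 := (triple_prod_summable hv.D1.summ hw.summ hw.summ).of_norm
  have h1 : (starRingEnd ℂ) A = -A - B := by
    rw [hA, Complex.conj_tsum, ← σ.tsum_eq, ← tsum_neg, ← s1.neg.tsum_sub s2]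
    congr 1; ext p
    have hrp : (starRingEnd ℂ) (v (-p.1)) = v p.1 := by rw [hr, Complex.conj_conj]
    simp only [σ, Equiv.coe_fn_mk, FC.D1, map_mul, hrp, Complex.conj_conj, Complex.conj_I]
    simp only [neg_add_cancel_left, map_intCast]
    push_cast
    ring
  have := congrArg Complex.re h1
  simp at this
  linarith

/-- trilinear density -/
def XX (v : FC) (p : ℤ × ℤ) : ℂ := v p.1 * FC.D1 v p.2 * (starRingEnd ℂ) (v (p.1 + p.2))

lemma bsum {v : FC} (hv : RD v) (h : ℝ) (M : ℕ) :
    Summable fun k : ℤ => (1 + h ^ 2 * (k:ℝ) ^ 2) * ‖th h k‖ ^ (2 * M) * ‖v k‖ ^ 2 := by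
  have h1 := (hv.th h M).sq
  have h2 := (hv.th h M).D1.sq.mul_left (h ^ 2)
  refine (h1.add h2).congr (fun k => ?_)
  simp only [FC.D1, norm_mul, norm_pow, Complex.norm_I, Complex.norm_intCast, one_mul, mul_pow, sq_abs]
  ring

lemma thpow (h : ℝ) (k : ℤ) {i M : ℕ} (h1 : M ≤ i) (h2 : i ≤ 2 * M) :
    ‖th h k‖ ^ (2 * i) ≤ 4 ^ (2 * M) * ‖th h k‖ ^ (2 * M) := by
  obtain ⟨j, rfl⟩ := Nat.exists_eq_add_of_le h1
  rw [mul_add, pow_add, mul_comm]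
  gcongr
  rw [pow_mul]
  calc (‖th h k‖ ^ 2) ^ j ≤ 4 ^ j := by
        gcongr
        nlinarith [th_norm_le h k, norm_nonneg (th h k)]
    _ ≤ 4 ^ (2 * M) := pow_le_pow_right₀ (by norm_num) (by omega)

/-- hypotheses on the mollified function -/
structure Good (v U : FC) (S : ℝ) : Prop where
  rd : RD v
  rdU : RD U
  v0 : (v 0).im = 0
  sup : ∀ x, ‖FC.eval (FC.D1 v) x‖ ≤ S
  le : ∀ k, ‖v k‖ ≤ ‖U k‖
  dec : ∃ (ve vo : FC) (ε : ℝ), 0 < ε ∧ RD ve ∧ RD vo ∧ FC.isReal ve ∧ (∀ k, v k = ve k + vo k) ∧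
    (∀ x, ‖FC.eval (FC.D1 ve) x‖ ≤ S) ∧ (∀ x, 2 * ‖FC.eval vo x‖ ≤ ε * S) ∧
    ∀ k : ℤ, ε * |(k:ℝ)| * ‖v k‖ ≤ ‖U k‖

lemma term_bound {v U : FC} {S : ℝ} (hg : Good v U S) {h : ℝ} (hh : 0 < h) (M i : ℕ) (hi : i ≤ 2 * M) :
    |(∑' p : ℤ × ℤ, (ch p.2 h * th h p.1) ^ i * th h p.2 ^ (2 * M - i) *
        (v p.1 * FC.D1 v p.2 * (starRingEnd ℂ) (th h (p.1 + p.2) ^ (2 * M) * v (p.1 + p.2)))).re|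
      ≤ 8 ^ (2 * M) * S * ∑' k : ℤ, (1 + h ^ 2 * (k:ℝ) ^ 2) * ‖th h k‖ ^ (2 * M) * ‖U k‖ ^ 2 := by
  have hv := hg.rd
  have hS := hg.sup
  set b : ℤ → ℝ := fun k => (1 + h ^ 2 * (k:ℝ) ^ 2) * ‖th h k‖ ^ (2 * M) * ‖U k‖ ^ 2 with hb
  have bs : Summable b := bsum hg.rdU h M
  have bvb : ∀ k : ℤ, 4 ^ (2 * M) * ((1 + h ^ 2 * (k:ℝ) ^ 2) * ‖th h k‖ ^ (2 * M) * ‖v k‖ ^ 2) ≤ 4 ^ (2 * M) * b k := by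
    intro k
    have := hg.le k
    simp only [hb]
    gcongr
  have hS0 : 0 ≤ S := (norm_nonneg _).trans (hS 0)
  set w : FC := fun k => th h k ^ (2 * M) * v k with hw
  have hwR : RD w := hv.th h _
  have hsum : ∀ G : FC, RD G → (∀ k, ‖G k‖ ^ 2 ≤ 4 ^ (2 * M) * b k) →
      ∑' k, ‖G k‖ ^ 2 ≤ 4 ^ (2 * M) * ∑' k, b k := by
    intro G hG hle
    rw [← tsum_mul_left]
    exact hG.sq.tsum_le_tsum hle (bs.mul_left _)
  have b1 : ∀ j, M ≤ j → j ≤ 2 * M → ∀ k, ‖th h k‖ ^ (2 * j) * ‖v k‖ ^ 2 ≤ 4 ^ (2 * M) * b k := by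
    intro j h1 h2 k
    refine le_trans ?_ (bvb k)
    have e1 := thpow h k h1 h2
    calc _ ≤ 4 ^ (2 * M) * ‖th h k‖ ^ (2 * M) * ‖v k‖ ^ 2 := by gcongr
      _ ≤ 4 ^ (2 * M) * ((1 + h ^ 2 * (k:ℝ) ^ 2) * ‖th h k‖ ^ (2 * M) * ‖v k‖ ^ 2) := by
        rw [mul_assoc]
        refine mul_le_mul_of_nonneg_left ?_ (by positivity)
        nlinarith [sq_nonneg (h * k), show 0 ≤ ‖th h k‖ ^ (2 * M) * ‖v k‖ ^ 2 by positivity]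
  have b2 : ∀ j, M ≤ j → j ≤ 2 * M → ∀ k : ℤ, h ^ 2 * (k:ℝ) ^ 2 * ‖th h k‖ ^ (2 * j) * ‖v k‖ ^ 2 ≤ 4 ^ (2 * M) * b k := by
    intro j h1 h2 k
    refine le_trans ?_ (bvb k)
    have e1 := thpow h k h1 h2
    calc _ ≤ h ^ 2 * (k:ℝ) ^ 2 * (4 ^ (2 * M) * ‖th h k‖ ^ (2 * M)) * ‖v k‖ ^ 2 := by gcongr
      _ = 4 ^ (2 * M) * (h ^ 2 * (k:ℝ) ^ 2 * ‖th h k‖ ^ (2 * M) * ‖v k‖ ^ 2) := by ring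
      _ ≤ 4 ^ (2 * M) * ((1 + h ^ 2 * (k:ℝ) ^ 2) * ‖th h k‖ ^ (2 * M) * ‖v k‖ ^ 2) := by
        gcongr
        linarith
  have hwB : ∑' k, ‖w k‖ ^ 2 ≤ 4 ^ (2 * M) * ∑' k, b k := by
    apply hsum w hwR
    intro k
    have := b1 (2 * M) (by omega) le_rfl k
    simp only [hw, norm_mul, norm_pow, mul_pow]
    rwa [← pow_mul, mul_comm (2 * M) 2]
  have hB0 : 0 ≤ ∑' k, b k := tsum_nonneg fun k => by positivity
  have h84 : (8:ℝ) ^ (2 * M) = 2 ^ (2 * M) * 4 ^ (2 * M) := by rw [← mul_pow]; norm_num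
  have fin : ∀ (F G : FC), RD F → RD G → (∀ x, ‖FC.eval F x‖ ≤ 2 ^ (2 * M) * S) →
      (∀ k, ‖G k‖ ^ 2 ≤ 4 ^ (2 * M) * b k) →
      ‖∑' p : ℤ × ℤ, F p.1 * G p.2 * (starRingEnd ℂ) (w (p.1 + p.2))‖ ≤ 8 ^ (2 * M) * S * ∑' k, b k := by
    intro F G hF hG hFS hGb
    refine (triple_bound hF.summ hG.summ hwR.summ hFS).trans ?_
    have := hsum G hG hGb
    calc _ ≤ 2 ^ (2 * M) * S / 2 * (4 ^ (2 * M) * ∑' k, b k + 4 ^ (2 * M) * ∑' k, b k) := by gcongr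
      _ = _ := by rw [h84]; ring
  have one_le : ∀ j, j ≤ 2 * M → (2:ℝ) ^ j * S ≤ 2 ^ (2 * M) * S := by
    intro j hj
    gcongr
    norm_num
  rcases Nat.eq_zero_or_pos i with hi0 | hi0
  · subst hi0
    have e : ∀ p : ℤ × ℤ, (ch p.2 h * th h p.1) ^ 0 * th h p.2 ^ (2 * M - 0) *
        (v p.1 * FC.D1 v p.2 * (starRingEnd ℂ) (th h (p.1 + p.2) ^ (2 * M) * v (p.1 + p.2)))
        = v p.1 * FC.D1 w p.2 * (starRingEnd ℂ) (w (p.1 + p.2)) := by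
      intro p
      simp only [hw, FC.D1, pow_zero, Nat.sub_zero]; ring
    simp_rw [e]
    obtain ⟨ve, vo, ε, hε, heR, hoR, her, hdec, heS, hoS, hU⟩ := hg.dec
    have hwb : ∀ k, ‖w k‖ ^ 2 ≤ 4 ^ (2 * M) * b k := by
      intro k
      have := b1 (2 * M) (by omega) le_rfl k
      simp only [hw, norm_mul, norm_pow, mul_pow]
      rwa [← pow_mul, mul_comm (2 * M) 2]
    have hε' : (ε:ℂ) ≠ 0 := by exact_mod_cast hε.ne'
    have s1 := (triple_prod_summable heR.summ hwR.D1.summ hwR.summ).of_norm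
    have s2 := (triple_prod_summable hoR.summ hwR.D1.summ hwR.summ).of_norm
    have split : ∑' p : ℤ × ℤ, v p.1 * FC.D1 w p.2 * (starRingEnd ℂ) (w (p.1 + p.2))
        = ∑' p : ℤ × ℤ, ve p.1 * FC.D1 w p.2 * (starRingEnd ℂ) (w (p.1 + p.2))
          + ∑' p : ℤ × ℤ, vo p.1 * FC.D1 w p.2 * (starRingEnd ℂ) (w (p.1 + p.2)) := by
      rw [← s1.tsum_add s2]; congr 1; ext p; rw [hdec]; ring
    have f := fin (FC.D1 ve) w heR.D1 hwR (fun x => (heS x).trans (by simpa using one_le 0 (by omega))) hwb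
    have f2 := (Complex.abs_re_le_norm _).trans f
    have hFR : RD (fun k => (2 * (ε:ℂ)⁻¹) * vo k) :=
      hoR.mulbdd (m := fun _ => 2 * (ε:ℂ)⁻¹) (C := ‖2 * (ε:ℂ)⁻¹‖) (fun _ => le_rfl)
    have hGR : RD (fun k => (ε:ℂ) * FC.D1 w k) :=
      hwR.D1.mulbdd (m := fun _ => (ε:ℂ)) (C := ‖(ε:ℂ)‖) (fun _ => le_rfl)
    have g := fin _ _ hFR hGR (fun x => by
      have : FC.eval (fun k => (2 * (ε:ℂ)⁻¹) * vo k) x = (2 * (ε:ℂ)⁻¹) * FC.eval vo x := by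
        rw [eval_eq, eval_eq, ← tsum_mul_left]; congr 1; ext k; ring
      rw [this, norm_mul, norm_mul, norm_inv, Complex.norm_real, Real.norm_of_nonneg hε.le, Complex.norm_two]
      refine le_trans ?_ (by simpa using one_le 0 (by omega))
      have := hoS x
      calc 2 * ε⁻¹ * ‖FC.eval vo x‖ = ε⁻¹ * (2 * ‖FC.eval vo x‖) := by ring
        _ ≤ S := by rw [inv_mul_le_iff₀ hε]; exact this) (by
      intro k
      have e1 := thpow h k (show M ≤ 2 * M by omega) le_rfl
      simp only [hw, FC.D1, norm_mul, norm_pow, Complex.norm_I, Complex.norm_intCast, one_mul, Complex.norm_real, Real.norm_of_nonneg hε.le]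
      calc (ε * (|(k:ℝ)| * (‖th h k‖ ^ (2 * M) * ‖v k‖))) ^ 2
          = ‖th h k‖ ^ (2 * (2 * M)) * (ε * |(k:ℝ)| * ‖v k‖) ^ 2 := by rw [mul_comm 2 (2 * M), pow_mul]; ring
        _ ≤ (4 ^ (2 * M) * ‖th h k‖ ^ (2 * M)) * ‖U k‖ ^ 2 := by
          have := hU k
          gcongr
        _ ≤ 4 ^ (2 * M) * ((1 + h ^ 2 * (k:ℝ) ^ 2) * ‖th h k‖ ^ (2 * M) * ‖U k‖ ^ 2) := by
          rw [mul_assoc]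
          refine mul_le_mul_of_nonneg_left ?_ (by positivity)
          nlinarith [sq_nonneg (h * k), show 0 ≤ ‖th h k‖ ^ (2 * M) * ‖U k‖ ^ 2 by positivity])
    have ge : ∑' p : ℤ × ℤ, (2 * (ε:ℂ)⁻¹ * vo p.1) * ((ε:ℂ) * FC.D1 w p.2) * (starRingEnd ℂ) (w (p.1 + p.2))
        = 2 * ∑' p : ℤ × ℤ, vo p.1 * FC.D1 w p.2 * (starRingEnd ℂ) (w (p.1 + p.2)) := by
      rw [← tsum_mul_left]; congr 1; ext p; field_simp
    simp only [ge] at g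
    rw [norm_mul, Complex.norm_two] at g
    have g2 := Complex.abs_re_le_norm (∑' p : ℤ × ℤ, vo p.1 * FC.D1 w p.2 * (starRingEnd ℂ) (w (p.1 + p.2)))
    rw [split, Complex.add_re, antisym heR her hwR]
    rw [abs_le] at f2 g2 ⊢
    constructor <;> linarith
  refine (Complex.abs_re_le_norm _).trans ?_
  by_cases hiM : i < M
  · obtain ⟨i, rfl⟩ : ∃ j, i = j + 1 := ⟨i - 1, by omega⟩
    have hh' : (h:ℂ) ≠ 0 := by exact_mod_cast hh.ne'
    have hq1 : RD (fun k => th h k * v k) := by simpa using hv.th h 1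
    have hq : RD (fun k => (h:ℂ)⁻¹ * (th h k * v k)) := hq1.mulbdd (m := fun _ => (h:ℂ)⁻¹) (C := ‖(h:ℂ)⁻¹‖) (fun _ => le_rfl)
    have hqS : ∀ x, ‖FC.eval (fun k => (h:ℂ)⁻¹ * (th h k * v k)) x‖ ≤ S := by
      intro x
      have : FC.eval (fun k => (h:ℂ)⁻¹ * (th h k * v k)) x = (h:ℂ)⁻¹ * FC.eval (fun k => (th h k * v k)) x := by
        rw [eval_eq, eval_eq, ← tsum_mul_left]; congr 1; ext k; ring
      rw [this, norm_mul]
      have h2 := sup_th_one hv hS h hh x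
      rw [norm_inv, Complex.norm_real, Real.norm_of_nonneg hh.le, inv_mul_le_iff₀ hh]
      linarith
    have hg1 : RD (fun k => th h k ^ (2 * M - (i + 1)) * FC.D1 v k) := hv.D1.th h _
    have hg2 : RD (fun k => ch k h ^ (i + 1) * (th h k ^ (2 * M - (i + 1)) * FC.D1 v k)) := hg1.ch h (i+1)
    have hg3 : RD (fun k => (h:ℂ) * (ch k h ^ (i + 1) * (th h k ^ (2 * M - (i + 1)) * FC.D1 v k))) :=
      hg2.mulbdd (m := fun _ => (h:ℂ)) (C := ‖(h:ℂ)‖) (fun _ => le_rfl)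
    have f := fin (fun k => th h k ^ i * ((h:ℂ)⁻¹ * (th h k * v k))) _ (hq.th h i) hg3
      (fun x => (sup_th hq hqS h i x).trans (one_le i (by omega))) (by
        intro k
        have := b2 (2 * M - (i + 1)) (by omega) (by omega) k
        simp only [FC.D1, norm_mul, norm_pow, mul_pow, ch_norm, Complex.norm_I, Complex.norm_intCast, Complex.norm_real, sq_abs, Real.norm_eq_abs, one_pow, one_mul]
        refine le_trans (le_of_eq ?_) this
        ring)
    refine le_trans (le_of_eq ?_) f
    congr 2; ext p
    simp only [hw]
    rw [mul_pow]
    field_simp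
    try ring
  · push Not at hiM
    have hg1 : RD (fun k => th h k ^ (2 * M - i) * FC.D1 v k) := hv.D1.th h _
    have f := fin (fun k => ch k h ^ i * (th h k ^ (2 * M - i) * FC.D1 v k)) (fun k => th h k ^ i * v k)
      (hg1.ch h i) (hv.th h i)
      (fun x => (sup_ch (sup_th hv.D1 hS h _) h i x).trans (one_le _ (by omega))) (by
        intro k
        have := b1 i hiM hi k
        simp only [norm_mul, norm_pow, mul_pow]
        rwa [← pow_mul, mul_comm i 2])
    refine le_trans (le_of_eq ?_) f
    rw [← (Equiv.prodComm ℤ ℤ).tsum_eq]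
    congr 2; ext p
    simp only [hw, Equiv.prodComm_apply, Prod.fst_swap, Prod.snd_swap, add_comm p.2 p.1]
    rw [mul_pow]
    ring

lemma fixed_h {v U : FC} {S : ℝ} (hg : Good v U S) {h : ℝ} (hh : 0 < h) (M : ℕ) :
    |∑' p : ℤ × ℤ, ‖th h (p.1 + p.2)‖ ^ (4 * M) * (XX v p).re|
      ≤ 16 ^ (2 * M) * S * ∑' k : ℤ, (1 + h ^ 2 * (k:ℝ) ^ 2) * ‖th h k‖ ^ (2 * M) * ‖U k‖ ^ 2 := by
  have hv := hg.rd
  set B := ∑' k : ℤ, (1 + h ^ 2 * (k:ℝ) ^ 2) * ‖th h k‖ ^ (2 * M) * ‖U k‖ ^ 2 with hB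
  let Z : ℕ → ℤ × ℤ → ℂ := fun i p => (ch p.2 h * th h p.1) ^ i * th h p.2 ^ (2 * M - i) *
        (v p.1 * FC.D1 v p.2 * (starRingEnd ℂ) (th h (p.1 + p.2) ^ (2 * M) * v (p.1 + p.2)))
  have hZs : ∀ i, Summable (Z i) := by
    intro i
    have := (triple_prod_summable (hv.th h i).summ ((hv.D1.th h (2 * M - i)).ch h i).summ (hv.th h (2 * M)).summ).of_norm
    refine this.congr (fun p => ?_)
    simp only [Z]; ring
  have e1 : ∀ p, ‖th h (p.1 + p.2)‖ ^ (4 * M) * (XX v p).re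
      = (∑ i ∈ Finset.range (2 * M + 1), Z i p * ((2 * M).choose i : ℂ)).re := by
    intro p
    have : ∑ i ∈ Finset.range (2 * M + 1), Z i p * ((2 * M).choose i : ℂ)
        = ((‖th h (p.1 + p.2)‖ ^ (4 * M) : ℝ) : ℂ) * XX v p := by
      have e2 : ((‖th h (p.1 + p.2)‖ ^ (4 * M) : ℝ) : ℂ) = th h (p.1 + p.2) ^ (2 * M) * (starRingEnd ℂ) (th h (p.1 + p.2) ^ (2 * M)) := by
        rw [Complex.mul_conj', norm_pow, ← Complex.ofReal_pow, ← pow_mul]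
        congr 2; ring
      rw [e2]
      have e3 : th h (p.1 + p.2) ^ (2 * M) = ∑ m ∈ Finset.range (2 * M + 1), (ch p.2 h * th h p.1) ^ m * th h p.2 ^ (2 * M - m) * ((2 * M).choose m : ℂ) := by
        rw [th_add, add_pow]
      conv_rhs => enter [1, 1]; rw [e3]
      rw [Finset.sum_mul, Finset.sum_mul]
      apply Finset.sum_congr rfl
      intro i _
      simp only [Z, XX, map_mul]
      ring
    rw [this, Complex.re_ofReal_mul]
  simp_rw [e1]
  rw [← Complex.re_tsum (summable_sum fun i _ => (hZs i).mul_right _),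
    Summable.tsum_finsetSum (fun i _ => (hZs i).mul_right _), Complex.re_sum]
  refine (Finset.abs_sum_le_sum_abs _ _).trans ?_
  have h16 : (16:ℝ) ^ (2 * M) = (∑ i ∈ Finset.range (2 * M + 1), ((2 * M).choose i : ℝ)) * 8 ^ (2 * M) := by
    have := Nat.sum_range_choose (2 * M)
    rw [← Nat.cast_sum, this]; push_cast; rw [← mul_pow]; norm_num
  rw [h16, Finset.sum_mul, Finset.sum_mul, Finset.sum_mul]
  apply Finset.sum_le_sum
  intro i hi
  rw [tsum_mul_right, mul_comm, ← Complex.ofReal_natCast, Complex.re_ofReal_mul, abs_mul, abs_of_nonneg (by positivity)]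
  rw [mul_assoc, mul_assoc]
  gcongr
  rw [← mul_assoc]
  exact term_bound hg hh M i (by simp at hi; omega)

lemma scale_int {s : ℝ} (hs : 0 < s) {ψ : ℝ → ℝ} (hψ0 : ψ 0 = 0) (hev : ∀ x, ψ (-x) = ψ x)
    (hψ : IntegrableOn (fun h => ψ h * h ^ (-1 - 2 * s)) (Set.Ioi 0)) (k : ℝ) :
    IntegrableOn (fun h => ψ (k * h) * h ^ (-1 - 2 * s)) (Set.Ioi 0) ∧
    ∫ h in Set.Ioi (0:ℝ), ψ (k * h) * h ^ (-1 - 2 * s) =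
      |k| ^ (2 * s) * ∫ h in Set.Ioi (0:ℝ), ψ h * h ^ (-1 - 2 * s) := by
  by_cases hk : k = 0
  · subst hk
    simp [hψ0, Real.zero_rpow (by positivity : 2 * s ≠ 0)]
  have hc : 0 < |k| := abs_pos.2 hk
  set c := |k| with hcdef
  have e : ∀ h ∈ Set.Ioi (0:ℝ), c ^ (1 + 2 * s) * (ψ (c * h) * (c * h) ^ (-1 - 2 * s)) = ψ (k * h) * h ^ (-1 - 2 * s) := by
    intro h hh
    have h1 : ψ (c * h) = ψ (k * h) := by
      rcases abs_choice k with h | h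
      · rw [hcdef, h]
      · rw [hcdef, h, neg_mul, hev]
    rw [h1, Real.mul_rpow hc.le (le_of_lt hh)]
    have : c ^ (1 + 2 * s) * c ^ (-1 - 2 * s) = 1 := by
      rw [← Real.rpow_add hc]; ring_nf; simp
    calc _ = (c ^ (1 + 2 * s) * c ^ (-1 - 2 * s)) * (ψ (k * h) * h ^ (-1 - 2 * s)) := by ring
      _ = _ := by rw [this, one_mul]
  constructor
  · rw [← integrableOn_congr_fun e measurableSet_Ioi]
    apply Integrable.const_mul
    have := (integrableOn_Ioi_comp_mul_left_iff (fun h => ψ h * h ^ (-1 - 2 * s)) 0 hc).2 (by simpa using hψ)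
    exact this
  · rw [← setIntegral_congr_fun measurableSet_Ioi e, integral_const_mul,
      integral_comp_mul_left_Ioi (fun h => ψ h * h ^ (-1 - 2 * s)) 0 hc]
    simp only [mul_zero, smul_eq_mul]
    rw [← mul_assoc]
    congr 1
    rw [← Real.rpow_neg_one, ← Real.rpow_add hc]; congr 1; ring

lemma th_one (h : ℝ) (k : ℤ) : th h k = th (k * h) 1 := by
  unfold th ch; push_cast; ring_nf

lemma th_one_norm (x : ℝ) : ‖th x 1‖ = ‖2 * Real.sin (x / 2)‖ := by
  have := Complex.norm_exp_I_mul_ofReal_sub_one x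
  rw [← this]; simp [th, ch]

lemma th_even (x : ℝ) : ‖th (-x) 1‖ = ‖th x 1‖ := by
  rw [th_one_norm, th_one_norm, neg_div, Real.sin_neg]; simp

lemma th_le (x : ℝ) : ‖th x 1‖ ≤ |x| := by
  have := Real.norm_exp_I_mul_ofReal_sub_one_le (x := x)
  simpa [th, ch] using this

lemma th_cont : Continuous fun x => ‖th x 1‖ := by
  unfold th ch; fun_prop

lemma lam_int {s : ℝ} (hs : 1 < s) {M : ℕ} (hM : s < M) :
    IntegrableOn (fun h : ℝ => (1 + h ^ 2) * ‖th h 1‖ ^ (2 * M) * h ^ (-1 - 2 * s)) (Set.Ioi 0) := by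
  have meas : Measurable (fun h : ℝ => (1 + h ^ 2) * ‖th h 1‖ ^ (2 * M) * h ^ (-1 - 2 * s)) := by
    have := th_cont.measurable
    fun_prop
  rw [← Set.Ioc_union_Ioi_eq_Ioi (zero_le_one (α := ℝ))]
  apply IntegrableOn.union
  · have h1 : IntegrableOn (fun h : ℝ => 2 * h ^ (2 * (M:ℝ) - 1 - 2 * s)) (Set.Ioc 0 1) := by
      apply Integrable.const_mul
      have := intervalIntegral.intervalIntegrable_rpow' (r := 2 * (M:ℝ) - 1 - 2 * s) (a := 0) (b := 1) (by linarith)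
      exact (intervalIntegrable_iff_integrableOn_Ioc_of_le zero_le_one).1 this
    refine Integrable.mono' h1 meas.aestronglyMeasurable ?_
    filter_upwards [ae_restrict_mem measurableSet_Ioc] with x hx
    have hx0 : 0 < x := hx.1
    have hx1 : x ≤ 1 := hx.2
    rw [Real.norm_of_nonneg (by positivity)]
    have h2 : ‖th x 1‖ ^ (2 * M) ≤ x ^ (2 * M) := by
      gcongr; simpa [abs_of_pos hx0] using th_le x
    calc _ ≤ 2 * x ^ (2 * M) * x ^ (-1 - 2 * s) := by gcongr; nlinarith
      _ = _ := by
        rw [mul_assoc, ← Real.rpow_natCast, ← Real.rpow_add hx0]; push_cast; ring_nf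
  · have h1 : IntegrableOn (fun h : ℝ => 2 * 2 ^ (2 * M) * h ^ (1 - 2 * s)) (Set.Ioi 1) := by
      apply Integrable.const_mul
      exact integrableOn_Ioi_rpow_of_lt (by linarith) one_pos
    refine Integrable.mono' h1 meas.aestronglyMeasurable ?_
    filter_upwards [ae_restrict_mem measurableSet_Ioi] with x hx
    have hx1 : 1 < x := hx
    have hx0 : 0 < x := by linarith
    rw [Real.norm_of_nonneg (by positivity)]
    have h2 : ‖th x 1‖ ^ (2 * M) ≤ 2 ^ (2 * M) := by
      gcongr; exact th_norm_le x 1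
    calc _ ≤ (2 * x ^ 2) * 2 ^ (2 * M) * x ^ (-1 - 2 * s) := by gcongr; nlinarith
      _ = 2 * 2 ^ (2 * M) * (x ^ (2:ℕ) * x ^ (-1 - 2 * s)) := by ring
      _ = _ := by
        rw [← Real.rpow_natCast x 2, ← Real.rpow_add hx0]; push_cast; ring_nf

lemma kap_int {s : ℝ} (hs : 1 < s) {M : ℕ} (hM : s < M) :
    IntegrableOn (fun h : ℝ => ‖th h 1‖ ^ (4 * M) * h ^ (-1 - 2 * s)) (Set.Ioi 0) := by
  have meas : Measurable (fun h : ℝ => ‖th h 1‖ ^ (4 * M) * h ^ (-1 - 2 * s)) := by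
    have := th_cont.measurable
    fun_prop
  refine Integrable.mono' ((lam_int hs hM).const_mul (2 ^ (2 * M))) meas.aestronglyMeasurable ?_
  filter_upwards [ae_restrict_mem measurableSet_Ioi] with x hx
  have hx0 : 0 < x := hx
  rw [Real.norm_of_nonneg (by positivity)]
  have h2 : ‖th x 1‖ ^ (2 * M) ≤ 2 ^ (2 * M) := by
    gcongr; exact th_norm_le x 1
  calc _ = ‖th x 1‖ ^ (2 * M) * (1 * ‖th x 1‖ ^ (2 * M) * x ^ (-1 - 2 * s)) := by ring
    _ ≤ _ := by gcongr; nlinarith [sq_nonneg x]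

lemma kap_pos {s : ℝ} (hs : 1 < s) {M : ℕ} (hM : s < M) :
    0 < ∫ h in Set.Ioi (0:ℝ), ‖th h 1‖ ^ (4 * M) * h ^ (-1 - 2 * s) := by
  rw [setIntegral_pos_iff_support_of_nonneg_ae _ (kap_int hs hM)]
  · refine lt_of_lt_of_le ?_ (measure_mono (s := Set.Ioo (0:ℝ) 1) ?_)
    · simp
    · intro x hx
      refine ⟨?_, hx.1⟩
      have h0 : 0 < ‖th x 1‖ := by
        rw [th_one_norm, norm_pos_iff]
        have := Real.sin_pos_of_pos_of_lt_pi (x := x / 2) (by linarith [hx.1]) (by linarith [hx.2, Real.pi_gt_three])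
        positivity
      have := Real.rpow_pos_of_pos hx.1 (-1 - 2 * s)
      simp only [Function.mem_support]
      positivity
  · filter_upwards [ae_restrict_mem measurableSet_Ioi] with x hx
    have hx0 : 0 < x := hx
    simp only [Pi.zero_apply]
    positivity

lemma weight_summable {v : FC} (hv : RD v) (n : ℕ) :
    Summable fun p : ℤ × ℤ => (1 + |((p.1 + p.2 : ℤ) : ℝ)|) ^ n * ‖XX v p‖ := by
  have h1 : RD (fun k => ((1 + |(k:ℝ)|) ^ n : ℝ) * v k) := hv.of_le 1 n (fun k => by
    rw [norm_mul, Complex.norm_real, Real.norm_of_nonneg (by positivity), one_mul])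
  have h2 : RD (fun k => ((1 + |(k:ℝ)|) ^ n : ℝ) * FC.D1 v k) := hv.D1.of_le 1 n (fun k => by
    rw [norm_mul, Complex.norm_real, Real.norm_of_nonneg (by positivity), one_mul])
  refine Summable.of_nonneg_of_le (fun _ => by positivity) (fun p => ?_)
    (triple_prod_summable h1.summ h2.summ hv.summ)
  simp only [norm_mul, Complex.norm_real, XX]
  rw [Real.norm_of_nonneg (by positivity), Real.norm_of_nonneg (by positivity)]
  have : (1 + |((p.1 + p.2 : ℤ) : ℝ)|) ^ n ≤ (1 + |(p.1:ℝ)|) ^ n * (1 + |(p.2:ℝ)|) ^ n := by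
    rw [← mul_pow]
    gcongr
    push_cast
    have := abs_add_le (p.1:ℝ) (p.2:ℝ)
    nlinarith [abs_nonneg (p.1:ℝ), abs_nonneg (p.2:ℝ)]
  calc _ ≤ ((1 + |(p.1:ℝ)|) ^ n * (1 + |(p.2:ℝ)|) ^ n) * (‖v p.1‖ * ‖FC.D1 v p.2‖ * ‖(starRingEnd ℂ) (v (p.1 + p.2))‖) := by gcongr
    _ = _ := by ring

lemma weight_summable' {v : FC} (hv : RD v) {s : ℝ} {W : ℤ → ℝ}
    (hW : ∀ k : ℤ, |W k| ≤ (1 + |(k:ℝ)|) ^ (2 * s)) :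
    Summable fun p : ℤ × ℤ => |W (p.1 + p.2)| * ‖XX v p‖ := by
  refine Summable.of_nonneg_of_le (fun _ => by positivity) (fun p => ?_)
    (weight_summable hv (⌈2 * s⌉₊))
  gcongr
  refine (hW _).trans ?_
  rw [← Real.rpow_natCast]
  exact Real.rpow_le_rpow_of_exponent_le (by linarith [abs_nonneg ((p.1 + p.2 : ℤ) : ℝ)]) (Nat.le_ceil _)

lemma hom_le {s : ℝ} (hs : 0 < s) (k : ℤ) : |(|(k:ℝ)| ^ (2 * s))| ≤ (1 + |(k:ℝ)|) ^ (2 * s) := by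
  rw [abs_of_nonneg (by positivity)]
  gcongr
  linarith

lemma wt_le {s : ℝ} (hs : 0 < s) (k : ℤ) : |FC.wt s k| ≤ (1 + |(k:ℝ)|) ^ (2 * s) := by
  unfold FC.wt
  rw [abs_of_nonneg (by positivity), Real.rpow_mul (by positivity)]
  gcongr
  rw [Real.rpow_two]
  nlinarith [abs_nonneg (k:ℝ), sq_abs (k:ℝ)]

lemma hom_sq_summable {v : FC} (hv : RD v) {s : ℝ} {W : ℤ → ℝ}
    (hW : ∀ k : ℤ, |W k| ≤ (1 + |(k:ℝ)|) ^ (2 * s)) :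
    Summable fun k : ℤ => |W k| * ‖v k‖ ^ 2 := by
  have h1 : RD (fun k => ((1 + |(k:ℝ)|) ^ (⌈2 * s⌉₊) : ℝ) * v k) := hv.of_le 1 _ (fun k => by
    rw [norm_mul, Complex.norm_real, Real.norm_of_nonneg (by positivity), one_mul])
  refine Summable.of_nonneg_of_le (fun _ => by positivity) (fun k => ?_) h1.sq
  rw [norm_mul, mul_pow, Complex.norm_real, Real.norm_of_nonneg (by positivity)]
  gcongr
  refine (hW _).trans ?_
  have h2 : (1 + |(k:ℝ)|) ^ (2 * s) ≤ (1 + |(k:ℝ)|) ^ (⌈2 * s⌉₊) := by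
    rw [← Real.rpow_natCast]
    exact Real.rpow_le_rpow_of_exponent_le (by linarith [abs_nonneg (k : ℝ)]) (Nat.le_ceil _)
  refine h2.trans ?_
  rw [← pow_mul]
  exact pow_le_pow_right₀ (by linarith [abs_nonneg (k : ℝ)]) (by omega)

lemma hom_bound {s : ℝ} (hs : 1 < s) : ∃ C > (0:ℝ), ∀ (v U : FC) (S : ℝ), Good v U S →
    |∑' p : ℤ × ℤ, |((p.1 + p.2 : ℤ) : ℝ)| ^ (2 * s) * (XX v p).re|
      ≤ C * S * ∑' k : ℤ, |(k:ℝ)| ^ (2 * s) * ‖U k‖ ^ 2 := by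
  obtain ⟨M, hM⟩ := exists_nat_gt s
  have hM1 : M ≠ 0 := by rintro rfl; norm_num at hM; linarith
  have hs0 : 0 < s := by linarith
  set κ := ∫ h in Set.Ioi (0:ℝ), ‖th h 1‖ ^ (4 * M) * h ^ (-1 - 2 * s) with hκ
  set l := ∫ h in Set.Ioi (0:ℝ), (1 + h ^ 2) * ‖th h 1‖ ^ (2 * M) * h ^ (-1 - 2 * s) with hl
  have hκ0 : 0 < κ := kap_pos hs hM
  have hl0 : 0 ≤ l := by
    apply setIntegral_nonneg measurableSet_Ioi
    intro x hx
    have : 0 < x := hx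
    positivity
  have th0 : th 0 1 = 0 := by simp [th, ch]
  have sc1 : ∀ k : ℤ, _ := fun k => scale_int hs0 (ψ := fun h => ‖th h 1‖ ^ (4 * M)) (by simp [th0, hM1])
    (fun x => by simp only [th_even]) (kap_int hs hM) (k:ℝ)
  have sc2 : ∀ k : ℤ, _ := fun k => scale_int hs0 (ψ := fun h => (1 + h ^ 2) * ‖th h 1‖ ^ (2 * M)) (by simp [th0, hM1])
    (fun x => by simp only [th_even, neg_sq]) (lam_int hs hM) (k:ℝ)
  simp only [← th_one, ← hκ] at sc1
  simp only [← th_one, ← hl] at sc2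
  refine ⟨κ⁻¹ * (16 ^ (2 * M) * (l + 1)), by positivity, ?_⟩
  intro v U S hg
  have hv := hg.rd
  have hS := hg.sup
  have hS0 : 0 ≤ S := (norm_nonneg _).trans (hS 0)
  have main := SA_interchange (μ := volume.restrict (Set.Ioi (0:ℝ)))
    (fun (p : ℤ × ℤ) (h : ℝ) => (XX v p).re * (‖th h (p.1 + p.2)‖ ^ (4 * M) * h ^ (-1 - 2 * s)))
    (fun (k : ℤ) (h : ℝ) => (16 ^ (2 * M) * S * ‖U k‖ ^ 2) *
        ((1 + (k * h) ^ 2) * ‖th h k‖ ^ (2 * M) * |h ^ (-1 - 2 * s)|))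
    (fun p => (sc1 (p.1 + p.2)).1.const_mul _)
    (by
      have e : ∀ p : ℤ × ℤ, ∫ (x : ℝ) in Set.Ioi 0, ‖(XX v p).re * (‖th x (p.1 + p.2)‖ ^ (4 * M) * x ^ (-1 - 2 * s))‖
          = |(XX v p).re| * (|((p.1 + p.2 : ℤ) : ℝ)| ^ (2 * s) * κ) := by
        intro p
        rw [← (sc1 (p.1 + p.2)).2, ← integral_const_mul]
        apply setIntegral_congr_fun measurableSet_Ioi
        intro x hx
        have : 0 < x := hx
        simp only
        rw [norm_mul, Real.norm_eq_abs, Real.norm_of_nonneg (by positivity)]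
      simp_rw [e]
      refine Summable.of_nonneg_of_le (fun _ => by positivity) (fun p => ?_) ((weight_summable' hv (hom_le hs0)).mul_right κ)
      rw [abs_of_nonneg (a := |((p.1 + p.2 : ℤ) : ℝ)| ^ (2 * s)) (by positivity)]
      calc _ ≤ ‖XX v p‖ * (|((p.1 + p.2 : ℤ) : ℝ)| ^ (2 * s) * κ) := by
            gcongr; exact Complex.abs_re_le_norm _
        _ = _ := by ring)
    (fun k => by
      apply Integrable.const_mul
      refine (integrableOn_congr_fun ?_ measurableSet_Ioi).1 (sc2 k).1
      intro x hx
      have : 0 < x := hx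
      simp only
      rw [abs_of_nonneg (by positivity)])
    (fun k x => by positivity)
  have e2 : ∀ k : ℤ, ∫ (h : ℝ) in Set.Ioi 0, (16 ^ (2 * M) * S * ‖U k‖ ^ 2) *
        ((1 + (k * h) ^ 2) * ‖th h k‖ ^ (2 * M) * |h ^ (-1 - 2 * s)|)
      = (16 ^ (2 * M) * S * l) * (|(k:ℝ)| ^ (2 * s) * ‖U k‖ ^ 2) := by
    intro k
    rw [integral_const_mul]
    have : ∫ (h : ℝ) in Set.Ioi 0, ((1 + (k * h) ^ 2) * ‖th h k‖ ^ (2 * M) * |h ^ (-1 - 2 * s)|)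
        = |(k:ℝ)| ^ (2 * s) * l := by
      rw [← (sc2 k).2]
      apply setIntegral_congr_fun measurableSet_Ioi
      intro x hx
      have : 0 < x := hx
      simp only
      rw [abs_of_nonneg (by positivity)]
    rw [this]; ring
  have e3 : ∀ p : ℤ × ℤ, ∫ (h : ℝ) in Set.Ioi 0, (XX v p).re * (‖th h (p.1 + p.2)‖ ^ (4 * M) * h ^ (-1 - 2 * s))
      = κ * (|((p.1 + p.2 : ℤ) : ℝ)| ^ (2 * s) * (XX v p).re) := by
    intro p
    rw [integral_const_mul, (sc1 (p.1 + p.2)).2]; ring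
  simp_rw [e2, e3] at main
  have hsumk : Summable fun k : ℤ => |(k:ℝ)| ^ (2 * s) * ‖U k‖ ^ 2 :=
    (hom_sq_summable hg.rdU (hom_le hs0)).congr (fun k => by rw [abs_of_nonneg (a := |(k : ℝ)| ^ (2 * s)) (by positivity)])
  have main2 := main (hsumk.mul_left _)
    (Filter.Eventually.of_forall fun h => by
      refine ((bsum hg.rdU h M).mul_left (16 ^ (2 * M) * S * |h ^ (-1 - 2 * s)|)).congr (fun k => ?_)
      ring)
    (by
      filter_upwards [ae_restrict_mem measurableSet_Ioi] with h hh
      have hh0 : 0 < h := hh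
      have f := fixed_h hg hh0 M
      have g1 : ∑' p : ℤ × ℤ, (XX v p).re * (‖th h (p.1 + p.2)‖ ^ (4 * M) * h ^ (-1 - 2 * s))
        = h ^ (-1 - 2 * s) * ∑' p : ℤ × ℤ, ‖th h (p.1 + p.2)‖ ^ (4 * M) * (XX v p).re := by
        rw [← tsum_mul_left]; congr 1; ext p; ring
      have g2 : ∑' k : ℤ, (16 ^ (2 * M) * S * ‖U k‖ ^ 2) *
        ((1 + (k * h) ^ 2) * ‖th h k‖ ^ (2 * M) * |h ^ (-1 - 2 * s)|)
        = h ^ (-1 - 2 * s) * (16 ^ (2 * M) * S * ∑' k : ℤ, (1 + h ^ 2 * (k:ℝ) ^ 2) * ‖th h k‖ ^ (2 * M) * ‖U k‖ ^ 2) := by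
        rw [← tsum_mul_left, ← tsum_mul_left]; congr 1; ext k
        rw [abs_of_nonneg (by positivity)]; ring
      rw [g1, g2, abs_mul, abs_of_nonneg (a := h ^ (-1 - 2 * s)) (by positivity)]
      gcongr)
  rw [tsum_mul_left, tsum_mul_left, abs_mul, abs_of_pos hκ0] at main2
  have hT : 0 ≤ ∑' k : ℤ, |(k:ℝ)| ^ (2 * s) * ‖U k‖ ^ 2 := tsum_nonneg fun k => by positivity
  rw [← le_inv_mul_iff₀ hκ0] at main2
  refine main2.trans ?_
  have : κ⁻¹ * (16 ^ (2 * M) * S * l * ∑' k : ℤ, |(k:ℝ)| ^ (2 * s) * ‖U k‖ ^ 2)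
     = (κ⁻¹ * (16 ^ (2 * M) * l)) * S * ∑' k : ℤ, |(k:ℝ)| ^ (2 * s) * ‖U k‖ ^ 2 := by ring
  rw [this]
  gcongr
  linarith

lemma r_bound {s : ℝ} (hs : 1 < s) (k : ℤ) :
    |FC.wt s k - |(k:ℝ)| ^ (2 * s)| ≤ s * (1 + (k:ℝ) ^ 2) ^ (s - 1) := by
  unfold FC.wt
  set x := (k:ℝ) ^ 2 with hx
  have hx0 : 0 ≤ x := by positivity
  have e : |(k:ℝ)| ^ (2 * s) = x ^ s := by
    rw [Real.rpow_mul (abs_nonneg _), Real.rpow_two, sq_abs]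
  rw [e]
  have h1 : x ^ s ≤ (1 + x) ^ s := by gcongr; linarith
  rw [abs_of_nonneg (by linarith)]
  have hp : 0 < 1 + x := by linarith
  have h2 := one_add_mul_self_le_rpow_one_add (s := -(1 / (1 + x))) (p := s) (by
    rw [neg_le_neg_iff, div_le_one hp]; linarith) hs.le
  have h3 : 1 + -(1 / (1 + x)) = x / (1 + x) := by field_simp; ring
  rw [h3, Real.div_rpow hx0 hp.le, le_div_iff₀ (by positivity)] at h2
  have h4 : (1 + x) ^ s = (1 + x) ^ (s - 1) * (1 + x) := by
    rw [Real.rpow_sub_one hp.ne']; field_simp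
  have h5 : (1 + s * -(1 / (1 + x))) * (1 + x) ^ s = (1 + x) ^ s - s * (1 + x) ^ (s - 1) := by
    rw [h4]; field_simp; ring
  linarith

lemma geo_bound {s : ℝ} (hs : 1 < s) {m b c : ℝ} (hb : |b| ≤ |m|) (hc : |c| ≤ 2 * |m|) :
    |b| * (1 + c ^ 2) ^ (s - 1) ≤ 4 ^ s * ((1 + m ^ 2) ^ (s / 2) * (1 + c ^ 2) ^ (s / 2)) := by
  have h1 : |b| ≤ (1 + m ^ 2) ^ (1 / 2 : ℝ) := by
    rw [← Real.sqrt_eq_rpow]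
    apply Real.le_sqrt_of_sq_le
    have : |b| ^ 2 ≤ |m| ^ 2 := by gcongr
    rw [sq_abs m] at this
    linarith
  have h2 : 1 + c ^ 2 ≤ 4 * (1 + m ^ 2) := by
    have : |c| ^ 2 ≤ (2 * |m|) ^ 2 := by gcongr
    rw [mul_pow, sq_abs, sq_abs] at this
    linarith
  have hc0 : 1 ≤ 1 + c ^ 2 := by nlinarith [sq_nonneg c]
  have hm0 : 0 < 1 + m ^ 2 := by positivity
  have h3 : (1 + c ^ 2) ^ (s - 1) = (1 + c ^ 2) ^ ((s - 1) / 2) * (1 + c ^ 2) ^ ((s - 1) / 2) := by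
    rw [← Real.rpow_add (by linarith)]; congr 1; ring
  have h4 : (1 + c ^ 2) ^ ((s - 1) / 2) ≤ (1 + c ^ 2) ^ (s / 2) :=
    Real.rpow_le_rpow_of_exponent_le hc0 (by linarith)
  have h5 : (1 + c ^ 2) ^ ((s - 1) / 2) ≤ 4 ^ ((s - 1) / 2) * (1 + m ^ 2) ^ ((s - 1) / 2) := by
    rw [← Real.mul_rpow (by norm_num) hm0.le]
    exact Real.rpow_le_rpow (by linarith) h2 (by linarith)
  have h6 : (4:ℝ) ^ ((s - 1) / 2) ≤ 4 ^ s :=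
    Real.rpow_le_rpow_of_exponent_le (by norm_num) (by linarith)
  have h7 : (1 + m ^ 2) ^ (s / 2) = (1 + m ^ 2) ^ (1 / 2 : ℝ) * (1 + m ^ 2) ^ ((s - 1) / 2) := by
    rw [← Real.rpow_add hm0]; congr 1; ring
  calc |b| * (1 + c ^ 2) ^ (s - 1)
      ≤ (1 + m ^ 2) ^ (1 / 2 : ℝ) * ((4 ^ ((s - 1) / 2) * (1 + m ^ 2) ^ ((s - 1) / 2)) * (1 + c ^ 2) ^ (s / 2)) := by
        rw [h3]; gcongr
    _ ≤ (1 + m ^ 2) ^ (1 / 2 : ℝ) * ((4 ^ s * (1 + m ^ 2) ^ ((s - 1) / 2)) * (1 + c ^ 2) ^ (s / 2)) := by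
        gcongr
    _ = _ := by rw [h7]; ring

/-- norms away from zero frequency -/
def tt (v : FC) : FC := fun k => if k = 0 then 0 else (‖v k‖ : ℂ)

/-- weighted norms -/
def gg (s : ℝ) (v : FC) : FC := fun k => ((((1 + (k:ℝ) ^ 2) ^ (s / 2)) * ‖v k‖ : ℝ) : ℂ)

lemma tt_norm (v : FC) (k : ℤ) : ‖tt v k‖ = if k = 0 then 0 else ‖v k‖ := by
  unfold tt; split_ifs <;> simp

lemma gg_norm (s : ℝ) (v : FC) (k : ℤ) : ‖gg s v k‖ = (1 + (k:ℝ) ^ 2) ^ (s / 2) * ‖v k‖ := by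
  unfold gg; rw [Complex.norm_real, Real.norm_of_nonneg (by positivity)]

lemma gg_sq (s : ℝ) (v : FC) (k : ℤ) : ‖gg s v k‖ ^ 2 = FC.wt s k * ‖v k‖ ^ 2 := by
  rw [gg_norm, mul_pow, ← Real.rpow_two ((1 + (k:ℝ) ^ 2) ^ (s / 2)), ← Real.rpow_mul (by positivity), FC.wt]
  congr 2; ring

lemma tt_RD {v : FC} (hv : RD v) : RD (tt v) := hv.of_le 1 0 (fun k => by
  rw [tt_norm]; split_ifs <;> simp)

lemma gg_RD {s : ℝ} (hs : 0 < s) {v : FC} (hv : RD v) : RD (gg s v) := hv.of_le 1 ⌈2 * (s / 2)⌉₊ (fun k => by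
  rw [gg_norm, one_mul]
  gcongr
  have := wt_le (s := s / 2) (by linarith) k
  unfold FC.wt at this
  rw [abs_of_nonneg (by positivity)] at this
  refine this.trans ?_
  rw [← Real.rpow_natCast]
  exact Real.rpow_le_rpow_of_exponent_le (by linarith [abs_nonneg (k : ℝ)]) (Nat.le_ceil _))

lemma D1_sq_le {v : FC} (hv : RD v) {S : ℝ} (hS : ∀ x, ‖FC.eval (FC.D1 v) x‖ ≤ S) :
    ∑' k, ‖FC.D1 v k‖ ^ 2 ≤ S ^ 2 := by
  have h := parseval hv.D1.summ
  have h1 : ∫ x in (0:ℝ)..(2 * Real.pi), ‖FC.eval (FC.D1 v) x‖ ^ 2 ≤ ∫ x in (0:ℝ)..(2 * Real.pi), S ^ 2 := by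
    apply intervalIntegral.integral_mono_on (by positivity)
    · exact ((eval_cont hv.D1.summ).norm.pow 2).intervalIntegrable _ _
    · exact intervalIntegrable_const
    · intro x _
      have := hS x
      gcongr
  rw [h, intervalIntegral.integral_const, smul_eq_mul, sub_zero] at h1
  exact le_of_mul_le_mul_left h1 (by positivity)

lemma T_bound : ∃ C > (0:ℝ), ∀ v : FC, RD v → ∀ S : ℝ, (∀ x, ‖FC.eval (FC.D1 v) x‖ ≤ S) →
    ∑' k, ‖tt v k‖ ≤ C * S := by
  have hZ : Summable fun k : ℤ => 1 / (k:ℝ) ^ 2 := Real.summable_one_div_int_pow.2 (by norm_num)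
  have hZ0 : 0 ≤ ∑' k : ℤ, 1 / (k:ℝ) ^ 2 := tsum_nonneg fun k => by positivity
  refine ⟨∑' k : ℤ, 1 / (k:ℝ) ^ 2 + 1, by positivity, ?_⟩
  intro v hv S hS
  have hS0 : 0 ≤ S := (norm_nonneg _).trans (hS 0)
  have hD := D1_sq_le hv hS
  have hn : ∀ k : ℤ, ‖FC.D1 v k‖ = |(k:ℝ)| * ‖v k‖ := by
    intro k; simp [FC.D1]
  rcases hS0.eq_or_lt with h0 | h0
  · have : ∀ k, ‖tt v k‖ = 0 := by
      intro k
      have h1 := (hv.D1.sq.le_tsum k (fun _ _ => by positivity)).trans hD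
      rw [← h0] at h1
      have h2 : ‖FC.D1 v k‖ = 0 := by nlinarith [norm_nonneg (FC.D1 v k)]
      rw [tt_norm]; split_ifs with hk
      · rfl
      · rw [hn] at h2
        have : |(k:ℝ)| ≠ 0 := by simpa using hk
        exact (mul_eq_zero.1 h2).resolve_left this
    simp [this, ← h0]
  · have hle : ∀ k, ‖tt v k‖ ≤ S * (1 / (k:ℝ) ^ 2) + S⁻¹ * ‖FC.D1 v k‖ ^ 2 := by
      intro k
      rw [tt_norm]; split_ifs with hk
      · positivity
      · have hk0 : 0 < |(k:ℝ)| := by simpa using hk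
        rw [hn, ← sq_abs (k:ℝ)]
        set a := |(k:ℝ)|
        set n := ‖v k‖
        have e : S * (1 / a ^ 2) + S⁻¹ * (a * n) ^ 2 - n = S * ((1 / a - S⁻¹ * (a * n) / 2) ^ 2) + 3 / 4 * (S⁻¹ * (a * n) ^ 2) := by
          field_simp; ring
        have : 0 ≤ S * ((1 / a - S⁻¹ * (a * n) / 2) ^ 2) + 3 / 4 * (S⁻¹ * (a * n) ^ 2) := by positivity
        linarith
    refine ((tt_RD hv).summ.tsum_le_tsum hle ((hZ.mul_left S).add (hv.D1.sq.mul_left S⁻¹))).trans ?_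
    rw [(hZ.mul_left S).tsum_add (hv.D1.sq.mul_left S⁻¹), tsum_mul_left, tsum_mul_left, add_mul]
    have : S⁻¹ * ∑' k, ‖FC.D1 v k‖ ^ 2 ≤ S := by
      rw [inv_mul_le_iff₀ h0]; linarith
    linarith

lemma rem_term {s : ℝ} (hs : 1 < s) {v : FC} (h0 : (v 0).im = 0) (p : ℤ × ℤ) :
    |(FC.wt s (p.1 + p.2) - |((p.1 + p.2 : ℤ):ℝ)| ^ (2 * s)) * (XX v p).re|
      ≤ s * 4 ^ s * (‖tt v p.1‖ * ‖gg s v p.2‖ * ‖gg s v (p.1 + p.2)‖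
          + ‖tt v p.2‖ * ‖gg s v p.1‖ * ‖gg s v (p.1 + p.2)‖) := by
  obtain ⟨a, b⟩ := p
  simp only
  have hRHS : 0 ≤ s * 4 ^ s * (‖tt v a‖ * ‖gg s v b‖ * ‖gg s v (a + b)‖
          + ‖tt v b‖ * ‖gg s v a‖ * ‖gg s v (a + b)‖) := by positivity
  by_cases ha : a = 0
  · subst ha
    have : (XX v (0, b)).re = 0 := by
      simp only [XX, FC.D1, zero_add]
      have e : v 0 * (Complex.I * b * v b) * (starRingEnd ℂ) (v b) = Complex.I * (((b:ℝ) * ‖v b‖ ^ 2 : ℝ) : ℂ) * v 0 := by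
        push_cast
        rw [← Complex.mul_conj']; ring
      rw [e, mul_assoc, Complex.I_mul_re, Complex.im_ofReal_mul, h0]; simp
    rw [this, mul_zero, abs_zero]
    exact hRHS
  by_cases hb : b = 0
  · subst hb
    have : XX v (a, 0) = 0 := by simp [XX, FC.D1]
    rw [this]; simpa using hRHS
  have hX : |(XX v (a, b)).re| ≤ ‖v a‖ * (|(b:ℝ)| * ‖v b‖) * ‖v (a + b)‖ := by
    refine (Complex.abs_re_le_norm _).trans (le_of_eq ?_)
    simp [XX, FC.D1]
  have hR := r_bound hs (a + b)
  rw [abs_mul]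
  rw [tt_norm, tt_norm, if_neg ha, if_neg hb, gg_norm, gg_norm, gg_norm]
  set c : ℝ := ((a + b : ℤ) : ℝ) with hc
  have hcab : c = a + b := by rw [hc]; push_cast; rfl
  have hcle : |c| ≤ |(a:ℝ)| + |(b:ℝ)| := by rw [hcab]; exact abs_add_le _ _
  set na := ‖v a‖
  set nb := ‖v b‖
  set nc := ‖v (a + b)‖
  have step : |FC.wt s (a + b) - |c| ^ (2 * s)| * |(XX v (a, b)).re|
      ≤ s * (|(b:ℝ)| * (1 + c ^ 2) ^ (s - 1)) * (na * nb * nc) := by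
    calc _ ≤ (s * (1 + c ^ 2) ^ (s - 1)) * (na * (|(b:ℝ)| * nb) * nc) := by gcongr
      _ = _ := by ring
  refine step.trans ?_
  rcases le_total |(a:ℝ)| |(b:ℝ)| with h | h
  · have g := geo_bound hs (m := b) (b := b) (c := c) le_rfl (by linarith)
    calc _ ≤ s * (4 ^ s * ((1 + (b:ℝ) ^ 2) ^ (s / 2) * (1 + c ^ 2) ^ (s / 2))) * (na * nb * nc) := by gcongr
      _ = s * 4 ^ s * (na * ((1 + (b:ℝ) ^ 2) ^ (s / 2) * nb) * ((1 + c ^ 2) ^ (s / 2) * nc)) := by ring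
      _ ≤ _ := by
        gcongr
        have : 0 ≤ nb * ((1 + (a:ℝ) ^ 2) ^ (s / 2) * na) * ((1 + c ^ 2) ^ (s / 2) * nc) := by positivity
        linarith
  · have g := geo_bound hs (m := a) (b := b) (c := c) h (by linarith)
    calc _ ≤ s * (4 ^ s * ((1 + (a:ℝ) ^ 2) ^ (s / 2) * (1 + c ^ 2) ^ (s / 2))) * (na * nb * nc) := by gcongr
      _ = s * 4 ^ s * (nb * ((1 + (a:ℝ) ^ 2) ^ (s / 2) * na) * ((1 + c ^ 2) ^ (s / 2) * nc)) := by ring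
      _ ≤ _ := by
        gcongr
        have : 0 ≤ na * ((1 + (b:ℝ) ^ 2) ^ (s / 2) * nb) * ((1 + c ^ 2) ^ (s / 2) * nc) := by positivity
        linarith

lemma rem_s1 {s : ℝ} (hs0 : 0 < s) {v : FC} (hv : RD v) :
    Summable fun p : ℤ × ℤ => ‖tt v p.1‖ * ‖gg s v p.2‖ * ‖gg s v (p.1 + p.2)‖ := by
  refine (triple_prod_summable (tt_RD hv).summ (gg_RD hs0 hv).summ (gg_RD hs0 hv).summ).congr (fun p => ?_)
  rw [norm_mul, norm_mul, RCLike.norm_conj]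

lemma rem_s2 {s : ℝ} (hs0 : 0 < s) {v : FC} (hv : RD v) :
    Summable fun p : ℤ × ℤ => ‖tt v p.2‖ * ‖gg s v p.1‖ * ‖gg s v (p.1 + p.2)‖ := by
  refine ((Equiv.prodComm ℤ ℤ).summable_iff.2 (rem_s1 hs0 hv)).congr (fun p => ?_)
  simp only [Function.comp, Equiv.prodComm_apply, Prod.fst_swap, Prod.snd_swap, add_comm p.2 p.1]

lemma rem_e2 {s : ℝ} {v : FC} : ∑' p : ℤ × ℤ, ‖tt v p.2‖ * ‖gg s v p.1‖ * ‖gg s v (p.1 + p.2)‖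
      = ∑' p : ℤ × ℤ, ‖tt v p.1‖ * ‖gg s v p.2‖ * ‖gg s v (p.1 + p.2)‖ := by
  rw [← (Equiv.prodComm ℤ ℤ).tsum_eq]
  refine tsum_congr (fun p => ?_)
  simp only [Equiv.prodComm_apply, Prod.fst_swap, Prod.snd_swap, add_comm p.2 p.1]

lemma rem_e1 {s : ℝ} (hs0 : 0 < s) {v : FC} (hv : RD v) {K : ℝ} (hK : ∑' k, ‖tt v k‖ ≤ K) :
    ∑' p : ℤ × ℤ, ‖tt v p.1‖ * ‖gg s v p.2‖ * ‖gg s v (p.1 + p.2)‖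
      ≤ K * ∑' k : ℤ, FC.wt s k * ‖v k‖ ^ 2 := by
  have tR := tt_RD hv
  have gR := gg_RD hs0 hv
  have h := triple_bound tR.summ gR.summ gR.summ (eval_le tR.summ)
  have h1 : ∀ k, tt v k = (‖tt v k‖ : ℂ) := by
    intro k; rw [tt_norm]; unfold tt; split_ifs <;> simp
  have h2 : ∀ k, gg s v k = (‖gg s v k‖ : ℂ) := by
    intro k; rw [gg_norm]; rfl
  have q : ∀ p : ℤ × ℤ, tt v p.1 * gg s v p.2 * (starRingEnd ℂ) (gg s v (p.1 + p.2))
     = ((‖tt v p.1‖ * ‖gg s v p.2‖ * ‖gg s v (p.1 + p.2)‖ : ℝ) : ℂ) := by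
    intro p
    rw [Complex.ofReal_mul, Complex.ofReal_mul, ← h1, ← h2, ← h2]
    congr 1
    rw [h2 (p.1 + p.2), Complex.conj_ofReal]
  rw [tsum_congr q, ← Complex.ofReal_tsum, Complex.norm_real, Real.norm_of_nonneg (tsum_nonneg fun _ => by positivity)] at h
  refine h.trans ?_
  simp_rw [gg_sq]
  have hW : 0 ≤ ∑' k : ℤ, FC.wt s k * ‖v k‖ ^ 2 := tsum_nonneg fun k => by unfold FC.wt; positivity
  have := mul_le_mul_of_nonneg_right hK hW
  linarith

lemma abs_tsum_le {ι : Type*} {f g : ι → ℝ} (h : ∀ i, |f i| ≤ g i) (hg : Summable g) :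
    |∑' i, f i| ≤ ∑' i, g i := by
  have hab := Summable.of_nonneg_of_le (fun _ => abs_nonneg _) h hg
  exact (norm_tsum_le_tsum_norm (f := f) hab).trans (hab.tsum_le_tsum h hg)

lemma rem_bound {s : ℝ} (hs : 1 < s) : ∃ C > (0:ℝ), ∀ v : FC, RD v → (v 0).im = 0 → ∀ S : ℝ,
    (∀ x, ‖FC.eval (FC.D1 v) x‖ ≤ S) →
    |∑' p : ℤ × ℤ, (FC.wt s (p.1 + p.2) - |((p.1 + p.2 : ℤ) : ℝ)| ^ (2 * s)) * (XX v p).re|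
      ≤ C * S * ∑' k : ℤ, FC.wt s k * ‖v k‖ ^ 2 := by
  obtain ⟨C, hC, hT⟩ := T_bound
  refine ⟨2 * (s * 4 ^ s) * C, by positivity, ?_⟩
  intro v hv hr S hS
  have hs0 : 0 < s := by linarith
  have s1 := rem_s1 hs0 hv
  have s2 := rem_s2 hs0 hv
  have e1 := rem_e1 hs0 hv (hT v hv S hS)
  refine (abs_tsum_le (rem_term hs hr) ((s1.add s2).mul_left (s * 4 ^ s))).trans ?_
  rw [tsum_mul_left, s1.tsum_add s2, rem_e2]
  have hp : 0 ≤ s * 4 ^ s := by positivity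
  have := mul_le_mul_of_nonneg_left e1 hp
  linarith

lemma energy_bound {s : ℝ} (hs : 1 < s) : ∃ C > (0:ℝ), ∀ (v U : FC) (S : ℝ), Good v U S →
    |∑' p : ℤ × ℤ, FC.wt s (p.1 + p.2) * (XX v p).re|
      ≤ C * S * ∑' k : ℤ, FC.wt s k * ‖U k‖ ^ 2 := by
  obtain ⟨C1, hC1, h1⟩ := hom_bound hs
  obtain ⟨C2, hC2, h2⟩ := rem_bound hs
  refine ⟨C1 + C2, by positivity, ?_⟩
  intro v U S hg
  have hv := hg.rd
  have hS := hg.sup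
  have hs0 : 0 < s := by linarith
  have hS0 : 0 ≤ S := (norm_nonneg _).trans (hS 0)
  have a1 := h1 v U S hg
  have a2 := h2 v hv hg.v0 S hS
  have sm : ∀ W : ℤ → ℝ, (∀ k : ℤ, |W k| ≤ (1 + |(k:ℝ)|) ^ (2 * s)) →
      Summable fun p : ℤ × ℤ => W (p.1 + p.2) * (XX v p).re := by
    intro W hW
    refine Summable.of_norm_bounded (weight_summable' hv hW) (fun p => ?_)
    rw [norm_mul, Real.norm_eq_abs, Real.norm_eq_abs]
    gcongr
    exact Complex.abs_re_le_norm _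
  have b1 := sm _ (hom_le hs0)
  have b2 := sm _ (wt_le hs0)
  have b3 : ∑' p : ℤ × ℤ, (FC.wt s (p.1 + p.2) - |((p.1 + p.2 : ℤ) : ℝ)| ^ (2 * s)) * (XX v p).re
      = ∑' p : ℤ × ℤ, FC.wt s (p.1 + p.2) * (XX v p).re
        - ∑' p : ℤ × ℤ, |((p.1 + p.2 : ℤ) : ℝ)| ^ (2 * s) * (XX v p).re := by
    rw [← b2.tsum_sub b1]; congr 1; ext p; ring
  have c1 : ∑' k : ℤ, |(k:ℝ)| ^ (2 * s) * ‖U k‖ ^ 2 ≤ ∑' k : ℤ, FC.wt s k * ‖U k‖ ^ 2 := by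
    have hA : ∀ k : ℤ, |(k:ℝ)| ^ (2 * s) ≤ FC.wt s k := by
      intro k
      unfold FC.wt
      rw [Real.rpow_mul (abs_nonneg _), Real.rpow_two, sq_abs]
      gcongr
      linarith
    have hwt : ∀ k : ℤ, 0 ≤ FC.wt s k := fun k => by unfold FC.wt; positivity
    refine Summable.tsum_le_tsum (fun k => ?_) ?_ ?_
    · gcongr; exact hA k
    · exact (hom_sq_summable hg.rdU (hom_le hs0)).congr (fun k => by rw [abs_of_nonneg (a := |(k : ℝ)| ^ (2 * s)) (by positivity)])
    · exact (hom_sq_summable hg.rdU (wt_le hs0)).congr (fun k => by rw [abs_of_nonneg (hwt k)])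
  have hwt : ∀ k : ℤ, 0 ≤ FC.wt s k := fun k => by unfold FC.wt; positivity
  have c2 : ∑' k : ℤ, FC.wt s k * ‖v k‖ ^ 2 ≤ ∑' k : ℤ, FC.wt s k * ‖U k‖ ^ 2 := by
    refine Summable.tsum_le_tsum (fun k => ?_) ?_ ?_
    · have := hg.le k
      have := hwt k
      gcongr
    · exact (hom_sq_summable hv (wt_le hs0)).congr (fun k => by rw [abs_of_nonneg (hwt k)])
    · exact (hom_sq_summable hg.rdU (wt_le hs0)).congr (fun k => by rw [abs_of_nonneg (hwt k)])
  rw [b3] at a2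
  have a3 : C1 * S * ∑' k : ℤ, |(k:ℝ)| ^ (2 * s) * ‖U k‖ ^ 2 ≤ C1 * S * ∑' k : ℤ, FC.wt s k * ‖U k‖ ^ 2 := by
    gcongr
  have a4 : C2 * S * ∑' k : ℤ, FC.wt s k * ‖v k‖ ^ 2 ≤ C2 * S * ∑' k : ℤ, FC.wt s k * ‖U k‖ ^ 2 := by
    gcongr
  have a5 := a1.trans a3
  have a6 := a2.trans a4
  rw [add_mul, add_mul]
  rw [abs_le] at a5 a6 ⊢
  constructor <;> linarith

open scoped FourierTransform SchwartzMap in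
lemma moll_repr (φ : 𝓢(ℝ, ℂ)) : ∃ j : 𝓢(ℝ, ℂ), ∀ (ε : ℝ) (F : FC), (Summable fun k => ‖F k‖) → ∀ x,
    FC.eval (fun k => φ (ε * k) * F k) x = ∫ y, j y * FC.eval F (x - 2 * Real.pi * ε * y) := by
  refine ⟨𝓕⁻ φ, ?_⟩
  set j := 𝓕⁻ φ with hj
  have hφ : ∀ ξ : ℝ, φ ξ = ∫ y : ℝ, j y * Complex.exp (((-2 * Real.pi * (y * ξ) : ℝ) : ℂ) * Complex.I) := by
    intro ξ
    have h1 : 𝓕 j = φ := FourierInvPair.fourier_fourierInv_eq φ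
    rw [← h1, SchwartzMap.fourier_coe, Real.fourier_eq']
    congr 1; ext y
    rw [smul_eq_mul, mul_comm]
    congr 4
    simp [mul_comm]
  intro ε F hF x
  have e : ∀ (k : ℤ), (φ (ε * k) * F k) * ch k x = ∫ y, j y * (F k * ch k (x - 2 * Real.pi * ε * y)) := by
    intro k
    rw [hφ, mul_assoc, ← integral_mul_const]
    congr 1; ext y
    have : ch k (x - 2 * Real.pi * ε * y) = Complex.exp (((-2 * Real.pi * (y * (ε * k)) : ℝ) : ℂ) * Complex.I) * ch k x := by
      unfold ch
      rw [← Complex.exp_add]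
      congr 1; push_cast; ring
    rw [this]; ring
  have hc : ∀ k : ℤ, Continuous fun y : ℝ => F k * ch k (x - 2 * Real.pi * ε * y) := by
    intro k; unfold ch; fun_prop
  have hn : ∀ (k : ℤ) (y : ℝ), ‖j y * (F k * ch k (x - 2 * Real.pi * ε * y))‖ = ‖F k‖ * ‖j y‖ := by
    intro k y; rw [norm_mul, norm_mul, ch_norm]; ring
  rw [eval_eq, tsum_congr e, integral_tsum_of_summable_integral_norm]
  · congr 1; ext y
    rw [eval_eq, tsum_mul_left]
  · intro k
    refine Integrable.mono' (j.integrable.norm.const_mul ‖F k‖)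
      (j.continuous.mul (hc k)).aestronglyMeasurable (Filter.Eventually.of_forall fun y => (hn k y).le)
  · simp_rw [hn, integral_const_mul]
    exact hF.mul_right _

lemma eval_deriv' {v : FC} (hv : Summable fun k => ‖v k‖) (hv' : Summable fun k => ‖FC.D1 v k‖) (x : ℝ) :
    HasDerivAt (FC.eval v) (FC.eval (FC.D1 v) x) x := by
  have h1 : ∀ (k : ℤ) (y : ℝ), HasDerivAt (fun y => v k * ch k y) (FC.D1 v k * ch k y) y := by
    intro k y
    have h2 : HasDerivAt (fun y : ℝ => Complex.I * (k : ℂ) * (y : ℂ)) (Complex.I * (k : ℂ)) y := by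
      simpa using (Complex.ofRealCLM.hasDerivAt (x := y)).const_mul (Complex.I * (k : ℂ))
    have h3 := (h2.cexp).const_mul (v k)
    refine h3.congr_deriv ?_
    simp only [FC.D1, ch]; ring
  exact hasDerivAt_tsum (u := fun k => ‖FC.D1 v k‖) hv' h1 (fun k y => by simp [ch_norm])
    (y₀ := 0) (eval_summable hv 0) x

lemma eval_lip {v : FC} (hv : Summable fun k => ‖v k‖) (hv' : Summable fun k => ‖FC.D1 v k‖) {S : ℝ}
    (hS : ∀ x, ‖FC.eval (FC.D1 v) x‖ ≤ S) (x y : ℝ) : ‖FC.eval v y - FC.eval v x‖ ≤ S * |y - x| := by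
  have := Convex.norm_image_sub_le_of_norm_hasDerivWithin_le (f := FC.eval v) (s := Set.univ)
    (x := x) (y := y)
    (fun y _ => (eval_deriv' hv hv' y).hasDerivWithinAt) (fun y _ => hS y) convex_univ trivial trivial
  simpa using this

lemma moll_bound (φ : SchwartzMap ℝ ℂ) : ∃ K > (0:ℝ), 
    (∀ (ε : ℝ) (F : FC) (S : ℝ), (Summable fun k => ‖F k‖) → (∀ x, ‖FC.eval F x‖ ≤ S) → ∀ x,
      ‖FC.eval (fun k => φ (ε * k) * F k) x‖ ≤ K * S) ∧
    (∀ (ε : ℝ) (F : FC) (S : ℝ), 0 < ε → (Summable fun k => ‖F k‖) → (Summable fun k => ‖FC.D1 F k‖) →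
      (∀ x, ‖FC.eval (FC.D1 F) x‖ ≤ S) → ∀ x,
      ‖FC.eval (fun k => φ (ε * k) * F k) x - FC.eval (fun k => φ (-ε * k) * F k) x‖ ≤ ε * (K * S)) := by
  obtain ⟨j, hj⟩ := moll_repr φ
  have i1 := j.integrable (μ := volume)
  have i2 := j.integrable_pow_mul volume 1
  set K1 := ∫ y, ‖j y‖ with hK1
  set K2 := ∫ y : ℝ, ‖y‖ ^ 1 * ‖j y‖ with hK2
  have hK1' : 0 ≤ K1 := integral_nonneg fun _ => by positivity
  have hK2' : 0 ≤ K2 := integral_nonneg fun _ => by positivity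
  have hpi := Real.pi_pos
  have prodInt : ∀ (ε x S : ℝ) (F : FC), (Summable fun k => ‖F k‖) → (∀ x, ‖FC.eval F x‖ ≤ S) →
      Integrable fun y => j y * FC.eval F (x - 2 * Real.pi * ε * y) := by
    intro ε x S F hF hS
    refine Integrable.mono' (i1.norm.const_mul S) ?_ (Filter.Eventually.of_forall fun y => ?_)
    · exact (j.continuous.mul ((eval_cont hF).comp (by fun_prop))).aestronglyMeasurable
    · rw [norm_mul, mul_comm]; gcongr; exact hS _
  refine ⟨K1 + 4 * Real.pi * K2 + 1, by positivity, ?_, ?_⟩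
  · intro ε F S hF hS x
    have hS0 : 0 ≤ S := (norm_nonneg _).trans (hS 0)
    rw [hj ε F hF x]
    calc _ ≤ ∫ y, S * ‖j y‖ := by
          refine norm_integral_le_of_norm_le (i1.norm.const_mul S) (Filter.Eventually.of_forall fun y => ?_)
          rw [norm_mul, mul_comm]; gcongr; exact hS _
      _ = K1 * S := by rw [integral_const_mul, mul_comm]
      _ ≤ _ := by gcongr; nlinarith [mul_nonneg hpi.le hK2']
  · intro ε F S hε hF hF' hS x
    have hS0 : 0 ≤ S := (norm_nonneg _).trans (hS 0)
    rw [hj ε F hF x, hj (-ε) F hF x, ← integral_sub (prodInt _ _ _ _ hF (eval_le hF)) (prodInt _ _ _ _ hF (eval_le hF))]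
    calc _ ≤ ∫ y : ℝ, (4 * Real.pi * ε * S) * (‖y‖ ^ 1 * ‖j y‖) := by
          refine norm_integral_le_of_norm_le (i2.const_mul _) (Filter.Eventually.of_forall fun y => ?_)
          rw [← mul_sub, norm_mul]
          have := eval_lip hF hF' hS (x - 2 * Real.pi * (-ε) * y) (x - 2 * Real.pi * ε * y)
          have e : |x - 2 * Real.pi * ε * y - (x - 2 * Real.pi * (-ε) * y)| = 4 * Real.pi * ε * ‖y‖ := by
            rw [show x - 2 * Real.pi * ε * y - (x - 2 * Real.pi * (-ε) * y) = -(4 * Real.pi * ε * y) by ring, abs_neg, abs_mul,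
              abs_of_pos (by positivity), Real.norm_eq_abs]
          rw [e] at this
          calc _ ≤ ‖j y‖ * (S * (4 * Real.pi * ε * ‖y‖)) := by gcongr
            _ = _ := by ring
      _ = ε * (4 * Real.pi * K2 * S) := by rw [integral_const_mul]; ring
      _ ≤ _ := by gcongr; linarith

lemma summable_ite_zero (c : ℝ) : Summable fun k : ℤ => if k = 0 then c else 0 :=
  (hasSum_ite_eq 0 c).summable

lemma RD_of_bdd {c : FC} (h : ∀ n : ℕ, ∃ C, ∀ k : ℤ, (1 + |(k:ℝ)|) ^ n * ‖c k‖ ≤ C) : RD c := by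
  intro n
  obtain ⟨C, hC⟩ := h (n + 2)
  have hC0 : 0 ≤ C := le_trans (by positivity) (hC 0)
  have hZ : Summable fun k : ℤ => 1 / (k:ℝ) ^ 2 := Real.summable_one_div_int_pow.2 (by norm_num)
  refine Summable.of_nonneg_of_le (fun _ => by positivity) (fun k => ?_)
    ((hZ.add (summable_ite_zero 1)).mul_left C)
  have h1 : (1 + |(k:ℝ)|) ^ n * ‖c k‖ ≤ C * (1 / (1 + |(k:ℝ)|) ^ 2) := by
    rw [mul_one_div, le_div_iff₀ (by positivity)]
    calc _ = (1 + |(k:ℝ)|) ^ (n + 2) * ‖c k‖ := by ring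
      _ ≤ C := hC k
  refine h1.trans ?_
  gcongr
  split_ifs with hk
  · subst hk; simp
  · have : 0 < |(k:ℝ)| := by simpa using hk
    rw [add_zero, ← sq_abs (k:ℝ)]
    gcongr
    linarith

lemma jdecay (f : SchwartzMap ℝ ℝ) (n : ℕ) : ∃ C > (0:ℝ), ∀ x : ℝ, (1 + |x|) ^ n * |f x| ≤ C := by
  obtain ⟨C1, h1, H1⟩ := f.decay 0 0
  obtain ⟨C2, h2, H2⟩ := f.decay n 0
  refine ⟨2 ^ n * (C1 + C2), by positivity, fun x => ?_⟩
  have a := H1 x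
  have b := H2 x
  rw [norm_iteratedFDeriv_zero, Real.norm_eq_abs] at a b
  rw [Real.norm_eq_abs] at b
  rw [pow_zero, one_mul, Real.norm_eq_abs] at a
  have : (1 + |x|) ^ n ≤ 2 ^ n * (1 + |x| ^ n) := by
    rcases le_total |x| 1 with h | h
    · calc (1 + |x|) ^ n ≤ 2 ^ n := by gcongr; linarith
        _ ≤ _ := by nlinarith [pow_nonneg (abs_nonneg x) n, pow_pos (two_pos (α := ℝ)) n]
    · calc (1 + |x|) ^ n ≤ (2 * |x|) ^ n := by gcongr; linarith
        _ ≤ _ := by rw [mul_pow]; gcongr; linarith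
  calc _ ≤ 2 ^ n * (1 + |x| ^ n) * |f x| := by gcongr
    _ = 2 ^ n * (|f x| + |x| ^ n * |f x|) := by ring
    _ ≤ _ := by gcongr

lemma jmol_RD (f : SchwartzMap ℝ ℝ) {ε : ℝ} (hε : ε ≠ 0) {u : FC} {B : ℝ} (hu : ∀ k, ‖u k‖ ≤ B) :
    RD (FC.Jmol f ε u) := by
  have hB : 0 ≤ B := (norm_nonneg _).trans (hu 0)
  apply RD_of_bdd
  intro n
  obtain ⟨C, hC, h⟩ := jdecay f n
  have he : 0 < |ε| := abs_pos.2 hε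
  refine ⟨(1 + |ε|⁻¹) ^ n * C * B, fun k => ?_⟩
  have h1 : 1 + |(k:ℝ)| ≤ (1 + |ε|⁻¹) * (1 + |ε * k|) := by
    rw [abs_mul]
    have : |ε|⁻¹ * (|ε| * |(k:ℝ)|) = |(k:ℝ)| := by field_simp
    have : 0 ≤ |ε|⁻¹ := by positivity
    have : 0 ≤ |ε| * |(k:ℝ)| := by positivity
    nlinarith
  have h2 : ‖FC.Jmol f ε u k‖ = |f (ε * k)| * ‖u k‖ := by
    simp [FC.Jmol, FC.mult]
  rw [h2]
  calc _ ≤ ((1 + |ε|⁻¹) * (1 + |ε * k|)) ^ n * (|f (ε * k)| * B) := by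
        gcongr; exact hu k
    _ = (1 + |ε|⁻¹) ^ n * ((1 + |ε * k|) ^ n * |f (ε * k)|) * B := by rw [mul_pow]; ring
    _ ≤ _ := by gcongr; exact h _

lemma D1_norm (u : FC) (k : ℤ) : ‖FC.D1 u k‖ = |(k:ℝ)| * ‖u k‖ := by simp [FC.D1]

lemma D1_summable {s : ℝ} (hs : 3 / 2 < s) {u : FC} (hu : FC.memHs s u) : Summable fun k => ‖FC.D1 u k‖ := by
  have hZ := Real.summable_abs_int_rpow (b := 2 * s - 2) (by linarith)
  refine Summable.of_nonneg_of_le (fun _ => norm_nonneg _) (fun k => ?_) (hu.add hZ)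
  rw [D1_norm]
  by_cases hk : k = 0
  · subst hk
    have : 0 ≤ FC.wt s 0 := by unfold FC.wt; positivity
    simp; positivity
  have hk0 : 0 < |(k:ℝ)| := by simpa using hk
  have hw : |(k:ℝ)| ^ (2 * s) ≤ FC.wt s k := by
    unfold FC.wt
    rw [Real.rpow_mul (abs_nonneg _), Real.rpow_two, sq_abs]
    gcongr
    linarith
  set a := |(k:ℝ)|
  have e : a ^ (2 * s) * a ^ (-(2 * s - 2)) = a ^ 2 := by
    rw [← Real.rpow_add hk0, ← Real.rpow_natCast]; congr 1; push_cast; ring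
  have p1 : 0 < a ^ (2 * s) := by positivity
  have p2 : 0 < a ^ (-(2 * s - 2)) := by positivity
  have h3 : a * ‖u k‖ ≤ a ^ (2 * s) * ‖u k‖ ^ 2 + a ^ (-(2 * s - 2)) := by
    have hsq : (a * ‖u k‖) ^ 2 ≤ (a ^ (2 * s) * ‖u k‖ ^ 2 + a ^ (-(2 * s - 2))) ^ 2 := by
      rw [mul_pow, ← e]
      have : 0 ≤ (a ^ (2 * s) * ‖u k‖ ^ 2) * a ^ (-(2 * s - 2)) := by positivity
      nlinarith [sq_nonneg (a ^ (2 * s) * ‖u k‖ ^ 2), sq_nonneg (a ^ (-(2 * s - 2)))]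
    exact (pow_le_pow_iff_left₀ (by positivity) (by positivity) (by norm_num)).1 hsq
  refine h3.trans ?_
  gcongr

lemma summable_of_D1 {u : FC} (h : Summable fun k => ‖FC.D1 u k‖) : Summable fun k => ‖u k‖ := by
  refine Summable.of_nonneg_of_le (fun _ => norm_nonneg _) (fun k => ?_) (h.add (summable_ite_zero ‖u 0‖))
  rw [D1_norm]
  split_ifs with hk
  · subst hk; simp
  · have : (1:ℝ) ≤ |(k:ℝ)| := by
      rw [← Int.cast_abs]; exact_mod_cast Int.one_le_abs hk
    nlinarith [norm_nonneg (u k)]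

lemma D1_mult (φ : ℤ → ℂ) (u : FC) : FC.D1 (fun k => φ k * u k) = fun k => φ k * FC.D1 u k := by
  ext k; simp only [FC.D1]; ring

lemma eval_smul_add {f g : FC} (hf : RD f) (hg : RD g) (c d : ℂ) (x : ℝ) :
    FC.eval (fun k => c * f k + d * g k) x = c * FC.eval f x + d * FC.eval g x := by
  rw [eval_eq, eval_eq, eval_eq, ← tsum_mul_left, ← tsum_mul_left,
    ← ((eval_summable hf.summ x).mul_left c).tsum_add ((eval_summable hg.summ x).mul_left d)]
  refine tsum_congr (fun k => ?_)
  ring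

lemma good_exists (jhat : SchwartzMap ℝ ℝ) (hjone : ∀ x : ℝ, |x| ≤ 1 → jhat x = 1) :
    ∃ K > (0:ℝ), ∀ (ε : ℝ), 0 < ε → ∀ (u : FC) (S : ℝ), (Summable fun k => ‖u k‖) →
      (Summable fun k => ‖FC.D1 u k‖) → FC.isReal u → (∀ x, ‖FC.eval (FC.D1 u) x‖ ≤ S) →
      Good (FC.Jmol jhat ε u) (fun k => ((1 + ε * |(k:ℝ)| : ℝ) : ℂ) * FC.Jmol jhat ε u k) (K * S) := by
  let φ : SchwartzMap ℝ ℂ := SchwartzMap.postcompCLM (𝕜 := ℝ) Complex.ofRealCLM jhat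
  have hφ : ∀ x, φ x = (jhat x : ℂ) := fun x => rfl
  obtain ⟨K, hK, m1, m2⟩ := moll_bound φ
  refine ⟨K, hK, ?_⟩
  intro ε hε u S su su' hr hS
  have hJ : ∀ δ, FC.Jmol jhat δ u = fun k : ℤ => φ (δ * k) * u k := fun δ => rfl
  have hB : ∀ k, ‖u k‖ ≤ ∑' k, ‖u k‖ := fun k => su.le_tsum k (fun _ _ => norm_nonneg _)
  have hv : RD (FC.Jmol jhat ε u) := jmol_RD jhat hε.ne' hB
  have hm : RD (FC.Jmol jhat (-ε) u) := jmol_RD jhat (neg_ne_zero.2 hε.ne') hB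
  have hsup : ∀ δ x, ‖FC.eval (FC.D1 (FC.Jmol jhat δ u)) x‖ ≤ K * S := by
    intro δ x
    rw [hJ, D1_mult (fun k => φ (δ * k))]
    exact m1 δ _ S su' hS x
  have hUn : ∀ k : ℤ, ‖((1 + ε * |(k:ℝ)| : ℝ) : ℂ) * FC.Jmol jhat ε u k‖ = (1 + ε * |(k:ℝ)|) * ‖FC.Jmol jhat ε u k‖ := by
    intro k
    rw [norm_mul, Complex.norm_real, Real.norm_of_nonneg (by positivity)]
  have half : ‖(1/2:ℂ)‖ = 1 / 2 := by simp
  have hlin : ∀ c : ℂ, RD (fun k => (1/2:ℂ) * FC.Jmol jhat ε u k + c * FC.Jmol jhat (-ε) u k) := by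
    intro c n
    have a1 := (hv.mulbdd (m := fun _ => (1/2:ℂ)) (C := _) (fun _ => le_rfl)) n
    have a2 := (hm.mulbdd (m := fun _ => c) (C := _) (fun _ => le_rfl)) n
    refine Summable.of_nonneg_of_le (fun _ => by positivity) (fun k => ?_) (a1.add a2)
    rw [← mul_add]
    gcongr
    exact norm_add_le _ _
  refine ⟨hv, ?_, ?_, hsup ε, ?_, ?_⟩
  · refine hv.of_le (1 + ε) 1 (fun k => ?_)
    rw [hUn]
    gcongr
    nlinarith [abs_nonneg (k:ℝ)]
  · have h0 : (u 0).im = 0 := by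
      have := hr 0
      rw [neg_zero] at this
      exact Complex.conj_eq_iff_im.1 this.symm
    simp [FC.Jmol, FC.mult, h0]
  · intro k
    rw [hUn]
    have : 0 ≤ ε * |(k:ℝ)| * ‖FC.Jmol jhat ε u k‖ := by positivity
    linarith
  · refine ⟨fun k => (1/2:ℂ) * FC.Jmol jhat ε u k + (1/2:ℂ) * FC.Jmol jhat (-ε) u k,
      fun k => (1/2:ℂ) * FC.Jmol jhat ε u k + (-(1/2):ℂ) * FC.Jmol jhat (-ε) u k, ε, hε, hlin _, hlin _, ?_, ?_, ?_, ?_, ?_⟩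
    · intro k
      simp only [FC.Jmol, FC.mult, hr k, map_add, map_mul, Complex.conj_ofReal]
      push_cast
      have e1 : ε * -(k:ℝ) = -ε * k := by ring
      have e2 : -ε * -(k:ℝ) = ε * k := by ring
      rw [e1, e2]
      have e3 : (starRingEnd ℂ) (1/2) = 1/2 := by
        have := Complex.conj_ofReal (1/2)
        push_cast at this
        exact this
      rw [e3]; ring
    · intro k; ring
    · intro x
      have : FC.D1 (fun k => (1/2:ℂ) * FC.Jmol jhat ε u k + (1/2:ℂ) * FC.Jmol jhat (-ε) u k)
        = fun k => (1/2:ℂ) * FC.D1 (FC.Jmol jhat ε u) k + (1/2:ℂ) * FC.D1 (FC.Jmol jhat (-ε) u) k := by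
        ext k; simp only [FC.D1]; ring
      rw [this, eval_smul_add hv.D1 hm.D1]
      refine (norm_add_le _ _).trans ?_
      rw [norm_mul, norm_mul, half]
      have := hsup ε x
      have := hsup (-ε) x
      linarith
    · intro x
      rw [eval_smul_add hv hm]
      have h := m2 ε u S hε su su' hS x
      rw [← hJ, ← hJ] at h
      have e : (1/2:ℂ) * FC.eval (FC.Jmol jhat ε u) x + (-(1/2):ℂ) * FC.eval (FC.Jmol jhat (-ε) u) x
        = (1/2:ℂ) * (FC.eval (FC.Jmol jhat ε u) x - FC.eval (FC.Jmol jhat (-ε) u) x) := by ring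
      rw [e, norm_mul, half]
      linarith
    · intro k
      rw [hUn]
      nlinarith [norm_nonneg (FC.Jmol jhat ε u k)]

lemma inner_eq {s : ℝ} (hs : 0 < s) (jhat : ℝ → ℝ) (ε : ℝ) (u : FC) (hv : RD (FC.Jmol jhat ε u)) :
    FC.hsInner s (FC.Jmol jhat ε (FC.mul (FC.Jmol jhat ε u) (FC.D1 (FC.Jmol jhat ε u)))) u
      = ∑' p : ℤ × ℤ, FC.wt s (p.1 + p.2) * (XX (FC.Jmol jhat ε u) p).re := by
  set v := FC.Jmol jhat ε u with hvd
  have sm : Summable fun p : ℤ × ℤ => (FC.wt s (p.1 + p.2) : ℂ) * XX v p := by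
    refine Summable.of_norm ((weight_summable' hv (wt_le hs)).congr (fun p => ?_))
    rw [norm_mul, Complex.norm_real, Real.norm_eq_abs]
  let σ : ℤ × ℤ ≃ ℤ × ℤ :=
    { toFun := fun p => (p.2, p.1 - p.2)
      invFun := fun p => (p.1 + p.2, p.1)
      left_inv := fun p => by ext <;> simp
      right_inv := fun p => by ext <;> simp }
  have sm2 := σ.summable_iff.2 sm
  have e1 : ∑' p : ℤ × ℤ, FC.wt s (p.1 + p.2) * (XX v p).re = (∑' p : ℤ × ℤ, (FC.wt s (p.1 + p.2) : ℂ) * XX v p).re := by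
    rw [Complex.re_tsum sm]
    refine tsum_congr (fun p => ?_)
    rw [Complex.re_ofReal_mul]
  have e0 := (σ.tsum_eq (fun p : ℤ × ℤ => (FC.wt s (p.1 + p.2) : ℂ) * XX v p)).symm.trans sm2.tsum_prod
  rw [e1, e0]
  unfold FC.hsInner
  congr 1
  refine tsum_congr (fun k => ?_)
  have e2 : ∀ j : ℤ, ((fun p : ℤ × ℤ => (FC.wt s (p.1 + p.2) : ℂ) * XX v p) ∘ σ) (k, j)
      = (FC.wt s k : ℂ) * (starRingEnd ℂ) (v k) * (v j * FC.D1 v (k - j)) := by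
    intro j
    simp only [Function.comp, σ, Equiv.coe_fn_mk, XX, add_sub_cancel]
    ring
  refine Eq.trans ?_ (tsum_congr e2).symm
  rw [tsum_mul_left]
  have e3 : (starRingEnd ℂ) (v k) = (jhat (ε * k) : ℂ) * (starRingEnd ℂ) (u k) := by
    rw [hvd]; simp [FC.Jmol, FC.mult]
  rw [e3]
  simp only [FC.Jmol, FC.mult, FC.mul]
  ring

end Helpers

/-- Let `s > 3/2` and let `j` be a fixed Schwartz mollifier, i.e. `ĵ` is a
Schwartz function with `0 ≤ ĵ ≤ 1` and `ĵ(x) = 1` for `|x| ≤ 1`.  There is `C = C(s) > 0`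
such that for all `ε ∈ (0,1)` and `u ∈ H^s(𝕋)`:
`|(J_ε(J_ε u · ∂ₓ J_ε u), u)_{H^s}| ≤ C ‖∂ₓu‖_{L^∞} ‖u‖²_{H^s}`. -/
theorem statement12 (s : ℝ) (hs : 3 / 2 < s) (jhat : SchwartzMap ℝ ℝ)
    (hj0 : ∀ x : ℝ, 0 ≤ jhat x) (hj1 : ∀ x : ℝ, jhat x ≤ 1)
    (hjone : ∀ x : ℝ, |x| ≤ 1 → jhat x = 1) :
    ∃ C > (0 : ℝ), ∀ ε : ℝ, ε ∈ Set.Ioo (0 : ℝ) 1 → ∀ u : FC,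
      FC.memHs s u → FC.isReal u →
      |FC.hsInner s
          (FC.Jmol (⇑jhat) ε (FC.mul (FC.Jmol (⇑jhat) ε u) (FC.D1 (FC.Jmol (⇑jhat) ε u)))) u|
        ≤ C * FC.linfty (FC.D1 u) * FC.hsNorm s u ^ 2 := by
  obtain ⟨C, hC, hE⟩ := energy_bound (s := s) (by linarith)
  obtain ⟨K, hK, hG⟩ := good_exists jhat hjone
  obtain ⟨A, hA, hAj⟩ := jdecay jhat 1
  refine ⟨C * K * A ^ 2, by positivity, ?_⟩
  intro ε hε u hu hr
  have su' := D1_summable hs hu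
  have su := summable_of_D1 su'
  have hS : ∀ x, ‖FC.eval (FC.D1 u) x‖ ≤ FC.linfty (FC.D1 u) := by
    intro x
    refine le_ciSup (f := fun x => ‖FC.eval (FC.D1 u) x‖) ⟨∑' k, ‖FC.D1 u k‖, ?_⟩ x
    rintro _ ⟨y, rfl⟩
    exact eval_le su' y
  set S := FC.linfty (FC.D1 u)
  have hS0 : 0 ≤ S := (norm_nonneg _).trans (hS 0)
  have g := hG ε hε.1 u S su su' hr hS
  have e := hE _ _ _ g
  rw [inner_eq (by linarith) jhat ε u g.rd]
  refine e.trans ?_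
  have hwt : ∀ k : ℤ, 0 ≤ FC.wt s k := fun k => by unfold FC.wt; positivity
  have hn : FC.hsNorm s u ^ 2 = ∑' k : ℤ, FC.wt s k * ‖u k‖ ^ 2 := by
    unfold FC.hsNorm
    exact Real.sq_sqrt (tsum_nonneg fun k => mul_nonneg (hwt k) (by positivity))
  have hle : ∀ k : ℤ, FC.wt s k * ‖((1 + ε * |(k:ℝ)| : ℝ) : ℂ) * FC.Jmol jhat ε u k‖ ^ 2
      ≤ A ^ 2 * (FC.wt s k * ‖u k‖ ^ 2) := by
    intro k
    have h1 : ‖((1 + ε * |(k:ℝ)| : ℝ) : ℂ) * FC.Jmol jhat ε u k‖ ≤ A * ‖u k‖ := by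
      have hε0 := hε.1
      have h2 := hAj (ε * k)
      rw [pow_one, abs_mul ε, abs_of_pos hε0] at h2
      simp only [FC.Jmol, FC.mult, norm_mul, Complex.norm_real, Real.norm_eq_abs]
      rw [abs_of_nonneg (a := 1 + ε * |(k:ℝ)|) (by positivity), ← mul_assoc]
      gcongr
    have := hwt k
    calc _ ≤ FC.wt s k * (A * ‖u k‖) ^ 2 := by gcongr
      _ = _ := by ring
  have hu2 : Summable fun k : ℤ => A ^ 2 * (FC.wt s k * ‖u k‖ ^ 2) := Summable.mul_left _ hu
  have hle2 := Summable.tsum_le_tsum hle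
    (Summable.of_nonneg_of_le (fun k => mul_nonneg (hwt k) (by positivity)) hle hu2) hu2
  rw [tsum_mul_left, ← hn] at hle2
  calc _ ≤ C * (K * S) * (A ^ 2 * FC.hsNorm s u ^ 2) := by gcongr
    _ = _ := by ring
end
end

section
/- Let s > 5/2. There is a constant C = C(s) > 0 such that for all ε ∈ (0,1), all u ∈ H^s(𝕋) and all η ∈ H^{s-1}(𝕋): |(J_ε(J_ε u · ∂_x J_ε η), η)_{H^{s-1}}| ≤ C (‖∂_x u‖_{L^∞} + ‖∂_x η‖_{L^∞}) (‖u‖²_{H^s} + ‖η‖²_{H^{s-1}}). -/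
noncomputable section
open scoped BigOperators

namespace S13
open MeasureTheory Set

def Toep (V : ℤ → ℂ) (M : ℝ) : Prop :=
  ∀ (A B : Finset ℤ) (f g : ℤ → ℂ),
    ‖∑ k ∈ A, ∑ l ∈ B, V (k - l) * f l * (starRingEnd ℂ) (g k)‖
      ≤ M / 2 * (∑ l ∈ B, ‖f l‖ ^ 2 + ∑ k ∈ A, ‖g k‖ ^ 2)

def ex (k : ℤ) (x : ℝ) : ℂ := Complex.exp (Complex.I * (k : ℂ) * (x : ℂ))

lemma ex_add (k l : ℤ) (x : ℝ) : ex (k + l) x = ex k x * ex l x := by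
  simp only [ex, ← Complex.exp_add]; push_cast; ring_nf

lemma ex_conj (k : ℤ) (x : ℝ) : (starRingEnd ℂ) (ex k x) = ex (-k) x := by
  simp only [ex, ← Complex.exp_conj]; simp

lemma ex_norm (k : ℤ) (x : ℝ) : ‖ex k x‖ = 1 := by
  rw [ex, Complex.norm_exp]; simp

lemma ex_cont (k : ℤ) : Continuous (ex k) := by
  unfold ex; fun_prop

lemma ex_int (k : ℤ) : ∫ x in (0:ℝ)..(2 * Real.pi), ex k x = if k = 0 then (2 * Real.pi : ℂ) else 0 := by
  split_ifs with h
  · subst h; simp [ex]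
  · have hc : Complex.I * (k : ℂ) ≠ 0 := by simp [h]
    have := integral_exp_mul_complex (a := 0) (b := 2 * Real.pi) hc
    unfold ex
    rw [this]
    have h1 : Complex.exp (Complex.I * k * ((2 * Real.pi : ℝ) : ℂ)) = 1 := by
      rw [Complex.exp_eq_one_iff]
      exact ⟨k, by push_cast; ring⟩
    rw [h1]; simp

/-- finite trigonometric polynomial -/
def tp (B : Finset ℤ) (f : ℤ → ℂ) (x : ℝ) : ℂ := ∑ l ∈ B, f l * ex l x

lemma tp_cont (B : Finset ℤ) (f : ℤ → ℂ) : Continuous (tp B f) := by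
  unfold tp
  exact continuous_finsetSum _ fun l _ => (continuous_const.mul (ex_cont l))

lemma eval_int (V : ℤ → ℂ) (hV : Summable fun k => ‖V k‖) (m : ℤ) :
    ∫ x in (0:ℝ)..(2 * Real.pi), FC.eval V x * ex (-m) x = 2 * Real.pi * V m := by
  have h := intervalIntegral.hasSum_intervalIntegral_of_summable_norm (a := 0) (b := 2 * Real.pi)
    (f := fun k : ℤ => (⟨fun x => V k * ex k x * ex (-m) x,
      (continuous_const.mul (ex_cont k)).mul (ex_cont _)⟩ : C(ℝ, ℂ))) (by
      refine Summable.of_nonneg_of_le (fun _ => norm_nonneg _) (fun k => ?_) hV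
      rw [ContinuousMap.norm_le _ (norm_nonneg _)]
      intro x
      simp [ex_norm])
  have h2 : ∀ k : ℤ, (∫ x in (0:ℝ)..(2 * Real.pi), V k * ex k x * ex (-m) x)
      = if k = m then 2 * Real.pi * V m else 0 := by
    intro k
    have : ∀ x, V k * ex k x * ex (-m) x = V k * ex (k - m) x := by
      intro x; rw [sub_eq_add_neg, ex_add]; ring
    simp_rw [this]
    rw [intervalIntegral.integral_const_mul, ex_int]
    by_cases hk : k = m
    · subst hk; simp; ring
    · simp [hk, sub_eq_zero]
  simp only [ContinuousMap.coe_mk, h2] at h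
  have h3 := h.unique (hasSum_ite_eq m _)
  rw [← h3]
  congr 1
  ext x
  rw [FC.eval, ← tsum_mul_right]
  rfl

lemma eval_cont (V : ℤ → ℂ) (hV : Summable fun k => ‖V k‖) : Continuous (FC.eval V) := by
  unfold FC.eval
  refine continuous_tsum (fun k => by fun_prop) hV (fun k x => ?_)
  have := ex_norm k x
  simp only [ex] at this
  simp [this]

lemma tp_sq (B : Finset ℤ) (f : ℤ → ℂ) :
    ∫ x in (0:ℝ)..(2 * Real.pi), ‖tp B f x‖ ^ 2 = 2 * Real.pi * ∑ l ∈ B, ‖f l‖ ^ 2 := by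
  have key : ∫ x in (0:ℝ)..(2 * Real.pi), ((‖tp B f x‖ ^ 2 : ℝ) : ℂ)
      = ((2 * Real.pi * ∑ l ∈ B, ‖f l‖ ^ 2 : ℝ) : ℂ) := by
    have : ∀ x, ((‖tp B f x‖ ^ 2 : ℝ) : ℂ) =
        ∑ l ∈ B, ∑ k ∈ B, f l * (starRingEnd ℂ) (f k) * ex (l - k) x := by
      intro x
      push_cast
      rw [← Complex.mul_conj', tp, map_sum, Finset.sum_mul_sum]
      refine Finset.sum_congr rfl fun l _ => Finset.sum_congr rfl fun k _ => ?_
      rw [map_mul, ex_conj, sub_eq_add_neg, ex_add]; ring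
    simp_rw [this]
    rw [intervalIntegral.integral_finsetSum (fun l _ => by
      apply Continuous.intervalIntegrable
      exact continuous_finsetSum _ fun k _ => (continuous_const.mul (ex_cont _)))]
    push_cast
    rw [Finset.mul_sum]
    refine Finset.sum_congr rfl fun l hl => ?_
    rw [intervalIntegral.integral_finsetSum (fun l _ => by
      apply Continuous.intervalIntegrable
      exact (continuous_const.mul (ex_cont _)))]
    simp_rw [intervalIntegral.integral_const_mul, ex_int, sub_eq_zero]
    rw [← Complex.mul_conj']
    simp [hl]
    ring
  rw [intervalIntegral.integral_ofReal] at key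
  exact_mod_cast key

lemma toep_of_bound (V : ℤ → ℂ) (hV : Summable fun k => ‖V k‖) (M : ℝ)
    (hM : ∀ x, ‖FC.eval V x‖ ≤ M) : Toep V M := by
  intro A B f g
  have hM0 : 0 ≤ M := (norm_nonneg _).trans (hM 0)
  have key : ∫ x in (0:ℝ)..(2 * Real.pi), FC.eval V x * (tp B f x * (starRingEnd ℂ) (tp A g x))
      = 2 * Real.pi * ∑ k ∈ A, ∑ l ∈ B, V (k - l) * f l * (starRingEnd ℂ) (g k) := by
    have : ∀ x, FC.eval V x * (tp B f x * (starRingEnd ℂ) (tp A g x)) =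
        ∑ k ∈ A, ∑ l ∈ B, (f l * (starRingEnd ℂ) (g k)) * (FC.eval V x * ex (-(k - l)) x) := by
      intro x
      rw [tp, tp, map_sum, Finset.sum_mul_sum, Finset.mul_sum, Finset.sum_comm' (s := A) (t := fun _ => B) (t' := B) (s' := fun _ => A) (by tauto)]
      refine Finset.sum_congr rfl fun l _ => ?_
      rw [Finset.mul_sum]
      refine Finset.sum_congr rfl fun k _ => ?_
      rw [map_mul, ex_conj, show -(k - l) = l + -k by ring, ex_add]; ring
    simp_rw [this]
    rw [intervalIntegral.integral_finsetSum (fun l _ => by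
      apply Continuous.intervalIntegrable
      exact continuous_finsetSum _ fun k _ => (continuous_const.mul ((eval_cont V hV).mul (ex_cont _)))), Finset.mul_sum]
    refine Finset.sum_congr rfl fun k _ => ?_
    rw [intervalIntegral.integral_finsetSum (fun l _ => by
      apply Continuous.intervalIntegrable
      exact (continuous_const.mul ((eval_cont V hV).mul (ex_cont _)))), Finset.mul_sum]
    refine Finset.sum_congr rfl fun l _ => ?_
    rw [intervalIntegral.integral_const_mul, eval_int V hV]
    ring
  have hpi := Real.pi_pos
  have hb : ‖∫ x in (0:ℝ)..(2 * Real.pi), FC.eval V x * (tp B f x * (starRingEnd ℂ) (tp A g x))‖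
      ≤ ∫ x in (0:ℝ)..(2 * Real.pi), M / 2 * (‖tp B f x‖ ^ 2 + ‖tp A g x‖ ^ 2) := by
    refine intervalIntegral.norm_integral_le_of_norm_le (by positivity) ?_ ?_
    · refine Filter.Eventually.of_forall fun x _ => ?_
      rw [norm_mul, norm_mul, RCLike.norm_conj]
      calc _ ≤ M * (‖tp B f x‖ * ‖tp A g x‖) := by gcongr; exact hM x
        _ ≤ _ := by nlinarith [sq_nonneg (‖tp B f x‖ - ‖tp A g x‖)]
    · apply Continuous.intervalIntegrable
      have := tp_cont B f
      have := tp_cont A g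
      fun_prop
  have hcn : ∀ B f, IntervalIntegrable (fun x => ‖tp B f x‖ ^ 2) volume 0 (2 * Real.pi) := by
    intro B f
    apply Continuous.intervalIntegrable
    have := tp_cont B f
    fun_prop
  have hI : ∫ x in (0:ℝ)..(2 * Real.pi), M / 2 * (‖tp B f x‖ ^ 2 + ‖tp A g x‖ ^ 2)
      = 2 * Real.pi * (M / 2 * (∑ l ∈ B, ‖f l‖ ^ 2 + ∑ k ∈ A, ‖g k‖ ^ 2)) := by
    rw [intervalIntegral.integral_const_mul, intervalIntegral.integral_add
      (hcn B f) (hcn A g), tp_sq, tp_sq]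
    ring
  rw [key, hI, norm_mul] at hb
  have hn : ‖(2 * Real.pi : ℂ)‖ = 2 * Real.pi := by
    simp [abs_of_pos hpi]
  rw [hn] at hb
  exact le_of_mul_le_mul_left hb (by positivity)

lemma toep_linfty (V : ℤ → ℂ) (hV : Summable fun k => ‖V k‖) : Toep V (FC.linfty V) := by
  refine toep_of_bound V hV _ fun x => ?_
  refine le_ciSup (f := fun x => ‖FC.eval V x‖) ⟨∑' k, ‖V k‖, ?_⟩ x
  rintro _ ⟨y, rfl⟩
  have : ∀ k : ℤ, ‖V k * Complex.exp (Complex.I * k * y)‖ = ‖V k‖ := by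
    intro k
    have := ex_norm k y
    simp only [ex] at this
    simp [this]
  simp only [FC.eval]
  refine (norm_tsum_le_tsum_norm (by simpa only [this] using hV)).trans (le_of_eq ?_)
  simp only [this]

lemma linfty_nonneg (V : ℤ → ℂ) : 0 ≤ FC.linfty V := Real.iSup_nonneg fun _ => norm_nonneg _

lemma toep_l2 (V : ℤ → ℂ) (M : ℝ) (hM : 0 ≤ M) (h : Toep V M) (A : Finset ℤ) :
    ∑ k ∈ A, ‖V k‖ ^ 2 ≤ M ^ 2 := by
  set S := ∑ k ∈ A, ‖V k‖ ^ 2 with hS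
  have hS0 : 0 ≤ S := Finset.sum_nonneg fun _ _ => by positivity
  have key : ∀ r : ℝ, 0 ≤ r → r * S ≤ M / 2 * (r ^ 2 + S) := by
    intro r hr
    have := h A {0} (fun _ => (r : ℂ)) V
    simp only [Finset.sum_singleton, sub_zero, Complex.norm_real, Real.norm_eq_abs, sq_abs] at this
    refine le_trans (le_of_eq ?_) this
    have e : ∀ k, V k * (r : ℂ) * (starRingEnd ℂ) (V k) = ((r * ‖V k‖ ^ 2 : ℝ) : ℂ) := by
      intro k
      push_cast
      rw [← Complex.mul_conj']; ring
    simp_rw [e]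
    rw [← Complex.ofReal_sum, ← Finset.mul_sum, Complex.norm_real, Real.norm_eq_abs, abs_of_nonneg (by positivity)]
  rcases hM.eq_or_lt with h0 | h0
  · have := key 1 (by norm_num)
    rw [← h0] at this ⊢
    simp at this ⊢
    linarith
  · have := key M hM
    nlinarith

end S13
namespace S13
open MeasureTheory Set

lemma toep_mod (V : ℤ → ℂ) (M : ℝ) (h : Toep V M) (c : ℂ) (b : ℝ) :
    Toep (fun n => c * Complex.exp ((b * n : ℝ) * Complex.I) * V n) (‖c‖ * M) := by
  intro A B f g
  have := h A B (fun l => Complex.exp ((-(b * l) : ℝ) * Complex.I) * f l)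
    (fun k => Complex.exp ((-(b * k) : ℝ) * Complex.I) * g k)
  simp only [norm_mul, Complex.norm_exp_ofReal_mul_I, one_mul] at this
  have e : ∑ k ∈ A, ∑ l ∈ B, (c * Complex.exp ((b * ((k - l : ℤ) : ℝ) : ℝ) * Complex.I) * V (k - l)) * f l * (starRingEnd ℂ) (g k)
     = c * ∑ k ∈ A, ∑ l ∈ B, V (k - l) * (Complex.exp ((-(b * l) : ℝ) * Complex.I) * f l) *
        (starRingEnd ℂ) (Complex.exp ((-(b * k) : ℝ) * Complex.I) * g k) := by
    rw [Finset.mul_sum]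
    refine Finset.sum_congr rfl fun k _ => ?_
    rw [Finset.mul_sum]
    refine Finset.sum_congr rfl fun l _ => ?_
    have : Complex.exp ((b * ((k - l : ℤ) : ℝ) : ℝ) * Complex.I) =
      Complex.exp ((-(b * l) : ℝ) * Complex.I) * (starRingEnd ℂ) (Complex.exp ((-(b * k) : ℝ) * Complex.I)) := by
      rw [← Complex.exp_conj, ← Complex.exp_add]
      congr 1
      simp
      ring
    rw [this, map_mul]; ring
  rw [e, norm_mul, mul_div_assoc, mul_assoc]
  gcongr

lemma toep_avg {Ω : Type*} [MeasurableSpace Ω] (μ : Measure Ω) (h : Ω → ℤ → ℂ) (N : Ω → ℝ)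
    (V : ℤ → ℂ) (hT : ∀ t, Toep (fun n => h t n * V n) (N t))
    (hi : ∀ n, Integrable (fun t => h t n) μ) (hN : Integrable N μ) :
    Toep (fun n => (∫ t, h t n ∂μ) * V n) (∫ t, N t ∂μ) := by
  intro A B f g
  have hii : ∀ k l, Integrable (fun t => h t (k - l) * V (k - l) * f l * (starRingEnd ℂ) (g k)) μ :=
    fun k l => (((hi (k - l)).mul_const _).mul_const _).mul_const _
  have e : ∑ k ∈ A, ∑ l ∈ B, ((∫ t, h t (k - l) ∂μ) * V (k - l)) * f l * (starRingEnd ℂ) (g k)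
     = ∫ t, ∑ k ∈ A, ∑ l ∈ B, h t (k - l) * V (k - l) * f l * (starRingEnd ℂ) (g k) ∂μ := by
    rw [integral_finsetSum _ fun k _ => integrable_finsetSum _ fun l _ => hii k l]
    refine Finset.sum_congr rfl fun k _ => ?_
    rw [integral_finsetSum _ fun l _ => hii k l]
    refine Finset.sum_congr rfl fun l _ => ?_
    rw [integral_mul_const, integral_mul_const, integral_mul_const]
  rw [e]
  refine (norm_integral_le_of_norm_le (hN.div_const 2 |>.mul_const _)
    (Filter.Eventually.of_forall fun t => hT t A B f g)).trans (le_of_eq ?_)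
  rw [integral_mul_const, integral_div]

open FourierTransform SchwartzMap in
lemma toep_schwartz (f : SchwartzMap ℝ ℝ) : ∃ C : ℝ, 0 ≤ C ∧ ∀ (ε : ℝ) (V : ℤ → ℂ) (M : ℝ),
    Toep V M → Toep (fun n => (f (ε * n) : ℂ) * V n) (C * M) := by
  let F : SchwartzMap ℝ ℂ := f.postcompCLM Complex.ofRealCLM
  refine ⟨∫ y, ‖𝓕 F y‖, integral_nonneg fun _ => norm_nonneg _, fun ε V M hV => ?_⟩
  have hx : ∀ x : ℝ, (f x : ℂ) = ∫ y, 𝓕 F y * Complex.exp ((2 * Real.pi * (y * x) : ℝ) * Complex.I) := by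
    intro x
    have h1 : (𝓕⁻ (𝓕 F)) x = F x := by simp
    have h2 : F x = (f x : ℂ) := by simp [F]
    rw [← h2, ← h1, fourierInv_coe, Real.fourierInv_eq']
    congr 1
    ext y
    simp [mul_comm]
  have h := toep_avg volume (fun y n => 𝓕 F y * Complex.exp (((2 * Real.pi * y * ε) * n : ℝ) * Complex.I))
    (fun y => ‖𝓕 F y‖ * M) V (fun y => toep_mod V M hV _ _) ?_ ?_
  · rw [integral_mul_const] at h
    convert h using 2 with n
    rw [hx]
    congr 2
    ext y
    congr 3
    push_cast
    ring
  · intro n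
    refine (𝓕 F).integrable.mul_bdd (c := 1) ?_ ?_
    · apply Continuous.aestronglyMeasurable
      fun_prop
    · exact Filter.Eventually.of_forall fun y => by rw [Complex.norm_exp_ofReal_mul_I]
  · exact (𝓕 F).integrable.norm.mul_const M

lemma toep_diff (f : SchwartzMap ℝ ℝ) : ∃ C : ℝ, 0 ≤ C ∧ ∀ (ε : ℝ), ∃ gd : ℤ → ℝ,
    (∀ n : ℤ, f (ε * n) - f (-(ε * n)) = ε * n * gd n) ∧ 
    ∀ (V : ℤ → ℂ) (M : ℝ), Toep V M → Toep (fun n => (gd n : ℂ) * V n) (C * M) := by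
  obtain ⟨C, hC, h⟩ := toep_schwartz (SchwartzMap.derivCLM ℝ ℝ f)
  have hcd : Continuous (deriv f) := (SchwartzMap.derivCLM ℝ ℝ f).continuous
  refine ⟨2 * C, by positivity, fun ε => ⟨fun n => ∫ t in Ioc (-1:ℝ) 1, deriv f (t * ε * n), fun n => ?_, fun V M hV => ?_⟩⟩
  · rw [← integral_const_mul, ← intervalIntegral.integral_of_le (by norm_num)]
    rw [intervalIntegral.integral_eq_sub_of_hasDerivAt (f := fun t => f (t * ε * n))]
    · simp
    · intro t _
      have h1 : HasDerivAt f (deriv f (t * ε * n)) (t * ε * n) := f.differentiableAt.hasDerivAt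
      have h2 : HasDerivAt (fun t : ℝ => t * ε * n) (ε * n) t := by
        simpa [mul_assoc] using (hasDerivAt_id t).mul_const (ε * n)
      have h3 := h1.comp t h2
      rw [mul_comm] at h3
      exact h3
    · apply Continuous.intervalIntegrable
      fun_prop
  · have h := toep_avg (volume.restrict (Ioc (-1:ℝ) 1)) (fun t n => ((deriv f (t * ε * n) : ℝ) : ℂ))
      (fun y => C * M) V (fun t => h (t * ε) V M hV) ?_ ?_
    · simp only [integral_const, MeasurableSet.univ, measureReal_restrict_apply, univ_inter, Real.volume_real_Ioc] at h
      convert h using 2 with n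
      · rw [integral_complex_ofReal]
      · norm_num; ring
    · intro n
      refine Integrable.ofReal ?_
      exact (Continuous.integrableOn_Ioc (hcd.comp (by fun_prop)))
    · exact integrable_const _

lemma exists_kernel (θ : ℝ) (hθ : θ ∈ Ioo (0:ℝ) 1) : ∃ K : ℝ → ℝ → ℝ,
    (∀ x y, 0 < x → 0 < y → (x - y) * K x y = x ^ θ - y ^ θ) ∧
    ∀ (X : ℤ → ℝ) (_ : ∀ k, 0 < X k) (V : ℤ → ℂ) (M : ℝ) (_ : 0 ≤ M) (_ : Toep V M) (A B : Finset ℤ) (f g : ℤ → ℂ),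
      ‖∑ k ∈ A, ∑ l ∈ B, V (k - l) * (K (X k) (X l) : ℂ) * f l * (starRingEnd ℂ) (g k)‖
        ≤ M * (∑ l ∈ B, X l ^ (θ - 1) * ‖f l‖ ^ 2 + ∑ k ∈ A, X k ^ (θ - 1) * ‖g k‖ ^ 2) := by
  obtain ⟨μ, hμ⟩ := Real.exists_measure_rpow_eq_integral_rpowIntegrand₀₁ hθ
  set ν := μ.restrict (Ioi 0) with hν
  let q : ℝ → ℝ → ℝ → ℝ := fun x y t => t ^ θ * (t + x)⁻¹ * (t + y)⁻¹
  have hqe : ∀ x y t, 0 < x → 0 < y → 0 < t → (x - y) * q x y t =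
      Real.rpowIntegrand₀₁ θ t x - Real.rpowIntegrand₀₁ θ t y := by
    intro x y t hx hy ht
    simp only [q, Real.rpowIntegrand₀₁]
    field_simp
    ring
  have hq0 : ∀ x y t, 0 < x → 0 < y → 0 < t → 0 ≤ q x y t := by
    intro x y t hx hy ht
    simp only [q]; positivity
  have hmeas : ∀ x y, AEStronglyMeasurable (q x y) ν := by
    intro x y
    apply Measurable.aestronglyMeasurable
    simp only [q]
    fun_prop
  have hae : ∀ᵐ t ∂ν, 0 < t := by
    rw [hν]; exact ae_restrict_mem measurableSet_Ioi
  have hint1 : ∀ x y, 0 < x → 0 < y → x ≠ y → Integrable (q x y) ν := by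
    intro x y hx hy hxy
    have h1 := ((hμ x hx.le).1.sub (hμ y hy.le).1).const_mul ((x - y)⁻¹)
    refine h1.congr ?_
    filter_upwards [hae] with t ht
    simp only [Pi.sub_apply]
    rw [← hqe x y t hx hy ht, ← mul_assoc, inv_mul_cancel₀ (sub_ne_zero.2 hxy), one_mul]
  have hdiag : ∀ x t, 0 < x → 0 < t → q x x t ≤ 2 * q (2 * x) x t := by
    intro x t hx ht
    simp only [q]
    have : (t + x)⁻¹ ≤ 2 * (t + 2 * x)⁻¹ := by
      rw [inv_eq_one_div, ← div_eq_mul_inv, div_le_div_iff₀ (by positivity) (by positivity)]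
      linarith
    calc t ^ θ * (t + x)⁻¹ * (t + x)⁻¹ ≤ t ^ θ * (2 * (t + 2 * x)⁻¹) * (t + x)⁻¹ := by gcongr
      _ = _ := by ring
  have hint2 : ∀ x, 0 < x → Integrable (q x x) ν := by
    intro x hx
    refine ((hint1 (2 * x) x (by positivity) hx (by linarith)).const_mul 2).mono' (hmeas _ _) ?_
    filter_upwards [hae] with t ht
    rw [Real.norm_of_nonneg (hq0 _ _ _ hx hx ht)]
    exact hdiag x t hx ht
  have hint : ∀ x y, 0 < x → 0 < y → Integrable (q x y) ν := by
    intro x y hx hy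
    by_cases h : x = y
    · subst h; exact hint2 x hx
    · exact hint1 x y hx hy h
  have hK : ∀ x y, 0 < x → 0 < y → (x - y) * (∫ t, q x y t ∂ν) = x ^ θ - y ^ θ := by
    intro x y hx hy
    rw [(hμ x hx.le).2, (hμ y hy.le).2, ← integral_sub (hμ x hx.le).1 (hμ y hy.le).1, ← integral_const_mul]
    apply integral_congr_ae
    filter_upwards [hae] with t ht
    exact hqe x y t hx hy ht
  have hKd : ∀ x, 0 < x → (∫ t, q x x t ∂ν) ≤ 2 * x ^ (θ - 1) := by
    intro x hx
    have h1 : (∫ t, q x x t ∂ν) ≤ ∫ t, 2 * q (2 * x) x t ∂ν := by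
      apply integral_mono_ae (hint2 x hx) ((hint (2 * x) x (by positivity) hx).const_mul 2)
      filter_upwards [hae] with t ht
      exact hdiag x t hx ht
    rw [integral_const_mul] at h1
    have h2 := hK (2 * x) x (by positivity) hx
    have h3 : (2 * x) ^ θ ≤ 2 * x ^ θ := by
      rw [Real.mul_rpow (by norm_num) hx.le]
      gcongr
      calc (2:ℝ) ^ θ ≤ 2 ^ (1:ℝ) := Real.rpow_le_rpow_of_exponent_le (by norm_num) hθ.2.le
        _ = 2 := by simp
    have h4 : x ^ θ = x * x ^ (θ - 1) := by
      rw [Real.rpow_sub hx, Real.rpow_one]; field_simp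
    have h5 : x * (∫ t, q (2 * x) x t ∂ν) ≤ x * x ^ (θ - 1) := by
      rw [← h4]
      nlinarith
    have := le_of_mul_le_mul_left h5 hx
    linarith
  refine ⟨fun x y => ∫ t, q x y t ∂ν, hK, ?_⟩
  intro X hX V M hM hV A B f g
  have e : ∑ k ∈ A, ∑ l ∈ B, V (k - l) * ((∫ t, q (X k) (X l) t ∂ν : ℝ) : ℂ) * f l * (starRingEnd ℂ) (g k)
     = ∫ t, ∑ k ∈ A, ∑ l ∈ B, V (k - l) * (q (X k) (X l) t : ℂ) * f l * (starRingEnd ℂ) (g k) ∂ν := by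
    have hii : ∀ k l, Integrable (fun t => V (k - l) * (q (X k) (X l) t : ℂ) * f l * (starRingEnd ℂ) (g k)) ν :=
      fun k l => ((((hint (X k) (X l) (hX k) (hX l)).ofReal (𝕜 := ℂ)).const_mul _).mul_const _).mul_const _
    rw [integral_finsetSum _ fun k _ => integrable_finsetSum _ fun l _ => hii k l]
    refine Finset.sum_congr rfl fun k _ => ?_
    rw [integral_finsetSum _ fun l _ => hii k l]
    refine Finset.sum_congr rfl fun l _ => ?_
    rw [integral_mul_const, integral_mul_const, integral_const_mul, integral_complex_ofReal]
  have hIs : ∀ (S : Finset ℤ) (f : ℤ → ℂ), Integrable (fun t => ∑ l ∈ S, q (X l) (X l) t * ‖f l‖ ^ 2) ν :=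
    fun S f => integrable_finsetSum _ fun l _ => (hint2 _ (hX l)).mul_const _
  have hIb : ∀ (S : Finset ℤ) (f : ℤ → ℂ), ∫ t, ∑ l ∈ S, q (X l) (X l) t * ‖f l‖ ^ 2 ∂ν ≤
      2 * ∑ l ∈ S, X l ^ (θ - 1) * ‖f l‖ ^ 2 := by
    intro S f
    rw [integral_finsetSum _ fun l _ => (hint2 _ (hX l)).mul_const _, Finset.mul_sum]
    refine Finset.sum_le_sum fun l _ => ?_
    rw [integral_mul_const, ← mul_assoc]
    gcongr
    exact hKd _ (hX l)
  rw [e]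
  have hb : ∀ᵐ t ∂ν, ‖∑ k ∈ A, ∑ l ∈ B, V (k - l) * (q (X k) (X l) t : ℂ) * f l * (starRingEnd ℂ) (g k)‖
      ≤ M / 2 * (∑ l ∈ B, q (X l) (X l) t * ‖f l‖ ^ 2 + ∑ k ∈ A, q (X k) (X k) t * ‖g k‖ ^ 2) := by
    filter_upwards [hae] with t ht
    have h1 := hV A B (fun l => ((Real.sqrt (t ^ θ) * (t + X l)⁻¹ : ℝ) : ℂ) * f l)
      (fun k => ((Real.sqrt (t ^ θ) * (t + X k)⁻¹ : ℝ) : ℂ) * g k)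
    have hs : Real.sqrt (t ^ θ) * Real.sqrt (t ^ θ) = t ^ θ := Real.mul_self_sqrt (by positivity)
    convert h1 using 2
    · refine Finset.sum_congr rfl fun k _ => Finset.sum_congr rfl fun l _ => ?_
      have : q (X k) (X l) t = (Real.sqrt (t ^ θ) * (t + X l)⁻¹) * (Real.sqrt (t ^ θ) * (t + X k)⁻¹) := by
        simp only [q]; linear_combination (-1) * ((t + X k)⁻¹ * (t + X l)⁻¹) * hs
      rw [this, map_mul, Complex.conj_ofReal]
      push_cast
      ring
    · have : ∀ (x : ℝ) (z : ℂ), q x x t * ‖z‖ ^ 2 = ‖((Real.sqrt (t ^ θ) * (t + x)⁻¹ : ℝ) : ℂ) * z‖ ^ 2 := by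
        intro x z
        rw [norm_mul, Complex.norm_real, mul_pow, Real.norm_eq_abs, sq_abs]
        simp only [q]; linear_combination (-1) * ((t + x)⁻¹ * (t + x)⁻¹ * ‖z‖ ^ 2) * hs
      simp only [this]
  refine (norm_integral_le_of_norm_le (((hIs B f).add (hIs A g)).const_mul _) hb).trans ?_
  rw [integral_const_mul]
  simp only [Pi.add_apply]
  rw [integral_add (hIs B f) (hIs A g)]
  calc _ ≤ M / 2 * (2 * ∑ l ∈ B, X l ^ (θ - 1) * ‖f l‖ ^ 2 + 2 * ∑ k ∈ A, X k ^ (θ - 1) * ‖g k‖ ^ 2) := by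
        gcongr
        · exact hIb B f
        · exact hIb A g
    _ = _ := by ring

end S13
namespace S13
open MeasureTheory Set

def X (k : ℤ) : ℝ := 1 + (k : ℝ) ^ 2

lemma X_pos (k : ℤ) : 0 < X k := by unfold X; positivity
lemma X_ge (k : ℤ) : 1 ≤ X k := by unfold X; nlinarith [sq_nonneg (k : ℝ)]

def KS (θ : ℝ) (K : ℝ → ℝ → ℝ) : Prop :=
  ∀ (V : ℤ → ℂ) (M : ℝ) (_ : 0 ≤ M) (_ : Toep V M) (A B : Finset ℤ) (f g : ℤ → ℂ),
      ‖∑ k ∈ A, ∑ l ∈ B, V (k - l) * (K (X k) (X l) : ℂ) * f l * (starRingEnd ℂ) (g k)‖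
        ≤ M * (∑ l ∈ B, X l ^ (θ - 1) * ‖f l‖ ^ 2 + ∑ k ∈ A, X k ^ (θ - 1) * ‖g k‖ ^ 2)

lemma rpow_bd (y e : ℝ) (h1 : 1 / 8 ≤ y) (h2 : y ≤ 8) : y ^ e ≤ 8 ^ |e| := by
  have hy : 0 < y := by linarith
  rcases le_total 0 e with he | he
  · rw [abs_of_nonneg he]
    exact Real.rpow_le_rpow hy.le h2 he
  · rw [abs_of_nonpos he, ← neg_neg e, Real.rpow_neg hy.le, neg_neg, ← Real.inv_rpow hy.le]
    refine Real.rpow_le_rpow (by positivity) ?_ (by linarith)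
    rw [inv_le_comm₀ hy (by norm_num)]
    linarith

lemma block_schur (θ : ℝ) (K : ℝ → ℝ → ℝ) (hK : KS θ K) (p q : ℤ → ℕ)
    (hp : ∀ k, 1 / 8 ≤ X k / 4 ^ p k ∧ X k / 4 ^ p k ≤ 8)
    (hq : ∀ k, 1 / 8 ≤ X k / 4 ^ q k ∧ X k / 4 ^ q k ≤ 8)
    (α β : ℝ) (hab : α + β = 1 - θ) (V : ℤ → ℂ) (M : ℝ) (hM : 0 ≤ M) (hV : Toep V M)
    (F : Finset ℤ) (f g : ℤ → ℂ) :
    ‖∑ k ∈ F, ∑ l ∈ F, if p k = q l then V (k - l) * (K (X k) (X l) : ℂ) *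
        ((X l ^ β : ℝ) * f l) * (starRingEnd ℂ) ((X k ^ α : ℝ) * g k) else 0‖
      ≤ 8 ^ |2 * α + θ - 1| * M * (∑ l ∈ F, ‖f l‖ ^ 2 + ∑ k ∈ F, ‖g k‖ ^ 2) := by
  classical
  set e := 2 * α + θ - 1 with he
  set R := F.image p ∪ F.image q with hR
  have hRp : ∀ k ∈ F, p k ∈ R := fun k hk => Finset.mem_union_left _ (Finset.mem_image_of_mem _ hk)
  have hRq : ∀ k ∈ F, q k ∈ R := fun k hk => Finset.mem_union_right _ (Finset.mem_image_of_mem _ hk)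
  have e1 : ∑ k ∈ F, ∑ l ∈ F, (if p k = q l then V (k - l) * (K (X k) (X l) : ℂ) *
        ((X l ^ β : ℝ) * f l) * (starRingEnd ℂ) ((X k ^ α : ℝ) * g k) else 0)
      = ∑ r ∈ R, ∑ k ∈ F with p k = r, ∑ l ∈ F with q l = r, V (k - l) * (K (X k) (X l) : ℂ) *
        ((X l ^ β : ℝ) * f l) * (starRingEnd ℂ) ((X k ^ α : ℝ) * g k) := by
    rw [← Finset.sum_fiberwise_of_maps_to hRp]
    refine Finset.sum_congr rfl fun r _ => Finset.sum_congr rfl fun k hk => ?_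
    rw [Finset.sum_filter]
    refine Finset.sum_congr rfl fun l _ => ?_
    rw [(Finset.mem_filter.1 hk).2]
    simp only [eq_comm]
  have hr : ∀ r ∈ R, ‖∑ k ∈ F with p k = r, ∑ l ∈ F with q l = r, V (k - l) * (K (X k) (X l) : ℂ) *
        ((X l ^ β : ℝ) * f l) * (starRingEnd ℂ) ((X k ^ α : ℝ) * g k)‖ ≤
        8 ^ |e| * M * (∑ l ∈ F with q l = r, ‖f l‖ ^ 2 + ∑ k ∈ F with p k = r, ‖g k‖ ^ 2) := by
    intro r _
    set b : ℝ := 4 ^ r with hb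
    have hb0 : 0 < b := by positivity
    set c : ℝ := b ^ (e / 2) with hc
    have hc0 : 0 < c := by positivity
    have h := hK V M hM hV (F.filter fun k => p k = r) (F.filter fun l => q l = r)
      (fun l => ((c * X l ^ β : ℝ) : ℂ) * f l) (fun k => ((c⁻¹ * X k ^ α : ℝ) : ℂ) * g k)
    have hc2 : c ^ 2 = b ^ e := by
      rw [hc, ← Real.rpow_natCast, ← Real.rpow_mul hb0.le]; norm_num
    have hf : ∀ l, q l = r → X l ^ (θ - 1) * ‖((c * X l ^ β : ℝ) : ℂ) * f l‖ ^ 2 ≤ 8 ^ |e| * ‖f l‖ ^ 2 := by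
      intro l hl
      have hx := X_pos l
      rw [norm_mul, Complex.norm_real, mul_pow, Real.norm_eq_abs, sq_abs, ← mul_assoc]
      gcongr
      have : X l ^ (θ - 1) * (c * X l ^ β) ^ 2 = (X l / b) ^ (-e) := by
        rw [mul_pow, hc2, ← Real.rpow_natCast, ← Real.rpow_mul hx.le, Real.div_rpow hx.le hb0.le,
          Real.rpow_neg hb0.le, div_inv_eq_mul]
        have : X l ^ (-e) = X l ^ (θ - 1) * X l ^ (β * (2:ℕ)) := by
          rw [← Real.rpow_add hx]; congr 1; push_cast; linarith
        rw [this]; ring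
      rw [this, ← abs_neg e]
      have h2 := hq l
      rw [hl] at h2
      exact rpow_bd _ _ h2.1 h2.2
    have hg : ∀ l, p l = r → X l ^ (θ - 1) * ‖((c⁻¹ * X l ^ α : ℝ) : ℂ) * g l‖ ^ 2 ≤ 8 ^ |e| * ‖g l‖ ^ 2 := by
      intro l hl
      have hx := X_pos l
      rw [norm_mul, Complex.norm_real, mul_pow, Real.norm_eq_abs, sq_abs, ← mul_assoc]
      gcongr
      have : X l ^ (θ - 1) * (c⁻¹ * X l ^ α) ^ 2 = (X l / b) ^ e := by
        rw [mul_pow, inv_pow, hc2, ← Real.rpow_natCast, ← Real.rpow_mul hx.le, Real.div_rpow hx.le hb0.le]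
        have : X l ^ e = X l ^ (θ - 1) * X l ^ (α * (2:ℕ)) := by
          rw [← Real.rpow_add hx]; congr 1; push_cast; linarith
        rw [this]; ring
      rw [this]
      have h2 := hp l
      rw [hl] at h2
      exact rpow_bd _ _ h2.1 h2.2
    calc _ = _ := by
          congr 1
          refine Finset.sum_congr rfl fun k _ => Finset.sum_congr rfl fun l _ => ?_
          have hcc : (c : ℂ) ≠ 0 := by exact_mod_cast hc0.ne'
          show _ = V (k - l) * (K (X k) (X l) : ℂ) * (((c * X l ^ β : ℝ) : ℂ) * f l) *
            (starRingEnd ℂ) (((c⁻¹ * X k ^ α : ℝ) : ℂ) * g k)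
          rw [map_mul, map_mul, Complex.conj_ofReal, Complex.conj_ofReal]
          push_cast
          field_simp
      _ ≤ _ := h
      _ ≤ M * (∑ l ∈ F with q l = r, 8 ^ |e| * ‖f l‖ ^ 2 + ∑ k ∈ F with p k = r, 8 ^ |e| * ‖g k‖ ^ 2) := by
          exact mul_le_mul_of_nonneg_left (add_le_add
            (Finset.sum_le_sum fun l hl => hf l (Finset.mem_filter.1 hl).2)
            (Finset.sum_le_sum fun k hk => hg k (Finset.mem_filter.1 hk).2)) hM
      _ = _ := by rw [← Finset.mul_sum, ← Finset.mul_sum]; ring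
  rw [e1]
  refine (norm_sum_le_of_le _ hr).trans (le_of_eq ?_)
  rw [← Finset.mul_sum, Finset.sum_add_distrib, Finset.sum_fiberwise_of_maps_to hRp, Finset.sum_fiberwise_of_maps_to hRq]

def bl (k : ℤ) : ℕ := Nat.log 2 k.natAbs

def near (k l : ℤ) : Prop := bl k = bl l ∨ bl k = bl l + 1 ∨ bl k + 1 = bl l

lemma bl_bd (k : ℤ) : 1 ≤ X k / 4 ^ bl k ∧ X k / 4 ^ bl k ≤ 8 := by
  have h4 : (0:ℝ) < 4 ^ bl k := by positivity
  rw [le_div_iff₀ h4, div_le_iff₀ h4]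
  have h4' : (4:ℝ) ^ bl k = (2 ^ bl k) ^ 2 := by rw [← pow_mul, mul_comm, pow_mul]; norm_num
  have hub : (k.natAbs : ℝ) < 2 ^ (bl k + 1) := by
    exact_mod_cast Nat.lt_pow_succ_log_self (by norm_num) k.natAbs
  have hsq : (k : ℝ) ^ 2 = (k.natAbs : ℝ) ^ 2 := by
    rw [Nat.cast_natAbs]; push_cast; rw [sq_abs]
  have h1 : (1:ℝ) ≤ 4 ^ bl k := one_le_pow₀ (by norm_num)
  constructor
  · by_cases hk : k = 0
    · subst hk; simp [bl, X]
    · have hlb : ((2:ℝ) ^ bl k) ≤ k.natAbs := by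
        exact_mod_cast Nat.pow_log_le_self 2 (by simpa using hk)
      rw [X, hsq, h4', one_mul]
      have : (0:ℝ) < 2 ^ bl k := by positivity
      nlinarith
  · rw [X, hsq]
    rw [pow_succ] at hub
    have : (0:ℝ) ≤ k.natAbs := by positivity
    nlinarith

lemma far_bd (k l : ℤ) (h : ¬ near k l) : X k ≤ 4 * X (k - l) ∧ X l ≤ 4 * X (k - l) := by
  have key : ∀ k l : ℤ, bl l + 2 ≤ bl k → 2 * l.natAbs ≤ k.natAbs := by
    intro k l h
    have hub : l.natAbs < 2 ^ (bl l + 1) := Nat.lt_pow_succ_log_self (by norm_num) _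
    have hk : k ≠ 0 := by rintro rfl; simp [bl] at h
    have hlb : 2 ^ bl k ≤ k.natAbs := Nat.pow_log_le_self 2 (by simpa using hk)
    have : 2 ^ (bl l + 2) ≤ 2 ^ bl k := Nat.pow_le_pow_right (by norm_num) h
    rw [pow_succ] at this
    omega
  have h3 : bl l + 2 ≤ bl k ∨ bl k + 2 ≤ bl l := by
    unfold near at h; omega
  have h4 : k.natAbs ≤ 2 * (k - l).natAbs ∧ l.natAbs ≤ 2 * (k - l).natAbs := by
    rcases h3 with h3 | h3
    · have := key k l h3; omega
    · have := key l k h3; omega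
  have hh : ∀ m : ℤ, m.natAbs ≤ 2 * (k - l).natAbs → X m ≤ 4 * X (k - l) := by
    intro m hm
    have h5 : |(m:ℝ)| ≤ 2 * |((k - l : ℤ) : ℝ)| := by
      have : ((m.natAbs : ℕ) : ℝ) ≤ 2 * (((k - l).natAbs : ℕ) : ℝ) := by exact_mod_cast hm
      rw [Nat.cast_natAbs, Nat.cast_natAbs] at this
      exact_mod_cast this
    have h6 := pow_le_pow_left₀ (abs_nonneg _) h5 2
    rw [mul_pow, sq_abs, sq_abs] at h6
    unfold X
    linarith
  exact ⟨hh k h4.1, hh l h4.2⟩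

open Classical in
lemma near_schur (θ : ℝ) (K : ℝ → ℝ → ℝ) (hK : KS θ K)
    (α β : ℝ) (hab : α + β = 1 - θ) (V : ℤ → ℂ) (M : ℝ) (hM : 0 ≤ M) (hV : Toep V M)
    (F : Finset ℤ) (f g : ℤ → ℂ) :
    ‖∑ k ∈ F, ∑ l ∈ F, if near k l then V (k - l) * (K (X k) (X l) : ℂ) *
        ((X l ^ β : ℝ) * f l) * (starRingEnd ℂ) ((X k ^ α : ℝ) * g k) else 0‖
      ≤ 3 * 8 ^ |2 * α + θ - 1| * M * (∑ l ∈ F, ‖f l‖ ^ 2 + ∑ k ∈ F, ‖g k‖ ^ 2) := by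
  have hp : ∀ k, 1 / 8 ≤ X k / 4 ^ bl k ∧ X k / 4 ^ bl k ≤ 8 := fun k =>
    ⟨by linarith [(bl_bd k).1], (bl_bd k).2⟩
  have hp' : ∀ k, 1 / 8 ≤ X k / 4 ^ (bl k + 1) ∧ X k / 4 ^ (bl k + 1) ≤ 8 := by
    intro k
    have h := bl_bd k
    rw [pow_succ, ← div_div]
    constructor <;> linarith [h.1, h.2]
  have h1 := block_schur θ K hK bl bl hp hp α β hab V M hM hV F f g
  have h2 := block_schur θ K hK bl (fun k => bl k + 1) hp hp' α β hab V M hM hV F f g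
  have h3 := block_schur θ K hK (fun k => bl k + 1) bl hp' hp α β hab V M hM hV F f g
  have e : ∀ (k l : ℤ) (z : ℂ), (if near k l then z else 0) =
      (if bl k = bl l then z else 0) + (if bl k = bl l + 1 then z else 0) + (if bl k + 1 = bl l then z else 0) := by
    intro k l z
    unfold near
    by_cases ha : bl k = bl l
    · simp [ha]
    · by_cases hb : bl k = bl l + 1
      · simp [hb]; intro h; omega
      · simp [ha, hb]
  simp_rw [e, Finset.sum_add_distrib]
  refine (norm_add₃_le).trans ?_
  refine (add_le_add_three h1 h2 h3).trans (le_of_eq ?_)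
  ring

open Classical in
lemma near_comm (τ : ℝ) (hτ : 0 < τ) : ∃ c : ℤ → ℤ → ℝ, (∀ k l : ℤ, ((k:ℝ) - l) * c k l = X k ^ τ - X l ^ τ) ∧
    ∃ C : ℝ, 0 ≤ C ∧ ∀ (V : ℤ → ℂ) (M : ℝ) (_ : 0 ≤ M) (_ : Toep V M) (F : Finset ℤ) (z : ℤ → ℂ),
      ‖∑ k ∈ F, ∑ l ∈ F, if near k l then V (k - l) * (c k l : ℂ) * (l * z l) *
        (starRingEnd ℂ) ((X k ^ τ : ℝ) * z k) else 0‖ ≤ C * M * ∑ k ∈ F, ‖((X k ^ τ : ℝ) : ℂ) * z k‖ ^ 2 := by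
  obtain ⟨n, hn⟩ := exists_nat_gt τ
  have hn0 : (0:ℝ) < n := hτ.trans hn
  set θ := τ / n with hθ
  have hθ1 : θ ∈ Ioo (0:ℝ) 1 := ⟨by positivity, by rw [hθ, div_lt_one hn0]; exact hn⟩
  have hθn : θ * n = τ := by rw [hθ]; field_simp
  obtain ⟨K, hK1, hK2⟩ := exists_kernel θ hθ1
  have hK : KS θ K := hK2 X X_pos
  refine ⟨fun k l => ((k:ℝ) + l) * K (X k) (X l) * ∑ i ∈ Finset.range n, (X k ^ θ) ^ i * (X l ^ θ) ^ (n - 1 - i), ?_, ?_⟩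
  · intro k l
    have h1 := hK1 (X k) (X l) (X_pos k) (X_pos l)
    have h2 := geom_sum₂_mul (X k ^ θ) (X l ^ θ) n
    have h3 : ∀ k, (X k ^ θ) ^ n = X k ^ τ := by
      intro k
      rw [← Real.rpow_natCast, ← Real.rpow_mul (X_pos k).le, hθn]
    rw [h3, h3] at h2
    rw [← h2, ← h1]
    simp only [X]
    ring
  · refine ⟨∑ i ∈ Finset.range n, (6 * 8 ^ |2 * (θ * i) + θ - 1| + 6 * 8 ^ |2 * (θ * i + 1 / 2) + θ - 1|),
      by positivity, fun V M hM hV F z => ?_⟩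
    set S := ∑ k ∈ F, ‖((X k ^ τ : ℝ) : ℂ) * z k‖ ^ 2 with hS
    let ψ : ℤ → ℂ := fun k => ((X k ^ τ : ℝ) : ℂ) * z k
    let f1 : ℤ → ℂ := fun l => (((l:ℝ) ^ 2 / X l : ℝ) : ℂ) * ψ l
    let f2 : ℤ → ℂ := fun l => (((l:ℝ) * X l ^ (-(1/2) : ℝ) : ℝ) : ℂ) * ψ l
    have hf1 : ∑ k ∈ F, ‖f1 k‖ ^ 2 ≤ S := by
      refine Finset.sum_le_sum fun k _ => ?_
      have : ‖f1 k‖ ≤ ‖ψ k‖ := by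
        simp only [f1]
        rw [norm_mul, Complex.norm_real, Real.norm_of_nonneg (div_nonneg (sq_nonneg _) (X_pos k).le)]
        refine mul_le_of_le_one_left (norm_nonneg _) ?_
        rw [div_le_one (X_pos k), X]; linarith
      exact pow_le_pow_left₀ (norm_nonneg _) this 2
    have hf2 : ∑ k ∈ F, ‖f2 k‖ ^ 2 ≤ S := by
      refine Finset.sum_le_sum fun k _ => ?_
      simp only [f2]
      rw [norm_mul, Complex.norm_real, Real.norm_eq_abs, mul_pow, sq_abs, mul_pow]
      refine mul_le_of_le_one_left (by positivity) ?_
      rw [← Real.rpow_natCast (X k ^ _), ← Real.rpow_mul (X_pos k).le]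
      norm_num
      rw [Real.rpow_neg_one, ← div_eq_mul_inv, div_le_one (X_pos k), X]
      linarith
    have e : ∑ k ∈ F, ∑ l ∈ F, (if near k l then V (k - l) *
        ((((k:ℝ) + l) * K (X k) (X l) * ∑ i ∈ Finset.range n, (X k ^ θ) ^ i * (X l ^ θ) ^ (n - 1 - i) : ℝ) : ℂ) * (l * z l) *
        (starRingEnd ℂ) ((X k ^ τ : ℝ) * z k) else 0) =
        ∑ i ∈ Finset.range n, 
        ((∑ k ∈ F, ∑ l ∈ F, if near k l then V (k - l) * (K (X k) (X l) : ℂ) *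
        ((X l ^ (1 - θ - θ * i) : ℝ) * f1 l) * (starRingEnd ℂ) ((X k ^ (θ * i) : ℝ) * ψ k) else 0)
        + (∑ k ∈ F, ∑ l ∈ F, if near k l then V (k - l) * (K (X k) (X l) : ℂ) *
        ((X l ^ (1 - θ - (θ * i + 1 / 2)) : ℝ) * f2 l) * (starRingEnd ℂ) ((X k ^ (θ * i + 1 / 2) : ℝ) * f2 k) else 0)) := by
      simp_rw [← Finset.sum_add_distrib]
      rw [Finset.sum_comm (s := Finset.range n)]
      refine Finset.sum_congr rfl fun k _ => ?_
      rw [Finset.sum_comm (s := Finset.range n)]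
      refine Finset.sum_congr rfl fun l _ => ?_
      by_cases hkl : near k l
      · simp only [hkl, if_true]
        rw [Complex.ofReal_mul, Complex.ofReal_sum, Finset.mul_sum, Finset.mul_sum, Finset.sum_mul,
          Finset.sum_mul]
        refine Finset.sum_congr rfl fun i hi => ?_
        have hi' : i < n := Finset.mem_range.1 hi
        have hcast : ((n - 1 - i : ℕ) : ℝ) = n - 1 - i := by
          rw [Nat.cast_sub (by omega), Nat.cast_sub (by omega)]; simp
        have hk := X_pos k
        have hl := X_pos l
        have r1 : (X k ^ θ) ^ i = X k ^ (θ * i) := by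
          rw [← Real.rpow_natCast, ← Real.rpow_mul hk.le]
        have r2 : (X l ^ θ) ^ (n - 1 - i) * (l:ℝ)^2 = X l ^ (1 - θ - θ * i) * ((l:ℝ)^2 / X l * X l ^ τ) := by
          have : X l ^ (θ * ((n - 1 - i : ℕ) : ℝ)) = X l ^ (1 - θ - θ * i) * (X l)⁻¹ * X l ^ τ := by
            rw [← Real.rpow_neg_one, ← Real.rpow_add hl, ← Real.rpow_add hl, hcast, ← hθn]
            congr 1; ring
          rw [← Real.rpow_natCast (X l ^ θ), ← Real.rpow_mul hl.le, this]
          ring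
        have r3 : X k ^ (θ * i) = X k ^ (θ * i + 1 / 2) * X k ^ (-(1/2) : ℝ) := by
          rw [← Real.rpow_add hk]; congr 1; ring
        have r4 : (X l ^ θ) ^ (n - 1 - i) = X l ^ (1 - θ - (θ * i + 1 / 2)) * (X l ^ (-(1/2) : ℝ) * X l ^ τ) := by
          rw [← Real.rpow_natCast (X l ^ θ), ← Real.rpow_mul hl.le, ← Real.rpow_add hl, ← Real.rpow_add hl, hcast, ← hθn]
          congr 1; ring
        have c1 := congrArg (Complex.ofReal) r1
        have c2 := congrArg (Complex.ofReal) r2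
        have c3 := congrArg (Complex.ofReal) r3
        have c4 := congrArg (Complex.ofReal) r4
        simp only [f1, f2, ψ, map_mul, Complex.conj_ofReal]
        generalize (starRingEnd ℂ) (z k) = zk
        generalize X k ^ (θ * i) = x1 at *
        generalize X k ^ (θ * i + 1 / 2) = x2 at *
        generalize X k ^ (-(1/2) : ℝ) = x3 at *
        generalize X l ^ (1 - θ - θ * i) = x4 at *
        generalize X l ^ (1 - θ - (θ * i + 1 / 2)) = x5 at *
        generalize X l ^ (-(1/2) : ℝ) = x6 at *
        generalize (X k ^ θ) ^ i = x7 at *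
        generalize (X l ^ θ) ^ (n - 1 - i) = x8 at *
        generalize X k ^ τ = x9 at *
        generalize X l ^ τ = x10 at *
        push_cast at c1 c2 c3 c4 ⊢
        rw [c1]
        linear_combination (V (k - l) * (K (X k) (X l) : ℂ) * z l * zk * x9 * x1) * c2
          + (V (k - l) * (K (X k) (X l) : ℂ) * z l * zk * x9 * k * l * x8) * c3
          + (V (k - l) * (K (X k) (X l) : ℂ) * z l * zk * x9 * k * l * x2 * x3) * c4
      · simp [hkl]
    rw [e, Finset.sum_mul, Finset.sum_mul]
    refine norm_sum_le_of_le _ fun i _ => ?_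
    refine (norm_add_le _ _).trans ?_
    rw [add_mul, add_mul]
    have hψ : ∑ k ∈ F, ‖ψ k‖ ^ 2 = S := rfl
    refine add_le_add ?_ ?_
    · refine (near_schur θ K hK (θ * i) (1 - θ - θ * i) (by ring) V M hM hV F f1 ψ).trans ?_
      rw [hψ]
      have : 0 ≤ 3 * 8 ^ |2 * (θ * i) + θ - 1| * M := by positivity
      nlinarith
    · refine (near_schur θ K hK (θ * i + 1 / 2) (1 - θ - (θ * i + 1 / 2)) (by ring) V M hM hV F f2 f2).trans ?_
      have : 0 ≤ 3 * 8 ^ |2 * (θ * i + 1 / 2) + θ - 1| * M := by positivity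
      nlinarith

end S13
namespace S13
open MeasureTheory Set

lemma sym_part (f : SchwartzMap ℝ ℝ) (h0 : ∀ x, 0 ≤ f x) (h1 : ∀ x, f x ≤ 1) :
    ∃ C : ℝ, 0 ≤ C ∧ ∀ (ε : ℝ) (u : FC) (M : ℝ) (_ : 0 ≤ M) (_ : Toep (FC.D1 u) M) (_ : FC.isReal u)
      (w : ℤ → ℂ) (F : Finset ℤ),
      |(∑ k ∈ F, ∑ l ∈ F, (f (ε * ((k - l : ℤ) : ℝ)) : ℂ) * u (k - l) * Complex.I * l *
        ((f (ε * l) : ℂ) * w l) * (starRingEnd ℂ) ((f (ε * k) : ℂ) * w k)).re| ≤ C * M * ∑ k ∈ F, ‖w k‖ ^ 2 := by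
  obtain ⟨C1, hC1, H1⟩ := toep_schwartz f
  obtain ⟨C2, hC2, H2⟩ := toep_diff f
  obtain ⟨C3, hC3, H3⟩ := f.decay 1 0
  refine ⟨C1 + C2 * (1 + C3 ^ 2), by positivity, ?_⟩
  intro ε u M hM hT hu w F
  obtain ⟨gd, hg1, hg2⟩ := H2 ε
  have t1 := H1 ε _ _ hT
  have t2 := hg2 _ _ hT
  set ψ : ℤ → ℂ := fun k => (f (ε * k) : ℂ) * w k with hψ
  set T := ∑ k ∈ F, ∑ l ∈ F, (f (ε * ((k - l : ℤ) : ℝ)) : ℂ) * u (k - l) * Complex.I * l *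
        ψ l * (starRingEnd ℂ) (ψ k) with hTdef
  have hconj : (starRingEnd ℂ) T = ∑ k ∈ F, ∑ l ∈ F, (starRingEnd ℂ) ((f (ε * ((l - k : ℤ) : ℝ)) : ℂ) * u (l - k) * Complex.I * k *
        ψ k * (starRingEnd ℂ) (ψ l)) := by
    rw [Finset.sum_comm, hTdef, map_sum]
    simp_rw [map_sum]
  set T1 := ∑ k ∈ F, ∑ l ∈ F, ((f (ε * ((k - l : ℤ) : ℝ)) : ℂ) * FC.D1 u (k - l)) * ψ l * (starRingEnd ℂ) (ψ k) with hT1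
  set T2 := ∑ k ∈ F, ∑ l ∈ F, ((gd (k - l) : ℂ) * FC.D1 u (k - l)) * ψ l * (starRingEnd ℂ) (((ε * k : ℝ) : ℂ) * ψ k) with hT2
  have e : T + (starRingEnd ℂ) T = T2 - T1 := by
    rw [hconj, hTdef, hT1, hT2]
    simp_rw [← Finset.sum_sub_distrib, ← Finset.sum_add_distrib]
    refine Finset.sum_congr rfl fun k _ => Finset.sum_congr rfl fun l _ => ?_
    have hr : (starRingEnd ℂ) (u (l - k)) = u (k - l) := by
      rw [← hu, neg_sub]
    have hg := hg1 (k - l)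
    have ha : -(ε * ((k - l : ℤ) : ℝ)) = ε * ((l - k : ℤ) : ℝ) := by push_cast; ring
    rw [ha] at hg
    have hc := congrArg Complex.ofReal hg
    simp only [map_mul, Complex.conj_ofReal, Complex.conj_conj, hr, Complex.conj_I, FC.D1, map_intCast]
    push_cast at hc ⊢
    linear_combination (u (k - l) * Complex.I * k * ψ l * (starRingEnd ℂ) (ψ k)) * hc
  have hψn : ∀ k, ‖ψ k‖ ≤ ‖w k‖ := by
    intro k
    rw [hψ]
    simp only
    rw [norm_mul, Complex.norm_real, Real.norm_of_nonneg (h0 _)]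
    exact mul_le_of_le_one_left (norm_nonneg _) (h1 _)
  have hψn2 : ∀ k : ℤ, ‖((ε * k : ℝ) : ℂ) * ψ k‖ ≤ C3 * ‖w k‖ := by
    intro k
    rw [hψ]
    simp only
    rw [norm_mul, norm_mul, ← mul_assoc, Complex.norm_real, Complex.norm_real]
    have := H3 (ε * k)
    rw [pow_one, norm_iteratedFDeriv_zero] at this
    gcongr
  set W := ∑ k ∈ F, ‖w k‖ ^ 2 with hW
  have s1 : ∑ k ∈ F, ‖ψ k‖ ^ 2 ≤ W := Finset.sum_le_sum fun k _ => by
    have := hψn k; gcongr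
  have s2 : ∑ k ∈ F, ‖((ε * k : ℝ) : ℂ) * ψ k‖ ^ 2 ≤ C3 ^ 2 * W := by
    rw [hW, Finset.mul_sum]
    exact Finset.sum_le_sum fun k _ => by
      rw [← mul_pow]; have := hψn2 k; gcongr
  have b1 := t1 F F ψ ψ
  have b2 := t2 F F ψ (fun k => ((ε * k : ℝ) : ℂ) * ψ k)
  have e2 : T.re = (T2 - T1).re / 2 := by
    rw [← e, Complex.add_re, Complex.conj_re]; ring
  have hW0 : 0 ≤ W := by positivity
  have n1 : ‖T1‖ ≤ C1 * M * W := by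
    refine b1.trans ?_
    have : 0 ≤ C1 * M := by positivity
    nlinarith
  have n2 : ‖T2‖ ≤ C2 * M / 2 * (W + C3 ^ 2 * W) := by
    refine b2.trans ?_
    gcongr
  rw [e2, abs_div, abs_two]
  have n3 := (Complex.abs_re_le_norm (T2 - T1)).trans (norm_sub_le _ _)
  have q1 : 0 ≤ C1 * M * W := by positivity
  have q2 : 0 ≤ C2 * M * W := by positivity
  have q3 : 0 ≤ C2 * M * W * C3 ^ 2 := by positivity
  nlinarith

lemma far_sum (A B P : ℤ → ℝ) (hA : ∀ k, 0 ≤ A k) (S : ℝ) (hS : ∀ F : Finset ℤ, ∑ k ∈ F, A k ≤ S) (F : Finset ℤ) :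
    (∑ k ∈ F, ∑ l ∈ F, A (k - l) * B l * P k) ^ 2 ≤ (S * ∑ l ∈ F, B l ^ 2) * (S * ∑ k ∈ F, P k ^ 2) := by
  classical
  have h1 := Finset.sum_mul_sq_le_sq_mul_sq (F ×ˢ F) (fun q => Real.sqrt (A (q.1 - q.2)) * B q.2)
    (fun q => Real.sqrt (A (q.1 - q.2)) * P q.1)
  have e : ∀ q : ℤ × ℤ, Real.sqrt (A (q.1 - q.2)) * B q.2 * (Real.sqrt (A (q.1 - q.2)) * P q.1) = A (q.1 - q.2) * B q.2 * P q.1 := by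
    intro q
    linear_combination (B q.2 * P q.1) * Real.mul_self_sqrt (hA (q.1 - q.2))
  have hS1 : ∀ l, ∑ k ∈ F, A (k - l) ≤ S := by
    intro l
    refine le_trans (le_of_eq ?_) (hS (F.image fun k => k - l))
    rw [Finset.sum_image]
    intro a _ b _ h
    simpa using h
  have hS2 : ∀ k, ∑ l ∈ F, A (k - l) ≤ S := by
    intro k
    refine le_trans (le_of_eq ?_) (hS (F.image fun l => k - l))
    rw [Finset.sum_image]
    intro a _ b _ h
    simpa using h
  have hS0 : 0 ≤ S := by simpa using hS ∅
  simp_rw [e, mul_pow, Real.sq_sqrt (hA _)] at h1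
  rw [Finset.sum_product] at h1
  refine h1.trans ?_
  refine mul_le_mul ?_ ?_ (Finset.sum_nonneg fun q _ => mul_nonneg (hA _) (sq_nonneg _)) (by positivity)
  · rw [Finset.sum_product_right, Finset.mul_sum]
    refine Finset.sum_le_sum fun l _ => ?_
    simp only
    rw [← Finset.sum_mul]
    exact mul_le_mul_of_nonneg_right (hS1 l) (sq_nonneg _)
  · rw [Finset.sum_product, Finset.mul_sum]
    refine Finset.sum_le_sum fun k _ => ?_
    simp only
    rw [← Finset.sum_mul]
    exact mul_le_mul_of_nonneg_right (hS2 k) (sq_nonneg _)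

open Classical in
lemma finite_bound (τ : ℝ) (hτ : 0 < τ) (f : SchwartzMap ℝ ℝ) (h0 : ∀ x, 0 ≤ f x) (h1 : ∀ x, f x ≤ 1) :
    ∃ C : ℝ, 0 ≤ C ∧ ∀ (ε : ℝ) (u η : FC) (M N S : ℝ) (_ : 0 ≤ M) (_ : 0 ≤ N) (_ : 0 ≤ S) (_ : Toep (FC.D1 u) M)
      (_ : Toep (FC.D1 η) N) (_ : FC.isReal u) (_ : ∀ F : Finset ℤ, ∑ k ∈ F, X k ^ τ * ‖u k‖ ≤ S) (F : Finset ℤ),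
      |(∑ k ∈ F, ∑ l ∈ F, ((X k ^ (2 * τ) : ℝ) : ℂ) * ((f (ε * ((k - l : ℤ) : ℝ)) : ℂ) * u (k - l)) * (Complex.I * l *
        ((f (ε * l) : ℂ) * η l)) * (starRingEnd ℂ) ((f (ε * k) : ℂ) * η k)).re| ≤
        C * (M + N) * (S ^ 2 + ∑ k ∈ F, X k ^ (2 * τ) * ‖η k‖ ^ 2) := by
  obtain ⟨C1, hC1, H1⟩ := toep_schwartz f
  obtain ⟨C2, hC2, H2⟩ := sym_part f h0 h1
  obtain ⟨c, hc, C3, hC3, H3⟩ := near_comm τ hτ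
  refine ⟨C3 * C1 + C2 + 4 ^ τ, by positivity, ?_⟩
  intro ε u η M N S hM hN hS hTu hTη hu hSA F
  set z : ℤ → ℂ := fun k => (f (ε * k) : ℂ) * η k with hz
  set w : ℤ → ℂ := fun k => ((X k ^ τ : ℝ) : ℂ) * η k with hw
  set W := ∑ k ∈ F, X k ^ (2 * τ) * ‖η k‖ ^ 2 with hW
  have hwn : ∀ k, ‖w k‖ = X k ^ τ * ‖η k‖ := by
    intro k
    rw [hw]; simp only
    rw [norm_mul, Complex.norm_real, Real.norm_of_nonneg (Real.rpow_nonneg (X_pos k).le _)]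
  have hX2 : ∀ k, X k ^ (2 * τ) = X k ^ τ * X k ^ τ := by
    intro k
    rw [two_mul, Real.rpow_add (X_pos k)]
  have hWw : ∑ k ∈ F, ‖w k‖ ^ 2 = W := Finset.sum_congr rfl fun k _ => by
    rw [hwn, hX2]; ring
  have hW0 : 0 ≤ W := by rw [← hWw]; positivity
  have hzn : ∀ k, ‖z k‖ ≤ ‖η k‖ := by
    intro k
    rw [hz]; simp only
    rw [norm_mul, Complex.norm_real, Real.norm_of_nonneg (h0 _)]
    exact mul_le_of_le_one_left (norm_nonneg _) (h1 _)
  have hzw : ∀ k, ‖((X k ^ τ : ℝ) : ℂ) * z k‖ ≤ ‖w k‖ := by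
    intro k
    rw [hwn, norm_mul, Complex.norm_real, Real.norm_of_nonneg (Real.rpow_nonneg (X_pos k).le _)]
    have := Real.rpow_nonneg (X_pos k).le τ
    have := hzn k
    gcongr
  have n1 := H3 _ _ (mul_nonneg hC1 hM) (H1 ε _ _ hTu) F z
  have n2 := H2 ε u M hM hTu hu w F
  rw [hWw] at n2
  set T1 := ∑ k ∈ F, ∑ l ∈ F, if near k l then (f (ε * ((k - l : ℤ) : ℝ)) : ℂ) * FC.D1 u (k - l) * (c k l : ℂ) * (l * z l) *
        (starRingEnd ℂ) ((X k ^ τ : ℝ) * z k) else 0 with hT1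
  set T2 := ∑ k ∈ F, ∑ l ∈ F, (f (ε * ((k - l : ℤ) : ℝ)) : ℂ) * u (k - l) * Complex.I * l *
        ((f (ε * l) : ℂ) * w l) * (starRingEnd ℂ) ((f (ε * k) : ℂ) * w k) with hT2
  set T3 := ∑ k ∈ F, ∑ l ∈ F, if near k l then 0 else (((X k ^ τ - X l ^ τ : ℝ)) : ℂ) *
    ((f (ε * ((k - l : ℤ) : ℝ)) : ℂ) * u (k - l)) * (Complex.I * l * z l) * (starRingEnd ℂ) ((X k ^ τ : ℝ) * z k) with hT3
  have e : (∑ k ∈ F, ∑ l ∈ F, ((X k ^ (2 * τ) : ℝ) : ℂ) * ((f (ε * ((k - l : ℤ) : ℝ)) : ℂ) * u (k - l)) * (Complex.I * l *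
        z l) * (starRingEnd ℂ) (z k)) = T1 + T2 + T3 := by
    rw [hT1, hT2, hT3]
    simp_rw [← Finset.sum_add_distrib]
    refine Finset.sum_congr rfl fun k _ => Finset.sum_congr rfl fun l _ => ?_
    have hk := congrArg Complex.ofReal (hX2 k)
    have hcc := congrArg Complex.ofReal (hc k l)
    simp only [hw, hz, FC.D1, map_mul, Complex.conj_ofReal]
    generalize X k ^ (2 * τ) = x1 at *
    generalize X k ^ τ = x2 at *
    generalize X l ^ τ = x3 at *
    push_cast at hk hcc
    by_cases hkl : near k l
    · simp only [hkl, if_true]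
      push_cast
      rw [hk]
      linear_combination (-(f (ε * ((k:ℝ) - l)) : ℂ) * u (k - l) * Complex.I * l * (f (ε * l)) * η l * x2 * (f (ε * k)) * (starRingEnd ℂ) (η k)) * hcc
    · simp only [hkl, if_false]
      push_cast
      rw [hk]
      ring
  have n3 : ‖T3‖ ≤ 4 ^ τ * ∑ k ∈ F, ∑ l ∈ F, (X (k - l) ^ τ * ‖u (k - l)‖) * ‖FC.D1 η l‖ * ‖w k‖ := by
    rw [Finset.mul_sum]
    refine norm_sum_le_of_le _ fun k _ => ?_
    rw [Finset.mul_sum]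
    refine norm_sum_le_of_le _ fun l _ => ?_
    have hxx : 0 ≤ X (k - l) ^ τ := Real.rpow_nonneg (X_pos _).le _
    split_ifs with hkl
    · rw [norm_zero]; positivity
    · obtain ⟨f1, f2⟩ := far_bd k l hkl
      have p1 := Real.rpow_le_rpow (X_pos k).le f1 hτ.le
      have p2 := Real.rpow_le_rpow (X_pos l).le f2 hτ.le
      rw [Real.mul_rpow (by norm_num) (X_pos _).le] at p1 p2
      have p3 : |X k ^ τ - X l ^ τ| ≤ 4 ^ τ * X (k - l) ^ τ := by
        have := Real.rpow_nonneg (X_pos k).le τ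
        have := Real.rpow_nonneg (X_pos l).le τ
        rw [abs_le]; constructor <;> linarith
      have p4 : ‖Complex.I * l * z l‖ ≤ ‖FC.D1 η l‖ := by
        simp only [FC.D1]
        rw [norm_mul (Complex.I * l) (z l), norm_mul (Complex.I * l) (η l)]
        exact mul_le_mul_of_nonneg_left (hzn l) (norm_nonneg _)
      have p5 : ‖(f (ε * ((k - l : ℤ) : ℝ)) : ℂ) * u (k - l)‖ ≤ ‖u (k - l)‖ := by
        rw [norm_mul, Complex.norm_real, Real.norm_of_nonneg (h0 _)]
        exact mul_le_of_le_one_left (norm_nonneg _) (h1 _)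
      rw [norm_mul, norm_mul, norm_mul, Complex.norm_real, Real.norm_eq_abs, RCLike.norm_conj]
      calc _ ≤ (4 ^ τ * X (k - l) ^ τ) * ‖u (k - l)‖ * ‖FC.D1 η l‖ * ‖w k‖ := by
            have := hzw k
            gcongr
        _ = _ := by ring
  have n4 := far_sum (fun k => X k ^ τ * ‖u k‖) (fun l => ‖FC.D1 η l‖) (fun k => ‖w k‖)
    (fun k => mul_nonneg (Real.rpow_nonneg (X_pos k).le _) (norm_nonneg _)) S hSA F
  have n5 := toep_l2 _ N hN hTη F
  set Q := ∑ k ∈ F, ∑ l ∈ F, (X (k - l) ^ τ * ‖u (k - l)‖) * ‖FC.D1 η l‖ * ‖w k‖ with hQ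
  have n6 : Q ≤ N * (S ^ 2 + W) := by
    refine abs_le_of_sq_le_sq' ?_ (by positivity) |>.2
    refine n4.trans ?_
    rw [hWw]
    calc _ ≤ (S * N ^ 2) * (S * W) := by gcongr
      _ = N ^ 2 * (S ^ 2 * W) := by ring
      _ ≤ N ^ 2 * (S ^ 2 + W) ^ 2 := by
          have : 0 ≤ S ^ 2 := sq_nonneg _
          gcongr
          nlinarith [sq_nonneg (S ^ 2), sq_nonneg W, mul_nonneg this hW0]
      _ = _ := by ring
  have n7 : ‖T1‖ ≤ C3 * (C1 * M) * W := by
    refine n1.trans ?_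
    rw [← hWw]
    refine mul_le_mul_of_nonneg_left (Finset.sum_le_sum fun k _ => ?_) (by positivity)
    exact pow_le_pow_left₀ (norm_nonneg _) (hzw k) 2
  have h4 : (0:ℝ) ≤ 4 ^ τ := by positivity
  have n8 : ‖T3‖ ≤ 4 ^ τ * (N * (S ^ 2 + W)) := n3.trans (mul_le_mul_of_nonneg_left n6 h4)
  change |(∑ k ∈ F, ∑ l ∈ F, ((X k ^ (2 * τ) : ℝ) : ℂ) * ((f (ε * ((k - l : ℤ) : ℝ)) : ℂ) * u (k - l)) * (Complex.I * l *
        z l) * (starRingEnd ℂ) (z k)).re| ≤ _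
  rw [e, Complex.add_re, Complex.add_re]
  have m1 := (Complex.abs_re_le_norm T1).trans n7
  have m3 := (Complex.abs_re_le_norm T3).trans n8
  have m := abs_add_three T1.re T2.re T3.re
  have a1 : C3 * (C1 * M) * W ≤ (C3 * C1) * ((M + N) * (S ^ 2 + W)) := by
    have : M * W ≤ (M + N) * (S ^ 2 + W) := by gcongr <;> nlinarith [sq_nonneg S]
    calc _ = (C3 * C1) * (M * W) := by ring
      _ ≤ _ := by gcongr
  have a2 : C2 * M * W ≤ C2 * ((M + N) * (S ^ 2 + W)) := by
    have : M * W ≤ (M + N) * (S ^ 2 + W) := by gcongr <;> nlinarith [sq_nonneg S]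
    calc _ = C2 * (M * W) := by ring
      _ ≤ _ := by gcongr
  have a3 : 4 ^ τ * (N * (S ^ 2 + W)) ≤ 4 ^ τ * ((M + N) * (S ^ 2 + W)) := by
    gcongr; linarith
  calc _ ≤ _ := m
    _ ≤ (C3 * C1) * ((M + N) * (S ^ 2 + W)) + C2 * ((M + N) * (S ^ 2 + W)) + 4 ^ τ * ((M + N) * (S ^ 2 + W)) := by
        linarith
    _ = _ := by ring

end S13
namespace S13
open MeasureTheory Set

lemma X_summable (p : ℝ) (hp : 1 / 2 < p) : Summable fun k : ℤ => X k ^ (-p) := by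
  have h1 : Summable fun k : ℤ => |(k:ℝ)| ^ (-(2 * p)) := Real.summable_abs_int_rpow (by linarith)
  have h2 : Summable fun k : ℤ => if k = 0 then (1:ℝ) else 0 :=
    summable_of_ne_finset_zero (s := {0}) (fun b hb => by simp at hb; simp [hb])
  refine Summable.of_nonneg_of_le (fun k => Real.rpow_nonneg (X_pos k).le _) (fun k => ?_) (h1.add h2)
  by_cases hk : k = 0
  · subst hk
    simp only [X, if_true]
    have : (0:ℝ) ≤ |((0:ℤ):ℝ)| ^ (-(2*p)) := Real.rpow_nonneg (abs_nonneg _) _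
    norm_num at this ⊢
    exact this
  · simp only [hk, if_false, add_zero]
    have hk' : 0 < |(k:ℝ)| := abs_pos.2 (by exact_mod_cast hk)
    rw [neg_mul_eq_mul_neg, Real.rpow_mul hk'.le]
    refine Real.rpow_le_rpow_of_nonpos (by positivity) ?_ (by linarith)
    rw [Real.rpow_two, sq_abs, X]; linarith

lemma X_pow_ge (k : ℤ) (t : ℝ) (ht : 0 ≤ t) : 1 ≤ X k ^ t := Real.one_le_rpow (X_ge k) ht

lemma abs_le_X (k : ℤ) (t : ℝ) (ht : 1 / 2 ≤ t) : |(k:ℝ)| ≤ X k ^ t := by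
  refine le_trans ?_ (Real.rpow_le_rpow_of_exponent_le (X_ge k) ht)
  rw [← Real.sqrt_eq_rpow]
  refine Real.abs_le_sqrt ?_
  rw [X]; linarith

lemma wt_eq (s : ℝ) (k : ℤ) : FC.wt s k = X k ^ s := rfl

lemma norm_sq_ge (s : ℝ) (c : FC) (h : FC.memHs s c) (F : Finset ℤ) :
    ∑ k ∈ F, X k ^ s * ‖c k‖ ^ 2 ≤ FC.hsNorm s c ^ 2 := by
  have hn : ∀ k, 0 ≤ FC.wt s k * ‖c k‖ ^ 2 := fun k =>
    mul_nonneg (Real.rpow_nonneg (X_pos k).le _) (sq_nonneg _)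
  rw [FC.hsNorm, Real.sq_sqrt (tsum_nonneg hn)]
  exact h.sum_le_tsum F (fun k _ => hn k)

lemma sumA (s : ℝ) (u : FC) (h : FC.memHs s u) (F : Finset ℤ) :
    ∑ k ∈ F, X k ^ ((s - 1) / 2) * ‖u k‖ ≤ Real.sqrt (∑' k : ℤ, X k ^ (-1:ℝ)) * FC.hsNorm s u := by
  have h1 := Finset.sum_mul_sq_le_sq_mul_sq F (fun k => X k ^ (-(1/2):ℝ)) (fun k => X k ^ (s/2) * ‖u k‖)
  have hn : ∀ k : ℤ, 0 ≤ X k ^ (-1:ℝ) := fun k => Real.rpow_nonneg (X_pos k).le _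
  have hU : 0 ≤ FC.hsNorm s u := Real.sqrt_nonneg _
  refine abs_le_of_sq_le_sq' ?_ (by positivity) |>.2
  have e : ∀ k, X k ^ ((s - 1) / 2) * ‖u k‖ = X k ^ (-(1/2):ℝ) * (X k ^ (s/2) * ‖u k‖) := by
    intro k
    rw [← mul_assoc, ← Real.rpow_add (X_pos k)]
    congr 2; ring
  simp_rw [e]
  refine h1.trans ?_
  rw [mul_pow, Real.sq_sqrt (tsum_nonneg hn)]
  refine mul_le_mul ?_ ?_ (by positivity) (tsum_nonneg hn)
  · refine le_trans (le_of_eq ?_) ((X_summable 1 (by norm_num)).sum_le_tsum F (fun k _ => hn k))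
    refine Finset.sum_congr rfl fun k _ => ?_
    rw [← Real.rpow_natCast, ← Real.rpow_mul (X_pos k).le]; norm_num
  · refine le_trans (le_of_eq ?_) (norm_sq_ge s u h F)
    refine Finset.sum_congr rfl fun k _ => ?_
    rw [mul_pow, ← Real.rpow_natCast, ← Real.rpow_mul (X_pos k).le]; norm_num

lemma sumA' (s : ℝ) (u : FC) (h : FC.memHs s u) : Summable fun k => X k ^ ((s - 1) / 2) * ‖u k‖ :=
  summable_of_sum_le (fun k => mul_nonneg (Real.rpow_nonneg (X_pos k).le _) (norm_nonneg _)) (sumA s u h)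

lemma norm_D1 (c : FC) (k : ℤ) : ‖FC.D1 c k‖ = |(k:ℝ)| * ‖c k‖ := by
  simp [FC.D1]

lemma sumD1u (s : ℝ) (hs : 5 / 2 < s) (u : FC) (h : FC.memHs s u) : Summable fun k => ‖FC.D1 u k‖ := by
  refine Summable.of_nonneg_of_le (fun k => norm_nonneg _) (fun k => ?_) (sumA' s u h)
  rw [norm_D1]
  exact mul_le_mul_of_nonneg_right (abs_le_X k _ (by linarith)) (norm_nonneg _)

lemma sumu (s : ℝ) (hs : 5 / 2 < s) (u : FC) (h : FC.memHs s u) : Summable fun k => ‖u k‖ := by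
  refine Summable.of_nonneg_of_le (fun k => norm_nonneg _) (fun k => ?_) (sumA' s u h)
  exact le_mul_of_one_le_left (norm_nonneg _) (X_pow_ge k _ (by linarith))

lemma sumD1η (σ : ℝ) (hs : 3 / 2 < σ) (η : FC) (h : FC.memHs σ η) : Summable fun k => ‖FC.D1 η k‖ := by
  refine Summable.of_nonneg_of_le (fun k => norm_nonneg _) (fun k => ?_) ((X_summable (σ - 1) (by linarith)).add h)
  rw [norm_D1, wt_eq]
  have h1 : |(k:ℝ)| ≤ X k ^ (1/2:ℝ) := abs_le_X k _ le_rfl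
  have h2 : X k ^ (1/2:ℝ) = X k ^ (-(σ-1)/2) * X k ^ (σ/2) := by
    rw [← Real.rpow_add (X_pos k)]; congr 1; ring
  have h3 : X k ^ (-(σ - 1)) = (X k ^ (-(σ-1)/2)) ^ 2 := by
    rw [← Real.rpow_natCast, ← Real.rpow_mul (X_pos k).le]; norm_num
  have h4 : X k ^ σ = (X k ^ (σ/2)) ^ 2 := by
    rw [← Real.rpow_natCast, ← Real.rpow_mul (X_pos k).le]; norm_num
  rw [h3, h4]
  refine (mul_le_mul_of_nonneg_right h1 (norm_nonneg _)).trans ?_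
  rw [h2]
  have : 0 ≤ X k ^ (-(σ-1)/2) := Real.rpow_nonneg (X_pos k).le _
  nlinarith [sq_nonneg (X k ^ (-(σ-1)/2) - X k ^ (σ/2) * ‖η k‖), sq_nonneg (X k ^ (-(σ-1)/2)), sq_nonneg (X k ^ (σ/2) * ‖η k‖)]

lemma J_bdd (f : SchwartzMap ℝ ℝ) (τ ε : ℝ) (hε : ε ∈ Ioo (0:ℝ) 1) :
    ∃ D : ℝ, 0 ≤ D ∧ ∀ k : ℤ, X k ^ τ * |f (ε * k)| ≤ D := by
  obtain ⟨n, hn⟩ := exists_nat_gt τ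
  have h := fun x => SchwartzMap.one_add_le_sup_seminorm_apply (𝕜 := ℝ) (m := (2 * n, 0)) (k := 2 * n) (n := 0) le_rfl le_rfl f x
  set D := (2:ℝ) ^ (2 * n, 0).1 * ((Finset.Iic (2 * n, 0)).sup fun m => SchwartzMap.seminorm ℝ m.1 m.2) f with hD
  have hD0 : 0 ≤ D := le_trans (by positivity) (h 0)
  have he := hε.1
  refine ⟨((ε⁻¹) ^ 2) ^ n * D, by positivity, fun k => ?_⟩
  have h1 := h (ε * k)
  rw [norm_iteratedFDeriv_zero, Real.norm_eq_abs, Real.norm_eq_abs] at h1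
  have h2 : X k ≤ (ε⁻¹) ^ 2 * (1 + |ε * k|) ^ 2 := by
    rw [← mul_pow, inv_mul_eq_div, div_pow, le_div_iff₀ (by positivity), X]
    have := sq_abs (ε * k)
    nlinarith [abs_nonneg (ε * k), hε.2]
  have h3 : X k ^ τ ≤ ((ε⁻¹) ^ 2) ^ n * (1 + |ε * k|) ^ (2 * n) := by
    calc X k ^ τ ≤ X k ^ (n:ℝ) := Real.rpow_le_rpow_of_exponent_le (X_ge k) hn.le
      _ = X k ^ n := Real.rpow_natCast _ _
      _ ≤ ((ε⁻¹) ^ 2 * (1 + |ε * k|) ^ 2) ^ n := pow_le_pow_left₀ (X_pos k).le h2 n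
      _ = _ := by rw [mul_pow, pow_mul]
  calc _ ≤ ((ε⁻¹) ^ 2) ^ n * (1 + |ε * k|) ^ (2 * n) * |f (ε * k)| := by gcongr
    _ = ((ε⁻¹) ^ 2) ^ n * ((1 + |ε * k|) ^ (2 * n) * |f (ε * k)|) := by ring
    _ ≤ _ := by gcongr

/-- The double-sum summand. -/
def G (τ : ℝ) (f : ℝ → ℝ) (ε : ℝ) (u η : FC) (k l : ℤ) : ℂ :=
  ((X k ^ (2 * τ) : ℝ) : ℂ) * ((f (ε * ((k - l : ℤ) : ℝ)) : ℂ) * u (k - l)) * (Complex.I * l *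
        ((f (ε * l) : ℂ) * η l)) * (starRingEnd ℂ) ((f (ε * k) : ℂ) * η k)

lemma G_summable (s : ℝ) (hs : 5 / 2 < s) (f : SchwartzMap ℝ ℝ) (h0 : ∀ x, 0 ≤ f x) (h1 : ∀ x, f x ≤ 1)
    (ε : ℝ) (hε : ε ∈ Ioo (0:ℝ) 1) (u η : FC) (hu : FC.memHs s u) (hη : FC.memHs (s - 1) η) :
    Summable fun q : ℤ × ℤ => G ((s - 1) / 2) f ε u η q.1 q.2 := by
  set τ := (s - 1) / 2 with hτ
  have hst : 2 * τ = s - 1 := by rw [hτ]; ring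
  obtain ⟨D, hD0, hD⟩ := J_bdd f τ ε hε
  have hX2 : ∀ k, X k ^ (2 * τ) = X k ^ τ * X k ^ τ := by
    intro k
    rw [two_mul, Real.rpow_add (X_pos k)]
  have hbd : ∀ k, X k ^ τ * ‖η k‖ ≤ FC.hsNorm (s - 1) η := by
    intro k
    have h := norm_sq_ge _ η hη {k}
    have hx2 : X k ^ (s - 1) = X k ^ τ * X k ^ τ := by rw [← hst, hX2]
    rw [Finset.sum_singleton, hx2] at h
    refine abs_le_of_sq_le_sq' ?_ (show 0 ≤ FC.hsNorm (s - 1) η from Real.sqrt_nonneg _) |>.2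
    refine le_trans (le_of_eq ?_) h
    ring_nf
  have hp : Summable fun q : ℤ × ℤ => ‖u q.1‖ * ‖FC.D1 η q.2‖ :=
    (sumu s hs u hu).mul_of_nonneg (sumD1η (s - 1) (by linarith) η hη) (fun _ => norm_nonneg _) (fun _ => norm_nonneg _)
  have hinj : Function.Injective fun q : ℤ × ℤ => (q.1 - q.2, q.2) := by
    rintro ⟨a, b⟩ ⟨c, d⟩ h
    simp only [Prod.mk.injEq] at h ⊢
    omega
  have hp2 := (hp.comp_injective hinj).mul_left (D * FC.hsNorm (s - 1) η)
  refine Summable.of_norm_bounded hp2 ?_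
  rintro ⟨k, l⟩
  simp only [G, Function.comp]
  have hJ : ∀ (x : ℝ) (z : ℂ), ‖(f x : ℂ) * z‖ ≤ ‖z‖ := by
    intro x z
    rw [norm_mul, Complex.norm_real, Real.norm_of_nonneg (h0 _)]
    exact mul_le_of_le_one_left (norm_nonneg _) (h1 _)
  have q1 := hJ (ε * ((k - l : ℤ) : ℝ)) (u (k - l))
  have q2 : ‖Complex.I * l * ((f (ε * l) : ℂ) * η l)‖ ≤ ‖FC.D1 η l‖ := by
    simp only [FC.D1]
    rw [norm_mul (Complex.I * l) (_ * _), norm_mul (Complex.I * l) (η l)]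
    exact mul_le_mul_of_nonneg_left (hJ _ _) (norm_nonneg _)
  have hx : 0 ≤ X k ^ τ := Real.rpow_nonneg (X_pos k).le _
  have q3 : X k ^ (2 * τ) * ‖(f (ε * k) : ℂ) * η k‖ ≤ D * FC.hsNorm (s - 1) η := by
    rw [hX2, norm_mul, Complex.norm_real, Real.norm_eq_abs]
    calc _ = (X k ^ τ * |f (ε * k)|) * (X k ^ τ * ‖η k‖) := by ring
      _ ≤ _ := mul_le_mul (hD k) (hbd k) (by positivity) hD0
  rw [norm_mul, norm_mul, norm_mul, RCLike.norm_conj, Complex.norm_real, Real.norm_of_nonneg (Real.rpow_nonneg (X_pos k).le _)]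
  have hN : 0 ≤ FC.hsNorm (s - 1) η := Real.sqrt_nonneg _
  calc _ = (X k ^ (2 * τ) * ‖(f (ε * k) : ℂ) * η k‖) * (‖(f (ε * ((k - l : ℤ) : ℝ)) : ℂ) * u (k - l)‖ * ‖Complex.I * l * ((f (ε * l) : ℂ) * η l)‖) := by ring
    _ ≤ _ := by gcongr

lemma tendsto_sq : Filter.Tendsto (fun F : Finset ℤ => F ×ˢ F) Filter.atTop Filter.atTop := by
  classical
  refine Filter.tendsto_atTop_atTop.2 fun T => ⟨T.image Prod.fst ∪ T.image Prod.snd, fun F hF => ?_⟩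
  intro q hq
  rw [Finset.mem_product]
  exact ⟨hF (Finset.mem_union_left _ (Finset.mem_image_of_mem _ hq)),
    hF (Finset.mem_union_right _ (Finset.mem_image_of_mem _ hq))⟩

lemma inner_eq (s : ℝ) (f : ℝ → ℝ) (ε : ℝ) (u η : FC)
    (hG : Summable fun q : ℤ × ℤ => G ((s - 1) / 2) f ε u η q.1 q.2) :
    FC.hsInner (s - 1) (FC.Jmol f ε (FC.mul (FC.Jmol f ε u) (FC.D1 (FC.Jmol f ε η)))) η
      = (∑' q : ℤ × ℤ, G ((s - 1) / 2) f ε u η q.1 q.2).re := by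
  rw [FC.hsInner, hG.tsum_prod]
  congr 1
  refine tsum_congr fun k => ?_
  simp only [FC.Jmol, FC.mult, FC.mul, FC.D1, wt_eq, G]
  rw [← (Equiv.subLeft k).tsum_eq (fun j : ℤ => (f (ε * (j:ℝ)) : ℂ) * u j * _)]
  rw [← tsum_mul_left, ← tsum_mul_right, ← tsum_mul_left]
  refine tsum_congr fun l => ?_
  have : 2 * ((s - 1) / 2) = s - 1 := by ring
  rw [this]
  simp only [Equiv.subLeft_apply, sub_sub_cancel, map_mul, Complex.conj_ofReal]
  ring

end S13

/-- Let `s > 5/2` and let `j` be a fixed Schwartz mollifier, i.e. `ĵ` is a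
Schwartz function with `0 ≤ ĵ ≤ 1` and `ĵ(x) = 1` for `|x| ≤ 1`.  There is `C = C(s) > 0`
such that for all `ε ∈ (0,1)`, `u ∈ H^s(𝕋)` and `η ∈ H^{s-1}(𝕋)`:
`|(J_ε(J_ε u · ∂ₓ J_ε η), η)_{H^{s-1}}| ≤ C (‖∂ₓu‖_{L^∞} + ‖∂ₓη‖_{L^∞}) (‖u‖²_{H^s} + ‖η‖²_{H^{s-1}})`. -/
theorem statement13 (s : ℝ) (hs : 5 / 2 < s) (jhat : SchwartzMap ℝ ℝ)
    (hj0 : ∀ x : ℝ, 0 ≤ jhat x) (hj1 : ∀ x : ℝ, jhat x ≤ 1)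
    (hjone : ∀ x : ℝ, |x| ≤ 1 → jhat x = 1) :
    ∃ C > (0 : ℝ), ∀ ε : ℝ, ε ∈ Set.Ioo (0 : ℝ) 1 → ∀ u η : FC,
      FC.memHs s u → FC.memHs (s - 1) η → FC.isReal u → FC.isReal η →
      |FC.hsInner (s - 1)
          (FC.Jmol (⇑jhat) ε (FC.mul (FC.Jmol (⇑jhat) ε u) (FC.D1 (FC.Jmol (⇑jhat) ε η)))) η|
        ≤ C * (FC.linfty (FC.D1 u) + FC.linfty (FC.D1 η))
            * (FC.hsNorm s u ^ 2 + FC.hsNorm (s - 1) η ^ 2) := by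
  obtain ⟨C, hC, H⟩ := S13.finite_bound ((s - 1) / 2) (by linarith) jhat hj0 hj1
  set c0 := ∑' k : ℤ, S13.X k ^ (-1:ℝ) with hc0
  have hc0' : 0 ≤ c0 := tsum_nonneg fun k => Real.rpow_nonneg (S13.X_pos k).le _
  refine ⟨C * (1 + c0) + 1, by positivity, ?_⟩
  intro ε hε u η hu hη hur _
  have hG := S13.G_summable s hs jhat hj0 hj1 ε hε u η hu hη
  rw [S13.inner_eq s jhat ε u η hG]
  have hM := S13.linfty_nonneg (FC.D1 u)
  have hN := S13.linfty_nonneg (FC.D1 η)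
  set M := FC.linfty (FC.D1 u) with hMdef
  set N := FC.linfty (FC.D1 η) with hNdef
  have hU : 0 ≤ FC.hsNorm s u := Real.sqrt_nonneg _
  have hb := H ε u η M N (Real.sqrt c0 * FC.hsNorm s u) hM hN (by positivity)
    (S13.toep_linfty _ (S13.sumD1u s hs u hu)) (S13.toep_linfty _ (S13.sumD1η (s - 1) (by linarith) η hη)) hur
    (S13.sumA s u hu)
  have ht := (hG.hasSum.comp S13.tendsto_sq)
  have ht2 := ((Complex.continuous_re.tendsto _).comp ht).abs
  refine le_of_tendsto ht2 (Filter.Eventually.of_forall fun F => ?_)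
  simp only [Function.comp]
  rw [Finset.sum_product]
  refine (hb F).trans ?_
  rw [mul_pow, Real.sq_sqrt hc0']
  have h2 : 2 * ((s - 1) / 2) = s - 1 := by ring
  rw [h2]
  have h3 := S13.norm_sq_ge (s - 1) η hη F
  have hMN : 0 ≤ M + N := by positivity
  set a := FC.hsNorm s u ^ 2 with ha
  set b := FC.hsNorm (s - 1) η ^ 2 with hb'
  have ha0 : 0 ≤ a := by positivity
  have hb0 : 0 ≤ b := by positivity
  calc _ ≤ C * (M + N) * ((1 + c0) * (a + b)) := by
        gcongr
        nlinarith [mul_nonneg hc0' hb0]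
    _ = C * (1 + c0) * ((M + N) * (a + b)) := by ring
    _ ≤ (C * (1 + c0) + 1) * ((M + N) * (a + b)) := by
        gcongr
        linarith
    _ = _ := by ring
end
end
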